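/- arXiv:math/0012187 — 2 statements merged into one kernel-verified Lean document; each statement's English description precedes it below -/
import Mathlib

section
/- Let D be a domain in ℂ^n with n ≥ 2 and fix 0 < r < t. For z' ∈ ℂ^{n-1} set K(z') := { z_n ∈ ℂ : |z_n| < t and (z', z_n) ∉ D }. Assume that K(0') is polar and that there is a neighborhood V of 0' in ℂ^{n-1} such that for almost every z' ∈ V (with respect to (2n-2)-dimensional Lebesgue measure) the set K(z') is polar. Then there exists a neighborhood V' of 0' with V' ⊂ V such that for every f ∈ L²_h(D) there exists a holomorphic function F on V' × {z_n : |z_n| < r} with F = f on (V' × {z_n : |z_n| < r}) ∩ D. -/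
open MeasureTheory Filter Topology Metric Set
open scoped ENNReal NNReal

/-- Truncated circle average of an `EReal`-valued function: the average over the circle of
center `c` and radius `R` of the function truncated below at `-n`. -/
noncomputable def circleAvgTrunc (u : ℂ → EReal) (c : ℂ) (R : ℝ) (n : ℕ) : ℝ :=
  (2 * Real.pi)⁻¹ * ∫ θ in (0:ℝ)..(2 * Real.pi),
    (max (u (c + R * Complex.exp (θ * Complex.I))) (-(n : ℝ) : EReal)).toReal

/-- `u` is subharmonic on `Ω ⊆ ℂ`: values in `[-∞, ∞)`, upper semicontinuous on `Ω`, and for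
every closed disc contained in `Ω` the value at the center is at most the mean over the
boundary circle (in the extended sense, via decreasing truncations). -/
def SubharmonicOn (u : ℂ → EReal) (Ω : Set ℂ) : Prop :=
  UpperSemicontinuousOn u Ω ∧ (∀ z ∈ Ω, u z < ⊤) ∧
    ∀ c ∈ Ω, ∀ R : ℝ, 0 < R → Metric.closedBall c R ⊆ Ω →
      u c ≤ ⨅ n : ℕ, (circleAvgTrunc u c R n : EReal)

/-- `u` is plurisubharmonic on `Ω`: values in `[-∞, ∞)`, upper semicontinuous on `Ω`, and its
restriction to every complex line is subharmonic. -/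
def PlurisubharmonicOn {E : Type*} [NormedAddCommGroup E] [NormedSpace ℂ E]
    (u : E → EReal) (Ω : Set E) : Prop :=
  UpperSemicontinuousOn u Ω ∧ (∀ z ∈ Ω, u z < ⊤) ∧
    ∀ a b : E, SubharmonicOn (fun lam : ℂ => u (a + lam • b)) {lam : ℂ | a + lam • b ∈ Ω}

/-- A set `P ⊆ ℂ` is polar. -/
def PolarSet (P : Set ℂ) : Prop :=
  ∀ z ∈ P, ∃ U : Set ℂ, IsOpen U ∧ IsConnected U ∧ z ∈ U ∧
    ∃ u : ℂ → EReal, SubharmonicOn u U ∧ (∃ x ∈ U, u x ≠ ⊥) ∧ ∀ x ∈ P ∩ U, u x = ⊥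

/-- A set `P ⊆ ℂⁿ` is pluripolar. -/
def PluripolarSet {E : Type*} [NormedAddCommGroup E] [NormedSpace ℂ E] (P : Set E) : Prop :=
  ∀ z ∈ P, ∃ U : Set E, IsOpen U ∧ IsConnected U ∧ z ∈ U ∧
    ∃ u : E → EReal, PlurisubharmonicOn u U ∧ (∃ x ∈ U, u x ≠ ⊥) ∧ ∀ x ∈ P ∩ U, u x = ⊥

/-- A domain `D` is pseudoconvex if `z ↦ -log dist(z, ∂D)` is plurisubharmonic on `D`. -/
def IsPseudoconvex {E : Type*} [NormedAddCommGroup E] [NormedSpace ℂ E] (D : Set E) : Prop :=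
  PlurisubharmonicOn (fun z => ((- Real.log (Metric.infDist z Dᶜ) : ℝ) : EReal)) D

/-- The square-integrable holomorphic functions on an open set `Ω`. -/
def L2h {E : Type*} [NormedAddCommGroup E] [NormedSpace ℂ E] [MeasureSpace E]
    (Ω : Set E) : Set (E → ℂ) :=
  {f | DifferentiableOn ℂ f Ω ∧ (∫⁻ z in Ω, (‖f z‖₊ : ℝ≥0∞) ^ 2) < ⊤}

/-- The Bergman kernel of `Ω` on the diagonal,
`K_Ω(z) = sup { |f(z)|²/‖f‖²_{L²(Ω)} : f ∈ L²ₕ(Ω), f ≢ 0 }`. -/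
noncomputable def bergmanKernel {E : Type*} [NormedAddCommGroup E] [NormedSpace ℂ E]
    [MeasureSpace E] (Ω : Set E) (z : E) : ℝ≥0∞ :=
  ⨆ (f : E → ℂ) (_ : f ∈ L2h Ω) (_ : ∃ w ∈ Ω, f w ≠ 0),
    (‖f z‖₊ : ℝ≥0∞) ^ 2 / ∫⁻ w in Ω, (‖f w‖₊ : ℝ≥0∞) ^ 2

/-- `D` is an `L²ₕ`-domain of holomorphy: there are no domains `D₀, D₁` with
`∅ ≠ D₀ ⊆ D₁ ∩ D`, `D₁ ⊄ D`, such that every `f ∈ L²ₕ(D)` extends holomorphically to `D₁`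
(agreeing with `f` on `D₀`). -/
def IsL2hDomainOfHolomorphy {E : Type*} [NormedAddCommGroup E] [NormedSpace ℂ E]
    [MeasureSpace E] (D : Set E) : Prop :=
  ¬ ∃ D0 D1 : Set E, IsOpen D0 ∧ IsConnected D0 ∧ IsOpen D1 ∧ IsConnected D1 ∧
      D0 ⊆ D1 ∩ D ∧ ¬ (D1 ⊆ D) ∧
      ∀ f ∈ L2h D, ∃ F : E → ℂ, DifferentiableOn ℂ F D1 ∧ Set.EqOn F f D0

/-- `w` is a regular boundary point of the domain `D ⊆ ℂ`. -/
def RegularBoundaryPt (D : Set ℂ) (w : ℂ) : Prop :=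
  ∃ U : Set ℂ, IsOpen U ∧ w ∈ U ∧ ∃ u : ℂ → EReal, SubharmonicOn u (U ∩ D) ∧
    (∀ z ∈ U ∩ D, u z < 0) ∧ Tendsto u (𝓝[U ∩ D] w) (𝓝 (0 : EReal))

/-- The (pluricomplex) Green function of a domain `D ⊆ ℂ` with logarithmic pole at `p`. -/
noncomputable def greenFn (D : Set ℂ) (p z : ℂ) : EReal :=
  sSup {v : EReal | ∃ u : ℂ → EReal, SubharmonicOn u D ∧ (∀ x ∈ D, u x < 0) ∧
    (∃ C : ℝ, ∀ᶠ x in 𝓝 p, u x ≤ ((Real.log ‖x - p‖ + C : ℝ) : EReal)) ∧ v = u z}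

/-- A polydisc in `ℂⁿ` with centre `c` and multiradius `r`. -/
def polydisc {n : ℕ} (c : Fin n → ℂ) (r : Fin n → ℝ) : Set (Fin n → ℂ) :=
  {z | ∀ i, ‖z i - c i‖ < r i}

/-!
A compact polar set `K ⊆ ℂ` has zero capacity: truncating a subharmonic function equal to `-∞` on
`K` and smoothing gives nonnegative superharmonic functions `h` with bounded integral that exceed
any given `m` near `K`. By the Caccioppoli inequality `log h` then has bounded Dirichlet integral,
so a cutoff applied to `log h` over a long range yields functions equal to `1` near `K` with
arbitrarily small Dirichlet integral. Such functions show that `L²` holomorphic functions satisfy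
`∂̄ g = 0` weakly across `K`, hence Cauchy's formula, and that some circle `|zₙ| = s` with
`r < s < t` avoids `K(0')`. The Cauchy integral over that circle is holomorphic for `z'` near `0'`;
it agrees with `f` on almost every fibre, hence everywhere by continuity.
-/

section PolarCoordinates

variable {F : Type*} [NormedAddCommGroup F] [NormedSpace ℝ F] {f : ℂ → F}

theorem integrableOn_comp_polarCoord_symm (hf : Integrable f) :
    IntegrableOn (fun p : ℝ × ℝ ↦ p.1 • f (Complex.polarCoord.symm p)) polarCoord.target := by
  have hf' : Integrable (f ∘ Complex.measurableEquivRealProd.symm) :=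
    (Complex.volume_preserving_equiv_real_prod.symm _).integrable_comp_of_integrable hf
  have himage := (integrableOn_image_iff_integrableOn_abs_det_fderiv_smul volume
    polarCoord.open_target.measurableSet
    (fun p _ ↦ (hasFDerivAt_polarCoord_symm p).hasFDerivWithinAt) polarCoord.symm.injOn
    (f ∘ Complex.measurableEquivRealProd.symm)).1 hf'.integrableOn
  refine himage.congr_fun (fun p hp ↦ ?_) polarCoord.open_target.measurableSet
  have hp0 : 0 < p.1 := (mem_prod.1 hp).1
  simp only [det_fderivPolarCoordSymm, abs_of_pos hp0, Function.comp_apply,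
    Complex.measurableEquivRealProd_symm_polarCoord_symm_apply]

theorem circleMap_eq_add_polarCoord_symm (c : ℂ) (ρ θ : ℝ) :
    circleMap c ρ θ = c + Complex.polarCoord.symm (ρ, θ) := by
  rw [circleMap, Complex.exp_mul_I, Complex.polarCoord_symm_apply, Complex.ofReal_cos,
    Complex.ofReal_sin]

theorem setIntegral_smul_polarCoord_symm (f : ℂ → F) (c : ℂ) (ρ : ℝ) :
    ∫ θ in Ioo (-Real.pi) Real.pi, ρ • f (c + Complex.polarCoord.symm (ρ, θ)) =
      (2 * Real.pi * ρ) • Real.circleAverage f c ρ := by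
  rw [mul_comm, mul_smul, integral_smul, Real.circleAverage_eq_integral_add (-Real.pi),
    smul_inv_smul₀ Real.two_pi_pos.ne',
    intervalIntegral.integral_comp_add_right (fun θ ↦ f (circleMap c ρ θ)),
    intervalIntegral.integral_of_le (by linarith [Real.pi_pos]), integral_Ioc_eq_integral_Ioo]
  simp only [zero_add, circleMap_eq_add_polarCoord_symm]
  ring_nf

theorem integrableOn_Ioi_smul_circleAverage (hf : Integrable f) (c : ℂ) :
    IntegrableOn (fun ρ : ℝ ↦ (2 * Real.pi * ρ) • Real.circleAverage f c ρ) (Ioi 0) := by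
  have hpolar := integrableOn_comp_polarCoord_symm (hf.comp_add_left c)
  rw [polarCoord_target, Measure.volume_eq_prod, IntegrableOn, ← Measure.prod_restrict] at hpolar
  exact hpolar.integral_prod_left.congr
    (Eventually.of_forall fun ρ ↦ setIntegral_smul_polarCoord_symm f c ρ)

theorem integral_eq_integral_circleAverage (hf : Integrable f) (c : ℂ) :
    ∫ z, f z = ∫ ρ in Ioi (0 : ℝ), (2 * Real.pi * ρ) • Real.circleAverage f c ρ := by
  have hpolar := integrableOn_comp_polarCoord_symm (hf.comp_add_left c)
  rw [← integral_add_left_eq_self f c, ← Complex.integral_comp_polarCoord_symm]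
  rw [polarCoord_target, Measure.volume_eq_prod] at hpolar ⊢
  rw [setIntegral_prod _ hpolar]
  exact integral_congr_ae
    (Eventually.of_forall fun ρ ↦ setIntegral_smul_polarCoord_symm f c ρ)

theorem setIntegral_Ioo_circleAverage_le_integral {f : ℂ → ℝ} (hf : Integrable f)
    (hf0 : ∀ z, 0 ≤ f z) (c : ℂ) {a : ℝ} (ha : 0 ≤ a) (b : ℝ) :
    ∫ ρ in Ioo a b, 2 * Real.pi * ρ * Real.circleAverage f c ρ ≤ ∫ z, f z := by
  rw [integral_eq_integral_circleAverage hf c]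
  refine setIntegral_mono_set (integrableOn_Ioi_smul_circleAverage hf c) ?_
    (Ioo_subset_Ioi_self.trans (Ioi_subset_Ioi ha)).eventuallyLE
  refine (ae_restrict_iff' measurableSet_Ioi).2 (Eventually.of_forall fun ρ hρ ↦ ?_)
  have hρ0 : 0 ≤ 2 * Real.pi * ρ := mul_nonneg Real.two_pi_pos.le (mem_Ioi.1 hρ).le
  exact mul_nonneg hρ0 (Real.circleAverage_nonneg_of_nonneg fun z _ ↦ hf0 z)

theorem integral_Ioo_two_pi_mul {a b : ℝ} (hab : a ≤ b) (m : ℝ) :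
    ∫ ρ in Ioo a b, 2 * Real.pi * ρ * m = Real.pi * (b ^ 2 - a ^ 2) * m := by
  rw [← integral_Ioc_eq_integral_Ioo, ← intervalIntegral.integral_of_le hab,
    intervalIntegral.integral_mul_const, intervalIntegral.integral_const_mul, integral_id]
  ring

theorem mul_le_integral_of_le_circleAverage {f : ℂ → ℝ} (hf : Integrable f)
    (hf0 : ∀ z, 0 ≤ f z) {c : ℂ} {a b m : ℝ} (ha : 0 ≤ a) (hab : a ≤ b)
    (hmean : ∀ ρ ∈ Ioo a b, m ≤ Real.circleAverage f c ρ) :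
    Real.pi * (b ^ 2 - a ^ 2) * m ≤ ∫ z, f z := by
  rw [← integral_Ioo_two_pi_mul hab]
  refine le_trans ?_ (setIntegral_Ioo_circleAverage_le_integral hf hf0 c ha b)
  refine setIntegral_mono_on
    ((Continuous.integrableOn_Icc (by fun_prop)).mono_set Ioo_subset_Icc_self)
    ((integrableOn_Ioi_smul_circleAverage hf c).mono_set
      (Ioo_subset_Ioi_self.trans (Ioi_subset_Ioi ha))) measurableSet_Ioo fun ρ hρ ↦ ?_
  have hρ0 : 0 ≤ ρ := ha.trans hρ.1.le
  exact mul_le_mul_of_nonneg_left (hmean ρ hρ) (by positivity)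

theorem circleAverage_indicator_ball (f : ℂ → F) (c : ℂ) (R : ℝ) {ρ : ℝ} (hρ : 0 < ρ) :
    Real.circleAverage ((ball c R).indicator f) c ρ =
      (Iio R).indicator (Real.circleAverage f c) ρ := by
  have hmem : ∀ z ∈ sphere c |ρ|, z ∈ ball c R ↔ ρ < R := fun z hz ↦ by
    rw [mem_ball, mem_sphere.1 hz, abs_of_pos hρ]
  by_cases hρR : ρ < R
  · rw [indicator_of_mem (mem_Iio.2 hρR)]
    exact Real.circleAverage_congr_sphere fun z hz ↦ indicator_of_mem ((hmem z hz).2 hρR) f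
  · rw [indicator_of_notMem (notMem_Iio.2 (not_lt.1 hρR)),
      Real.circleAverage_congr_sphere (f₂ := fun _ ↦ 0)
        fun z hz ↦ indicator_of_notMem (fun h ↦ hρR ((hmem z hz).1 h)) f]
    simp [Real.circleAverage_def]

theorem smul_circleAverage_indicator_ball (f : ℂ → F) (c : ℂ) (R : ℝ) :
    EqOn (fun ρ ↦ (2 * Real.pi * ρ) • Real.circleAverage ((ball c R).indicator f) c ρ)
      ((Iio R).indicator fun ρ ↦ (2 * Real.pi * ρ) • Real.circleAverage f c ρ) (Ioi 0) :=
  fun ρ hρ ↦ by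
    simp only [circleAverage_indicator_ball f c R hρ, indicator]
    split_ifs <;> simp only [smul_zero]

theorem integrableOn_Ioo_smul_circleAverage {c : ℂ} {R : ℝ} (hf : IntegrableOn f (ball c R)) :
    IntegrableOn (fun ρ : ℝ ↦ (2 * Real.pi * ρ) • Real.circleAverage f c ρ) (Ioo 0 R) := by
  have h := (integrableOn_Ioi_smul_circleAverage (hf.integrable_indicator measurableSet_ball)
    c).congr_fun (smul_circleAverage_indicator_ball f c R) measurableSet_Ioi
  rwa [IntegrableOn, integrable_indicator_iff measurableSet_Iio, IntegrableOn,
    Measure.restrict_restrict measurableSet_Iio, inter_comm, Ioi_inter_Iio] at h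

theorem setIntegral_ball_eq_integral_circleAverage {c : ℂ} {R : ℝ}
    (hf : IntegrableOn f (ball c R)) :
    ∫ z in ball c R, f z = ∫ ρ in Ioo 0 R, (2 * Real.pi * ρ) • Real.circleAverage f c ρ := by
  rw [← integral_indicator measurableSet_ball,
    integral_eq_integral_circleAverage (hf.integrable_indicator measurableSet_ball) c,
    setIntegral_congr_fun measurableSet_Ioi (smul_circleAverage_indicator_ball f c R),
    setIntegral_indicator measurableSet_Iio, Ioi_inter_Iio]

theorem setIntegral_ball_le_of_circleAverage_le {g : ℂ → ℝ} {c : ℂ} {R : ℝ} (hR : 0 ≤ R)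
    (hg : IntegrableOn g (ball c R)) (hmean : ∀ ρ ∈ Ioo 0 R, Real.circleAverage g c ρ ≤ g c) :
    ∫ z in ball c R, g z ≤ Real.pi * R ^ 2 * g c := by
  have hlin : IntegrableOn (fun ρ ↦ 2 * Real.pi * ρ * g c) (Ioo 0 R) :=
    (Continuous.integrableOn_Icc (by fun_prop)).mono_set Ioo_subset_Icc_self
  calc ∫ z in ball c R, g z
      = ∫ ρ in Ioo 0 R, 2 * Real.pi * ρ * Real.circleAverage g c ρ :=
        setIntegral_ball_eq_integral_circleAverage hg
    _ ≤ ∫ ρ in Ioo 0 R, 2 * Real.pi * ρ * g c :=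
        setIntegral_mono_on (integrableOn_Ioo_smul_circleAverage hg) hlin measurableSet_Ioo
          fun ρ hρ ↦ mul_le_mul_of_nonneg_left (hmean ρ hρ) (by have := hρ.1; positivity)
    _ = Real.pi * R ^ 2 * g c := by rw [integral_Ioo_two_pi_mul hR]; ring

end PolarCoordinates

theorem integral_sq_le_of_le_add {α : Type*} [MeasurableSpace α] {μ : Measure α}
    {f g h : α → ℝ} (hf : Integrable (fun x ↦ f x ^ 2) μ) (hg : Integrable (fun x ↦ g x ^ 2) μ)
    (h0 : ∀ x, 0 ≤ h x) (hle : ∀ x, h x ≤ f x + g x) :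
    ∫ x, h x ^ 2 ∂μ ≤ 2 * ∫ x, f x ^ 2 ∂μ + 2 * ∫ x, g x ^ 2 ∂μ := by
  rw [← integral_const_mul, ← integral_const_mul,
    ← integral_add (hf.const_mul 2) (hg.const_mul 2)]
  refine integral_mono_of_nonneg (Eventually.of_forall fun x ↦ sq_nonneg _)
    ((hf.const_mul 2).add (hg.const_mul 2)) (Eventually.of_forall fun x ↦ ?_)
  have hsq := pow_le_pow_left₀ (h0 x) (hle x) 2
  have hsub := sq_nonneg (f x - g x)
  simp only
  linarith

section Capacity

variable {E : Type*} [NormedAddCommGroup E] [NormedSpace ℝ E]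

/-- `χ` is a continuously differentiable, compactly supported function with values in `[0, 1]`
which is equal to `1` in a neighborhood of `K`. -/
structure IsCutoffNear (χ : E → ℝ) (K : Set E) : Prop where
  contDiff : ContDiff ℝ 1 χ
  hasCompactSupport : HasCompactSupport χ
  nonneg : ∀ z, 0 ≤ χ z
  le_one : ∀ z, χ z ≤ 1
  eventually_eq_one : ∀ᶠ z in 𝓝ˢ K, χ z = 1

namespace IsCutoffNear

variable {χ χ₁ χ₂ : E → ℝ} {K L : Set E}

theorem mono (h : IsCutoffNear χ L) (hKL : K ⊆ L) : IsCutoffNear χ K :=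
  { h with eventually_eq_one := h.eventually_eq_one.filter_mono (nhdsSet_mono hKL) }

theorem empty : IsCutoffNear (0 : E → ℝ) ∅ :=
  ⟨contDiff_const, HasCompactSupport.zero, fun _ ↦ le_rfl, fun _ ↦ zero_le_one, by simp⟩

theorem union (h₁ : IsCutoffNear χ₁ K) (h₂ : IsCutoffNear χ₂ L) :
    IsCutoffNear (fun z ↦ 1 - (1 - χ₁ z) * (1 - χ₂ z)) (K ∪ L) where
  contDiff := by
    have := h₁.contDiff
    have := h₂.contDiff
    fun_prop
  hasCompactSupport := by
    refine (h₁.hasCompactSupport.add h₂.hasCompactSupport).mono fun z hz ↦ ?_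
    contrapose! hz
    have hsum : χ₁ z + χ₂ z = 0 := Function.notMem_support.1 hz
    have h₁0 : χ₁ z = 0 := by linarith [h₁.nonneg z, h₂.nonneg z]
    have h₂0 : χ₂ z = 0 := by linarith
    simp [h₁0, h₂0]
  nonneg z := by nlinarith [h₁.nonneg z, h₁.le_one z, h₂.nonneg z, h₂.le_one z]
  le_one z := by nlinarith [h₁.nonneg z, h₁.le_one z, h₂.nonneg z, h₂.le_one z]
  eventually_eq_one := by
    rw [nhdsSet_union]
    refine eventually_sup.2 ⟨h₁.eventually_eq_one.mono fun z hz ↦ ?_,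
      h₂.eventually_eq_one.mono fun z hz ↦ ?_⟩ <;> simp [hz]

theorem norm_fderiv_union_le (h₁ : IsCutoffNear χ₁ K) (h₂ : IsCutoffNear χ₂ L) (z : E) :
    ‖fderiv ℝ (fun z ↦ 1 - (1 - χ₁ z) * (1 - χ₂ z)) z‖ ≤
      ‖fderiv ℝ χ₁ z‖ + ‖fderiv ℝ χ₂ z‖ := by
  have hd₁ := (h₁.contDiff.differentiable one_ne_zero z).hasFDerivAt.const_sub 1
  have hd₂ := (h₂.contDiff.differentiable one_ne_zero z).hasFDerivAt.const_sub 1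
  rw [((hd₁.fun_mul hd₂).const_sub 1).fderiv, norm_neg, smul_neg, smul_neg, ← neg_add, norm_neg,
    add_comm]
  refine (norm_add_le _ _).trans (add_le_add ?_ ?_) <;>
    refine (norm_smul_le _ _).trans (mul_le_of_le_one_left (norm_nonneg _) ?_) <;>
    rw [Real.norm_eq_abs, abs_le] <;>
    constructor <;> linarith [h₁.nonneg z, h₁.le_one z, h₂.nonneg z, h₂.le_one z]

variable [MeasurableSpace E] [OpensMeasurableSpace E] {μ : Measure E} [IsFiniteMeasureOnCompacts μ]

theorem integrable_sq (h : IsCutoffNear χ K) : Integrable (fun z ↦ χ z ^ 2) μ := by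
  have hsupp : HasCompactSupport fun z ↦ χ z ^ 2 :=
    h.hasCompactSupport.comp_left (g := fun x : ℝ ↦ x ^ 2) (zero_pow two_ne_zero)
  have hc : Continuous fun z ↦ χ z ^ 2 := h.contDiff.continuous.pow 2
  exact hc.integrable_of_hasCompactSupport hsupp

theorem integrable_norm_fderiv_sq (h : IsCutoffNear χ K) :
    Integrable (fun z ↦ ‖fderiv ℝ χ z‖ ^ 2) μ := by
  have hsupp : HasCompactSupport fun z ↦ ‖fderiv ℝ χ z‖ ^ 2 :=
    (h.hasCompactSupport.fderiv ℝ).comp_left (g := fun L : E →L[ℝ] ℝ ↦ ‖L‖ ^ 2) (by simp)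
  have hc : Continuous fun z ↦ ‖fderiv ℝ χ z‖ ^ 2 :=
    (h.contDiff.continuous_fderiv one_ne_zero).norm.pow 2
  exact hc.integrable_of_hasCompactSupport hsupp

end IsCutoffNear

variable [MeasureSpace E]

/-- `K` has zero (Sobolev) capacity: it admits cutoff functions of arbitrarily small norm in the
Sobolev space `W^{1,2}`. -/
def HasZeroCapacity (K : Set E) : Prop :=
  ∀ ε > 0, ∃ χ : E → ℝ, IsCutoffNear χ K ∧ ∫ z, χ z ^ 2 ≤ ε ∧ ∫ z, ‖fderiv ℝ χ z‖ ^ 2 ≤ ε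

namespace HasZeroCapacity

variable {K L : Set E}

theorem mono (h : HasZeroCapacity L) (hKL : K ⊆ L) : HasZeroCapacity K := fun ε hε ↦
  let ⟨χ, hχ, hχε⟩ := h ε hε
  ⟨χ, hχ.mono hKL, hχε⟩

theorem empty : HasZeroCapacity (∅ : Set E) := fun ε hε ↦
  ⟨0, .empty, by simpa using hε.le, by simpa using hε.le⟩

variable [OpensMeasurableSpace E] [IsFiniteMeasureOnCompacts (volume : Measure E)]

theorem union (hK : HasZeroCapacity K) (hL : HasZeroCapacity L) : HasZeroCapacity (K ∪ L) := by
  intro ε hε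
  obtain ⟨χ₁, h₁, hχ₁, hdχ₁⟩ := hK (ε / 4) (by positivity)
  obtain ⟨χ₂, h₂, hχ₂, hdχ₂⟩ := hL (ε / 4) (by positivity)
  refine ⟨_, h₁.union h₂, ?_, ?_⟩
  · refine (integral_sq_le_of_le_add h₁.integrable_sq h₂.integrable_sq
      (h₁.union h₂).nonneg fun z ↦ ?_).trans (by linarith)
    nlinarith [h₁.nonneg z, h₂.nonneg z]
  · exact (integral_sq_le_of_le_add h₁.integrable_norm_fderiv_sq h₂.integrable_norm_fderiv_sq
      (fun _ ↦ norm_nonneg _) (h₁.norm_fderiv_union_le h₂)).trans (by linarith)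

theorem of_isCompact (hK : IsCompact K)
    (hloc : ∀ x ∈ K, ∃ V ∈ 𝓝 x, HasZeroCapacity (V ∩ K)) : HasZeroCapacity K := by
  have := hK.induction_on (p := fun s ↦ HasZeroCapacity (s ∩ K)) (by simpa using .empty)
    (fun s t hst h ↦ h.mono (inter_subset_inter_left _ hst))
    (fun s t hs ht ↦ by rw [union_inter_distrib_right]; exact hs.union ht)
    (fun x hx ↦ (hloc x hx).imp fun V hV ↦ ⟨mem_nhdsWithin_of_mem_nhds hV.1, hV.2⟩)
  rwa [inter_self] at this

end HasZeroCapacity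

end Capacity

theorem sq_sub_sq_le_integral {g g' : ℝ → ℝ} {a b x y : ℝ} (hg : ∀ s, HasDerivAt g (g' s) s)
    (hg' : Continuous g') (hx : x ∈ Icc a b) (hy : y ∈ Icc a b) :
    g x ^ 2 - g y ^ 2 ≤ ∫ s in a..b, (g s ^ 2 + g' s ^ 2) := by
  have hgc : Continuous g := continuous_iff_continuousAt.2 fun s ↦ (hg s).continuousAt
  have hq : Continuous fun s ↦ g s ^ 2 + g' s ^ 2 := by fun_prop
  have hab : a ≤ b := hx.1.trans hx.2
  have hftc : ∫ s in y..x, 2 * g s * g' s = g x ^ 2 - g y ^ 2 :=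
    intervalIntegral.integral_eq_sub_of_hasDerivAt (fun s _ ↦ by simpa using (hg s).pow 2)
      (Continuous.intervalIntegrable (by fun_prop) _ _)
  have hbound : ∀ s, ‖2 * g s * g' s‖ ≤ g s ^ 2 + g' s ^ 2 := fun s ↦ by
    rw [Real.norm_eq_abs, abs_le]
    constructor <;> nlinarith [sq_nonneg (g s + g' s), sq_nonneg (g s - g' s)]
  calc g x ^ 2 - g y ^ 2
      ≤ |∫ s in y..x, (g s ^ 2 + g' s ^ 2)| := hftc ▸ (le_abs_self _).trans
        (intervalIntegral.norm_integral_le_abs_of_norm_le (ae_of_all _ hbound)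
          (hq.intervalIntegrable _ _))
    _ ≤ |∫ s in a..b, (g s ^ 2 + g' s ^ 2)| :=
        intervalIntegral.abs_integral_mono_interval
          (uIoc_of_le hab ▸ Ioc_subset_Ioc (le_min hy.1 hx.1) (max_le hy.2 hx.2))
          (ae_of_all _ fun s ↦ by positivity) (hq.intervalIntegrable _ _)
    _ = ∫ s in a..b, (g s ^ 2 + g' s ^ 2) :=
        abs_of_nonneg (intervalIntegral.integral_nonneg hab fun s _ ↦ by positivity)

theorem length_mul_sq_le_integral {g g' : ℝ → ℝ} {a b x : ℝ} (hg : ∀ s, HasDerivAt g (g' s) s)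
    (hg' : Continuous g') (hx : x ∈ Icc a b) :
    (b - a) * g x ^ 2 ≤ (1 + (b - a)) * ∫ s in a..b, (g s ^ 2 + g' s ^ 2) := by
  have hgc : Continuous g := continuous_iff_continuousAt.2 fun s ↦ (hg s).continuousAt
  have hab : a ≤ b := hx.1.trans hx.2
  set J := ∫ s in a..b, (g s ^ 2 + g' s ^ 2)
  calc (b - a) * g x ^ 2 = ∫ _ in a..b, g x ^ 2 := by simp
    _ ≤ ∫ s in a..b, (g s ^ 2 + g' s ^ 2 + J) := by
        refine intervalIntegral.integral_mono_on hab (by simp)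
          (Continuous.intervalIntegrable (by fun_prop) _ _) fun y hy ↦ ?_
        linarith [sq_sub_sq_le_integral hg hg' hx hy, sq_nonneg (g' y)]
    _ = (1 + (b - a)) * J := by
        rw [intervalIntegral.integral_add (Continuous.intervalIntegrable (by fun_prop) _ _)
          (by simp), intervalIntegral.integral_const, smul_eq_mul]
        ring

theorem sq_le_circleAverage {χ : ℂ → ℝ} (hχ : ContDiff ℝ 1 χ) {c z : ℂ} {ρ : ℝ}
    (hz : z ∈ sphere c ρ) :
    χ z ^ 2 ≤ (1 + 2 * Real.pi) *
      Real.circleAverage (fun w ↦ χ w ^ 2 + ρ ^ 2 * ‖fderiv ℝ χ w‖ ^ 2) c ρ := by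
  have hρ : 0 ≤ ρ := nonneg_of_mem_sphere hz
  have hdχ : Continuous (fderiv ℝ χ) := hχ.continuous_fderiv one_ne_zero
  have hχc := hχ.continuous
  have hcircle : Continuous (circleMap c ρ) := continuous_circleMap c ρ
  obtain ⟨θ, hθ, rfl⟩ : ∃ θ ∈ Icc 0 (2 * Real.pi), circleMap c ρ θ = z := by
    rw [← abs_of_nonneg hρ, ← image_circleMap_Ioc] at hz
    exact hz.imp fun θ hθ ↦ ⟨Ioc_subset_Icc_self hθ.1, hθ.2⟩
  have hderiv : ∀ s, HasDerivAt (fun s ↦ χ (circleMap c ρ s))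
      (fderiv ℝ χ (circleMap c ρ s) (circleMap 0 ρ s * Complex.I)) s := fun s ↦
    (hχ.differentiable one_ne_zero _).hasFDerivAt.comp_hasDerivAt s (hasDerivAt_circleMap c ρ s)
  have hcont : Continuous fun s ↦
      fderiv ℝ χ (circleMap c ρ s) (circleMap 0 ρ s * Complex.I) :=
    (hdχ.comp hcircle).clm_apply (by fun_prop)
  have hsobolev := length_mul_sq_le_integral hderiv hcont hθ
  rw [sub_zero] at hsobolev
  rw [Real.circleAverage_def, smul_eq_mul]
  have hmono : ∫ s in (0)..2 * Real.pi, (χ (circleMap c ρ s) ^ 2 +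
      fderiv ℝ χ (circleMap c ρ s) (circleMap 0 ρ s * Complex.I) ^ 2) ≤
      ∫ s in (0)..2 * Real.pi, (χ (circleMap c ρ s) ^ 2 +
        ρ ^ 2 * ‖fderiv ℝ χ (circleMap c ρ s)‖ ^ 2) := by
    refine intervalIntegral.integral_mono_on Real.two_pi_pos.le
      (Continuous.intervalIntegrable (by fun_prop) _ _)
      (Continuous.intervalIntegrable (by fun_prop) _ _) fun s _ ↦ add_le_add_right ?_ _
    have hle := (fderiv ℝ χ (circleMap c ρ s)).le_opNorm (circleMap 0 ρ s * Complex.I)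
    rw [norm_mul, Complex.norm_I, mul_one, norm_circleMap_zero, abs_of_nonneg hρ] at hle
    rw [← mul_pow, mul_comm ρ, ← sq_abs]
    exact pow_le_pow_left₀ (abs_nonneg _) hle 2
  have hpi := Real.two_pi_pos
  refine le_of_mul_le_mul_left (hsobolev.trans ?_) hpi
  calc _ ≤ _ := mul_le_mul_of_nonneg_left hmono (by positivity)
    _ = _ := by field_simp

theorem HasZeroCapacity.exists_sphere_disjoint {K : Set ℂ} (hK : HasZeroCapacity K) (c : ℂ)
    {a b : ℝ} (ha : 0 ≤ a) (hab : a < b) : ∃ ρ ∈ Ioo a b, Disjoint (sphere c ρ) K := by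
  by_contra! hmeet
  have hba : 0 < b ^ 2 - a ^ 2 := by nlinarith
  have hpi := Real.pi_pos
  obtain ⟨χ, hχ, hχε, hdχε⟩ := hK
    (Real.pi * (b ^ 2 - a ^ 2) / (2 * (1 + 2 * Real.pi) * (1 + b ^ 2))) (by positivity)
  set Q : ℂ → ℝ := fun w ↦ χ w ^ 2 + b ^ 2 * ‖fderiv ℝ χ w‖ ^ 2
  have hQint : Integrable Q := hχ.integrable_sq.add (hχ.integrable_norm_fderiv_sq.const_mul _)
  have hcircle : ∀ ρ ∈ Ioo a b, 1 ≤ (1 + 2 * Real.pi) * Real.circleAverage Q c ρ := by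
    intro ρ hρ
    obtain ⟨z, hz, hzK⟩ := not_disjoint_iff.1 (hmeet ρ hρ)
    have hsobolev := sq_le_circleAverage hχ.contDiff hz
    rw [hχ.eventually_eq_one.self_of_nhdsSet z hzK, one_pow] at hsobolev
    refine hsobolev.trans (mul_le_mul_of_nonneg_left ?_ (by positivity))
    have hdχ := hχ.contDiff.continuous_fderiv one_ne_zero
    have hχc := hχ.contDiff.continuous
    refine Real.circleAverage_mono (Continuous.continuousOn (by fun_prop)).circleIntegrable'
      (Continuous.continuousOn (by fun_prop)).circleIntegrable' fun w _ ↦ ?_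
    have := pow_le_pow_left₀ (ha.trans hρ.1.le) hρ.2.le 2
    exact add_le_add_right (mul_le_mul_of_nonneg_right this (sq_nonneg _)) _
  have hlower : Real.pi * (b ^ 2 - a ^ 2) ≤ (1 + 2 * Real.pi) * ∫ w, Q w := by
    have hmean := mul_le_integral_of_le_circleAverage (m := (1 + 2 * Real.pi)⁻¹) hQint
      (fun w ↦ by positivity) ha hab.le fun ρ hρ ↦ (inv_le_iff_one_le_mul₀' (by positivity)).2
        (hcircle ρ hρ)
    rwa [mul_inv_le_iff₀' (by positivity)] at hmean
  have hupper : (1 + 2 * Real.pi) * ∫ w, Q w ≤ Real.pi * (b ^ 2 - a ^ 2) / 2 := by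
    rw [integral_add hχ.integrable_sq (hχ.integrable_norm_fderiv_sq.const_mul _),
      integral_const_mul]
    calc _ ≤ (1 + 2 * Real.pi) * ((1 + b ^ 2) *
          (Real.pi * (b ^ 2 - a ^ 2) / (2 * (1 + 2 * Real.pi) * (1 + b ^ 2)))) := by
          gcongr
          nlinarith [sq_nonneg b]
      _ = _ := by field_simp
  nlinarith [mul_pos hpi hba]

theorem tendstoUniformlyOn_normed_convolution {ι G E' : Type*} [NormedAddCommGroup E']
    [NormedSpace ℝ E'] [CompleteSpace E'] [NormedAddCommGroup G] [NormedSpace ℝ G]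
    [FiniteDimensional ℝ G] [HasContDiffBump G] [MeasurableSpace G] [BorelSpace G]
    {μ : Measure G} [μ.IsAddHaarMeasure] {k : ι → ContDiffBump (0 : G)} {l : Filter ι}
    (hk : Tendsto (fun i ↦ (k i).rOut) l (𝓝 0)) {g : G → E'} (hg : AEStronglyMeasurable g μ)
    {K : Set G} (hK : IsCompact K) (hgK : ∀ x ∈ K, ContinuousAt g x) :
    TendstoUniformlyOn
      (fun i ↦ (convolution ((k i).normed μ) g (.lsmul ℝ ℝ) μ : G → E')) g l K := by
  rw [Metric.tendstoUniformlyOn_iff]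
  intro ε hε
  obtain ⟨δ, hδ, hδε⟩ := Metric.mem_uniformity_dist.1
    (hK.uniformContinuousAt_of_continuousAt g hgK (Metric.dist_mem_uniformity (half_pos hε)))
  filter_upwards [hk.eventually_lt_const hδ] with i hi x hx
  rw [dist_comm]
  refine ((k i).dist_normed_convolution_le hg fun y hy ↦ ?_).trans_lt (half_lt_self hε)
  rw [dist_comm]
  exact (hδε ((dist_comm x y).trans_lt (hy.trans hi)) hx).le

theorem integral_fderiv_apply_eq_zero {E F : Type*} [NormedAddCommGroup E] [NormedSpace ℝ E]
    [FiniteDimensional ℝ E] [MeasurableSpace E] [BorelSpace E] {μ : Measure E}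
    [μ.IsAddHaarMeasure] [NormedAddCommGroup F] [NormedSpace ℝ F] {H : E → F}
    (hH : ContDiff ℝ 1 H) (hc : HasCompactSupport H) (v : E) : ∫ x, fderiv ℝ H x v ∂μ = 0 := by
  have hcont : Continuous fun x ↦ fderiv ℝ H x v :=
    (hH.continuous_fderiv one_ne_zero).clm_apply continuous_const
  simpa using integral_smul_fderiv_eq_neg_fderiv_smul_of_integrable (μ := μ) (𝕜 := ℝ)
    (f := fun _ : E ↦ (1 : ℝ)) (g := H) (v := v) (by simp)
    (by simpa using hcont.integrable_of_hasCompactSupport (hc.fderiv_apply (𝕜 := ℝ) v))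
    (by simpa using hH.continuous.integrable_of_hasCompactSupport hc)
    (fun x _ ↦ by fun_prop) (fun x _ ↦ hH.differentiable one_ne_zero x)

theorem sq_integral_mul_le {α : Type*} [MeasurableSpace α] {μ : Measure α} {f g : α → ℝ}
    (hf : MemLp f 2 μ) (hg : MemLp g 2 μ) (hf0 : ∀ x, 0 ≤ f x) (hg0 : ∀ x, 0 ≤ g x) :
    (∫ x, f x * g x ∂μ) ^ 2 ≤ (∫ x, f x ^ 2 ∂μ) * ∫ x, g x ^ 2 ∂μ := by
  have hle := integral_mul_le_Lp_mul_Lq_of_nonneg (μ := μ) Real.HolderConjugate.two_two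
    (.of_forall hf0) (.of_forall hg0) (by simpa using hf) (by simpa using hg)
  simp only [Real.rpow_two, ← Real.sqrt_eq_rpow] at hle
  have hsq := pow_le_pow_left₀ (integral_nonneg fun x ↦ mul_nonneg (hf0 x) (hg0 x)) hle 2
  rwa [mul_pow, Real.sq_sqrt (integral_nonneg fun x ↦ sq_nonneg _),
    Real.sq_sqrt (integral_nonneg fun x ↦ sq_nonneg _)] at hsq

/-- The Cauchy–Riemann derivative `∂φ/∂x + i ∂φ/∂y`, that is, `2 ∂φ/∂z̄`, of a real function. -/
noncomputable def dbar (φ : ℂ → ℝ) (z : ℂ) : ℂ :=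
  fderiv ℝ φ z 1 + Complex.I * fderiv ℝ φ z Complex.I

section Dbar

variable {φ ψ : ℂ → ℝ} {z : ℂ}

theorem continuous_dbar (hφ : ContDiff ℝ 1 φ) : Continuous (dbar φ) := by
  have : Continuous (fderiv ℝ φ) := hφ.continuous_fderiv one_ne_zero
  unfold dbar
  fun_prop

theorem tsupport_dbar_subset : tsupport (dbar φ) ⊆ tsupport φ := by
  refine (closure_mono fun z hz ↦ ?_).trans (tsupport_fderiv_subset ℝ)
  contrapose! hz
  simp [dbar, Function.notMem_support.1 hz]

theorem norm_dbar_le (φ : ℂ → ℝ) (z : ℂ) : ‖dbar φ z‖ ≤ 2 * ‖fderiv ℝ φ z‖ := by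
  have h1 := (fderiv ℝ φ z).le_opNorm 1
  have hI := (fderiv ℝ φ z).le_opNorm Complex.I
  simp only [norm_one, Complex.norm_I, mul_one] at h1 hI
  calc ‖dbar φ z‖ ≤ ‖fderiv ℝ φ z 1‖ + ‖fderiv ℝ φ z Complex.I‖ := by
        simpa [dbar] using norm_add_le (fderiv ℝ φ z 1 : ℂ) (Complex.I * fderiv ℝ φ z Complex.I)
    _ ≤ 2 * ‖fderiv ℝ φ z‖ := by linarith

theorem dbar_one_sub_mul (hφ : DifferentiableAt ℝ φ z) (hψ : DifferentiableAt ℝ ψ z) :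
    dbar (fun w ↦ (1 - ψ w) * φ w) z = dbar φ z - (ψ z * dbar φ z + φ z * dbar ψ z) := by
  simp only [dbar, ((hψ.hasFDerivAt.const_sub 1).fun_mul hφ.hasFDerivAt).fderiv]
  simp
  ring

end Dbar

/-- `g` satisfies the Cauchy–Riemann equation `∂g/∂z̄ = 0` in `U` in the sense of distributions. -/
def IsWeaklyHolomorphicOn (g : ℂ → ℂ) (U : Set ℂ) : Prop :=
  ∀ φ : ℂ → ℝ, ContDiff ℝ 1 φ → HasCompactSupport φ → tsupport φ ⊆ U → ∫ z, g z * dbar φ z = 0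

theorem mul_dbar_eq_of_differentiableAt {G : ℂ → ℂ} {φ : ℂ → ℝ} {z : ℂ}
    (hG : DifferentiableAt ℂ G z) (hφ : DifferentiableAt ℝ φ z) :
    G z * dbar φ z = fderiv ℝ (fun w ↦ φ w * G w) z 1 +
      Complex.I * fderiv ℝ (fun w ↦ φ w * G w) z Complex.I := by
  have hφ' : HasFDerivAt (fun w ↦ (φ w : ℂ)) (Complex.ofRealCLM.comp (fderiv ℝ φ z)) z :=
    Complex.ofRealCLM.hasFDerivAt.comp z hφ.hasFDerivAt
  have hCR : fderiv ℂ G z Complex.I = Complex.I * fderiv ℂ G z 1 := by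
    rw [← smul_eq_mul, ← map_smul, smul_eq_mul, mul_one]
  rw [(hφ'.fun_mul (hG.hasFDerivAt.restrictScalars ℝ)).fderiv]
  simp only [dbar, add_apply, smul_apply, ContinuousLinearMap.comp_apply,
    ContinuousLinearMap.coe_restrictScalars', smul_eq_mul, Complex.ofRealCLM_apply, hCR]
  linear_combination -(φ z : ℂ) * (fderiv ℂ G z) 1 * Complex.I_mul_I

theorem IsCutoffNear.sq_norm_integral_mul_dbar_le {g : ℂ → ℂ} (hg : MemLp g 2) {φ χ : ℂ → ℝ}
    {K : Set ℂ} {C ε : ℝ} (hχ : IsCutoffNear χ K) (hφC : ∀ z, ‖φ z‖ ≤ C)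
    (hdφC : ∀ z, ‖dbar φ z‖ ≤ C) (hε : ∫ z, χ z ^ 2 ≤ ε) (hdε : ∫ z, ‖fderiv ℝ χ z‖ ^ 2 ≤ ε) :
    ‖∫ z, g z * (χ z * dbar φ z + φ z * dbar χ z)‖ ^ 2 ≤
      (∫ z, ‖g z‖ ^ 2) * (10 * C ^ 2 * ε) := by
  have hC : 0 ≤ C := (norm_nonneg _).trans (hdφC 0)
  set h : ℂ → ℝ := fun z ↦ C * χ z + 2 * C * ‖fderiv ℝ χ z‖ with hh
  have hh0 : ∀ z, 0 ≤ h z := fun z ↦ by have := hχ.nonneg z; positivity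
  have hχ2 : MemLp χ 2 :=
    (memLp_two_iff_integrable_sq hχ.contDiff.continuous.aestronglyMeasurable).2 hχ.integrable_sq
  have hdχ2 : MemLp (fun z ↦ ‖fderiv ℝ χ z‖) 2 :=
    (memLp_two_iff_integrable_sq
      (hχ.contDiff.continuous_fderiv one_ne_zero).norm.aestronglyMeasurable).2
      hχ.integrable_norm_fderiv_sq
  have hh2 : MemLp h 2 := (hχ2.const_mul C).add (hdχ2.const_mul (2 * C))
  have hhε : ∫ z, h z ^ 2 ≤ 10 * C ^ 2 * ε := by
    refine (integral_sq_le_of_le_add (hχ2.const_mul C).integrable_sq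
      (hdχ2.const_mul (2 * C)).integrable_sq hh0 fun z ↦ le_rfl).trans ?_
    simp only [mul_pow, integral_const_mul]
    nlinarith [sq_nonneg C]
  have hbound : ∀ z, ‖g z * (χ z * dbar φ z + φ z * dbar χ z)‖ ≤ ‖g z‖ * h z := fun z ↦ by
    rw [norm_mul]
    refine mul_le_mul_of_nonneg_left ((norm_add_le _ _).trans ?_) (norm_nonneg _)
    rw [norm_mul, norm_mul, Complex.norm_real, Complex.norm_real,
      Real.norm_of_nonneg (hχ.nonneg z)]
    have hχφ := mul_le_mul_of_nonneg_left (hdφC z) (hχ.nonneg z)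
    have hφχ := mul_le_mul (hφC z) (norm_dbar_le χ z) (norm_nonneg _) hC
    simp only [hh]
    linarith
  calc ‖∫ z, g z * (χ z * dbar φ z + φ z * dbar χ z)‖ ^ 2
      ≤ (∫ z, ‖g z‖ * h z) ^ 2 := pow_le_pow_left₀ (norm_nonneg _)
        (norm_integral_le_of_norm_le (hg.norm.integrable_mul hh2) (.of_forall hbound)) 2
    _ ≤ (∫ z, ‖g z‖ ^ 2) * ∫ z, h z ^ 2 :=
        sq_integral_mul_le hg.norm hh2 (fun _ ↦ norm_nonneg _) hh0
    _ ≤ (∫ z, ‖g z‖ ^ 2) * (10 * C ^ 2 * ε) :=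
        mul_le_mul_of_nonneg_left hhε (integral_nonneg fun _ ↦ by positivity)

theorem tendsto_circleIntegral_sub_inv_mul {F : ℕ → ℂ → ℂ} {f : ℂ → ℂ} {c w : ℂ} {R : ℝ}
    (hw : w ∈ ball c R) (hF : ∀ n, ContinuousOn (F n) (sphere c R))
    (hFf : TendstoUniformlyOn F f atTop (sphere c R)) :
    Tendsto (fun n ↦ ∮ z in C(c, R), (z - w)⁻¹ * F n z) atTop
      (𝓝 (∮ z in C(c, R), (z - w)⁻¹ * f z)) := by
  have hR : 0 < R := dist_nonneg.trans_lt hw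
  have hgap : 0 < R - dist w c := sub_pos.2 hw
  have hle : ∀ z ∈ sphere c R, R - dist w c ≤ ‖z - w‖ := fun z hz ↦ by
    rw [← mem_sphere.1 hz, ← dist_eq_norm]
    linarith [dist_triangle z w c]
  refine TendstoUniformlyOn.tendsto_circleIntegral_of_continuousOn hR.le
    (.of_forall fun n ↦ (ContinuousOn.inv₀ (by fun_prop) fun z hz ↦ ?_).mul (hF n)) ?_
  · exact norm_pos_iff.1 (hgap.trans_le (hle z hz))
  rw [Metric.tendstoUniformlyOn_iff] at hFf ⊢
  intro ε hε
  filter_upwards [hFf (ε * (R - dist w c)) (by positivity)] with n hn z hz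
  rw [dist_eq_norm, ← mul_sub, norm_mul, norm_inv, ← dist_eq_norm (f z),
    inv_mul_lt_iff₀ (hgap.trans_le (hle z hz)), mul_comm]
  exact (hn z hz).trans_le (by gcongr; exact hle z hz)

namespace IsWeaklyHolomorphicOn

variable {g : ℂ → ℂ} {U O : Set ℂ}

theorem indicator_of_differentiableOn (hO : IsOpen O) (hg : DifferentiableOn ℂ g O) :
    IsWeaklyHolomorphicOn (O.indicator g) O := by
  intro φ hφ hc hsupp
  set H : ℂ → ℂ := fun z ↦ φ z * g z with hH
  have hzero : ∀ z ∉ O, H =ᶠ[𝓝 z] 0 := fun z hz ↦ by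
    filter_upwards [notMem_tsupport_iff_eventuallyEq.1 (mt (@hsupp z) hz)] with w hw
    simp [hH, hw]
  have hHC : ContDiff ℝ 1 H := contDiff_iff_contDiffAt.2 fun z ↦ by
    by_cases hz : z ∈ O
    · exact (Complex.ofRealCLM.contDiff.comp hφ).contDiffAt.mul
        (((hg.contDiffOn hO).contDiffAt (hO.mem_nhds hz)).restrict_scalars ℝ)
    · exact contDiffAt_const.congr_of_eventuallyEq (hzero z hz)
  have hHc : HasCompactSupport H :=
    hc.mono fun z hz hφz ↦ hz (by simp [hH, hφz])
  have hint : ∀ v, Integrable fun z ↦ fderiv ℝ H z v := fun v ↦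
    ((hHC.continuous_fderiv one_ne_zero).clm_apply continuous_const).integrable_of_hasCompactSupport
      (hHc.fderiv_apply (𝕜 := ℝ) v)
  have hdiv : ∀ z, O.indicator g z * dbar φ z =
      fderiv ℝ H z 1 + Complex.I * fderiv ℝ H z Complex.I := fun z ↦ by
    by_cases hz : z ∈ O
    · rw [indicator_of_mem hz]
      exact mul_dbar_eq_of_differentiableAt (hg.differentiableAt (hO.mem_nhds hz))
        (hφ.differentiable one_ne_zero z)
    · simp [indicator_of_notMem hz, (hzero z hz).fderiv_eq]
  simp_rw [hdiv]
  rw [integral_add (hint 1) ((hint _).const_mul _), integral_const_mul,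
    integral_fderiv_apply_eq_zero hHC hHc, integral_fderiv_apply_eq_zero hHC hHc, mul_zero,
    add_zero]

theorem integral_eq_integral_cutoff (hg : LocallyIntegrable g) (h : IsWeaklyHolomorphicOn g O)
    {φ χ : ℂ → ℝ} (hφ : ContDiff ℝ 1 φ) (hc : HasCompactSupport φ)
    (hχ : IsCutoffNear χ (tsupport φ \ O)) :
    ∫ z, g z * dbar φ z = ∫ z, g z * (χ z * dbar φ z + φ z * dbar χ z) := by
  have hint : ∀ {f : ℂ → ℂ}, Continuous f → tsupport f ⊆ tsupport φ →
      Integrable fun z ↦ g z * f z := fun {f} hf hsupp ↦ by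
    simpa only [smul_eq_mul, mul_comm] using
      hg.integrable_smul_left_of_hasCompactSupport hf
        (hc.of_isClosed_subset (isClosed_tsupport f) hsupp)
  have hψ : ContDiff ℝ 1 fun z ↦ (1 - χ z) * φ z := (contDiff_const.sub hχ.contDiff).mul hφ
  have hψφ : tsupport (fun z ↦ (1 - χ z) * φ z) ⊆ tsupport φ := tsupport_mul_subset_right
  have hψO : tsupport (fun z ↦ (1 - χ z) * φ z) ⊆ O := fun z hz ↦ by
    by_contra hzO
    refine notMem_tsupport_iff_eventuallyEq.2 ?_ hz
    have hzK : z ∈ tsupport φ \ O := ⟨hψφ hz, hzO⟩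
    filter_upwards [hχ.eventually_eq_one.filter_mono (nhds_le_nhdsSet hzK)] with w hw
    simp [hw]
  rw [← sub_zero (∫ z, g z * dbar φ z),
    ← h _ hψ (hc.of_isClosed_subset (isClosed_tsupport _) hψφ) hψO,
    ← integral_sub (hint (continuous_dbar hφ) tsupport_dbar_subset)
      (hint (continuous_dbar hψ) (tsupport_dbar_subset.trans hψφ))]
  refine integral_congr_ae (.of_forall fun z ↦ ?_)
  simp only [dbar_one_sub_mul (hφ.differentiable one_ne_zero z)
    (hχ.contDiff.differentiable one_ne_zero z)]
  ring

theorem of_hasZeroCapacity_diff (hg : MemLp g 2) (h : IsWeaklyHolomorphicOn g O)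
    (hUO : HasZeroCapacity (U \ O)) : IsWeaklyHolomorphicOn g U := by
  intro φ hφ hc hsupp
  obtain ⟨C₁, hC₁⟩ := hφ.continuous.bounded_above_of_compact_support hc
  obtain ⟨C₂, hC₂⟩ := (continuous_dbar hφ).bounded_above_of_compact_support
    (hc.of_isClosed_subset (isClosed_tsupport _) tsupport_dbar_subset)
  set C := max C₁ C₂
  have hle : ∀ ε > 0, ‖∫ z, g z * dbar φ z‖ ^ 2 ≤ (∫ z, ‖g z‖ ^ 2) * (10 * C ^ 2 * ε) := by
    intro ε hε
    obtain ⟨χ, hχ, hχε, hdχε⟩ := hUO.mono (sdiff_subset_sdiff_left hsupp) ε hε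
    rw [h.integral_eq_integral_cutoff (hg.locallyIntegrable one_le_two) hφ hc hχ]
    exact hχ.sq_norm_integral_mul_dbar_le hg (fun z ↦ (hC₁ z).trans (le_max_left _ _))
      (fun z ↦ (hC₂ z).trans (le_max_right _ _)) hχε hdχε
  have hlim : Tendsto (fun ε ↦ (∫ z, ‖g z‖ ^ 2) * (10 * C ^ 2 * ε)) (𝓝[>] 0) (𝓝 0) :=
    tendsto_nhdsWithin_of_tendsto_nhds (Continuous.tendsto' (by fun_prop) _ _ (by simp))
  have hsq := ge_of_tendsto hlim (eventually_mem_nhdsWithin.mono hle)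
  simpa using le_antisymm hsq (sq_nonneg _)

theorem differentiableAt_convolution (hg : LocallyIntegrable g) (h : IsWeaklyHolomorphicOn g U)
    {k : ℂ → ℝ} (hk : ContDiff ℝ 1 k) (hc : HasCompactSupport k) {z : ℂ}
    (hz : ∀ w ∈ tsupport k, z - w ∈ U) :
    DifferentiableAt ℂ (convolution k g (.lsmul ℝ ℝ) volume) z := by
  have hφsupp : tsupport (fun w ↦ k (z - w)) ⊆ (fun w ↦ z - w) ⁻¹' tsupport k :=
    tsupport_comp_subset_preimage k (by fun_prop)
  have hzero : ∫ w, g w * dbar (fun w ↦ k (z - w)) w = 0 :=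
    h _ (hk.comp (contDiff_const.sub contDiff_id))
      (hc.comp_homeomorph (Homeomorph.subLeft z)) fun w hw ↦ by
        simpa using hz _ (hφsupp hw)
  have hderiv := hc.hasFDerivAt_convolution_left (.lsmul ℝ ℝ) hk hg z
  have hint := ((hc.fderiv ℝ).convolutionExists_left ((ContinuousLinearMap.lsmul ℝ ℝ).precompL ℂ)
    (hk.continuous_fderiv one_ne_zero) hg z).integrable_swap
  have hfderiv : ∀ w, fderiv ℝ (fun w ↦ k (z - w)) w = -fderiv ℝ k (z - w) := fun w ↦ by
    simpa [Function.comp_def] using ((hk.differentiable one_ne_zero _).hasFDerivAt.comp w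
      ((hasFDerivAt_id w).const_sub z)).fderiv
  refine differentiableAt_complex_iff_differentiableAt_real.2
    ⟨hderiv.differentiableAt, sub_eq_zero.1 ?_⟩
  rw [hderiv.fderiv, convolution_eq_swap, ContinuousLinearMap.integral_apply hint,
    ContinuousLinearMap.integral_apply hint, smul_eq_mul, ← integral_const_mul,
    ← integral_sub (hint.apply_continuousLinearMap _)
      ((hint.apply_continuousLinearMap _).const_mul _)]
  refine Eq.trans ?_ (mul_eq_zero_of_right Complex.I hzero)
  rw [← integral_const_mul]
  congr 1 with w
  simp only [ContinuousLinearMap.precompL_apply, ContinuousLinearMap.lsmul_apply, dbar, hfderiv,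
    neg_apply, Complex.real_smul, Complex.ofReal_neg]
  linear_combination g w * fderiv ℝ k (z - w) Complex.I * Complex.I_mul_I

theorem circleIntegral_sub_inv_mul {c w : ℂ} {s t : ℝ} (hg : LocallyIntegrable g)
    (h : IsWeaklyHolomorphicOn g (ball c t)) (hst : s < t)
    (hcont : ∀ z ∈ sphere c s, ContinuousAt g z) (hw : w ∈ ball c s) (hgw : ContinuousAt g w) :
    ∮ ζ in C(c, s), (ζ - w)⁻¹ * g ζ = 2 * Real.pi * Complex.I * g w := by
  have : 0 < t - s := sub_pos.2 hst
  let k : ℕ → ContDiffBump (0 : ℂ) := fun n ↦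
    ⟨(t - s) / 2 * (1 / (n + 1)) / 2, (t - s) / 2 * (1 / (n + 1)), by positivity,
      half_lt_self (by positivity)⟩
  have hk : Tendsto (fun n ↦ (k n).rOut) atTop (𝓝 0) := by
    simpa only [mul_zero] using
      (tendsto_one_div_add_atTop_nhds_zero_nat (𝕜 := ℝ)).const_mul ((t - s) / 2)
  set G : ℕ → ℂ → ℂ := fun n ↦ convolution ((k n).normed volume) g (.lsmul ℝ ℝ) volume
  have hunif : TendstoUniformlyOn G g atTop (insert w (sphere c s)) :=
    tendstoUniformlyOn_normed_convolution hk hg.aestronglyMeasurable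
      ((isCompact_sphere c s).insert w) (forall_mem_insert.2 ⟨hgw, hcont⟩)
  have hdiff : ∀ n, DifferentiableOn ℂ (G n) (closedBall c s) := fun n z hz ↦ by
    refine (h.differentiableAt_convolution hg (k n).contDiff_normed (k n).hasCompactSupport_normed
      fun y hy ↦ ?_).differentiableWithinAt
    rw [(k n).tsupport_normed_eq, mem_closedBall_zero_iff] at hy
    have hrOut : (k n).rOut ≤ (t - s) / 2 := mul_le_of_le_one_right (by positivity)
      (div_le_one_of_le₀ (by simp) (by positivity))
    have := norm_sub_le (z - c) y
    rw [mem_closedBall, dist_eq_norm] at hz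
    rw [mem_ball, dist_eq_norm, sub_right_comm]
    linarith
  have hlim := tendsto_circleIntegral_sub_inv_mul hw
    (fun n ↦ (hdiff n).continuousOn.mono sphere_subset_closedBall) (hunif.mono (subset_insert _ _))
  refine tendsto_nhds_unique (hlim.congr fun n ↦ ?_)
    ((hunif.tendsto_at (mem_insert w _)).const_mul _)
  simpa only [smul_eq_mul] using (hdiff n).circleIntegral_sub_inv_smul hw

end IsWeaklyHolomorphicOn

section Laplacian

open InnerProductSpace

variable {E : Type*} [NormedAddCommGroup E] [InnerProductSpace ℝ E] [FiniteDimensional ℝ E]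
  {ι : Type*} [Fintype ι]

theorem laplacian_eq_sum_fderiv_fderiv {F : Type*} [NormedAddCommGroup F] [NormedSpace ℝ F]
    (b : OrthonormalBasis ι ℝ E) (f : E → F) (z : E) :
    Laplacian.laplacian f z = ∑ i, fderiv ℝ (fderiv ℝ f) z (b i) (b i) := by
  simp only [laplacian_eq_iteratedFDeriv_orthonormalBasis f b, iteratedFDeriv_two_apply,
    Matrix.cons_val_zero, Matrix.cons_val_one]

theorem laplacian_log {h : E → ℝ} (hh : ContDiff ℝ 2 h) (hpos : ∀ z, 0 < h z) (z : E) :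
    Laplacian.laplacian (fun z ↦ Real.log (h z)) z =
      Laplacian.laplacian h z / h z - ‖fderiv ℝ (fun z ↦ Real.log (h z)) z‖ ^ 2 := by
  have hd : Differentiable ℝ h := hh.differentiable two_ne_zero
  have hd2 : Differentiable ℝ (fderiv ℝ h) :=
    (hh.fderiv_right (m := 1) one_add_one_eq_two.le).differentiable one_ne_zero
  have hlog : fderiv ℝ (fun z ↦ Real.log (h z)) = fun z ↦ (h z)⁻¹ • fderiv ℝ h z :=
    funext fun z ↦ ((hd z).hasFDerivAt.log (hpos z).ne').fderiv
  have hinv : HasFDerivAt (fun z ↦ (h z)⁻¹) (-(h z ^ 2)⁻¹ • fderiv ℝ h z) z :=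
    (hasDerivAt_inv (hpos z).ne').comp_hasFDerivAt z (hd z).hasFDerivAt
  rw [laplacian_eq_sum_fderiv_fderiv (stdOrthonormalBasis ℝ E),
    laplacian_eq_sum_fderiv_fderiv (stdOrthonormalBasis ℝ E),
    (stdOrthonormalBasis ℝ E).norm_dual, hlog,
    (hinv.fun_smul (hd2 z).hasFDerivAt).fderiv, Finset.sum_div,
    ← Finset.sum_sub_distrib]
  refine Finset.sum_congr rfl fun i _ ↦ ?_
  simp
  ring

theorem sq_mul_norm_fderiv_sq_le (b : OrthonormalBasis ι ℝ E) {v ψ : E → ℝ} (hv : ContDiff ℝ 2 v)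
    (hψ : Differentiable ℝ ψ) {z : E}
    (hle : ψ z ≠ 0 → Laplacian.laplacian v z ≤ -‖fderiv ℝ v z‖ ^ 2) :
    ψ z ^ 2 * ‖fderiv ℝ v z‖ ^ 2 ≤
      4 * ‖fderiv ℝ ψ z‖ ^ 2 -
        2 * ∑ i, fderiv ℝ (fun z ↦ ψ z ^ 2 * fderiv ℝ v z (b i)) z (b i) := by
  have hd2 : HasFDerivAt (fderiv ℝ v) (fderiv ℝ (fderiv ℝ v) z) z :=
    ((hv.fderiv_right (m := 1) one_add_one_eq_two.le).differentiable one_ne_zero z).hasFDerivAt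
  have hdiv : ∀ i, fderiv ℝ (fun z ↦ ψ z ^ 2 * fderiv ℝ v z (b i)) z (b i) =
      ψ z ^ 2 * fderiv ℝ (fderiv ℝ v) z (b i) (b i) +
        2 * (ψ z * fderiv ℝ v z (b i)) * fderiv ℝ ψ z (b i) := fun i ↦ by
    have hsq : HasFDerivAt (fun z ↦ ψ z ^ 2) ((2 * ψ z) • fderiv ℝ ψ z) z := by
      simpa using (hψ z).hasFDerivAt.pow 2
    rw [(hsq.fun_mul (hd2.clm_apply (hasFDerivAt_const (b i) z))).fderiv]
    simp
    ring
  have hlap : ψ z ^ 2 * ∑ i, fderiv ℝ (fderiv ℝ v) z (b i) (b i) ≤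
      -(ψ z ^ 2 * ‖fderiv ℝ v z‖ ^ 2) := by
    by_cases hz : ψ z = 0
    · simp [hz]
    · rw [← mul_neg, ← laplacian_eq_sum_fderiv_fderiv]
      exact mul_le_mul_of_nonneg_left (hle hz) (sq_nonneg _)
  have hsq : ∑ i, (ψ z * fderiv ℝ v z (b i) - 2 * fderiv ℝ ψ z (b i)) ^ 2 =
      ψ z ^ 2 * ‖fderiv ℝ v z‖ ^ 2 + 4 * ‖fderiv ℝ ψ z‖ ^ 2 -
        2 * ∑ i, 2 * (ψ z * fderiv ℝ v z (b i)) * fderiv ℝ ψ z (b i) := by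
    simp only [b.norm_dual, Finset.mul_sum, ← Finset.sum_add_distrib,
      ← Finset.sum_sub_distrib]
    exact Finset.sum_congr rfl fun i _ ↦ by ring
  have hsq0 := hsq.symm.trans_ge (Finset.sum_nonneg fun i _ ↦ sq_nonneg _)
  simp only [hdiv, Finset.sum_add_distrib, ← Finset.mul_sum] at hsq0 ⊢
  linarith

theorem integral_sq_mul_norm_fderiv_sq_le [MeasurableSpace E] [BorelSpace E] {μ : Measure E}
    [μ.IsAddHaarMeasure] {v ψ : E → ℝ} (hv : ContDiff ℝ 2 v) (hψ : ContDiff ℝ 1 ψ)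
    (hψc : HasCompactSupport ψ)
    (hle : ∀ z, ψ z ≠ 0 → Laplacian.laplacian v z ≤ -‖fderiv ℝ v z‖ ^ 2) :
    ∫ z, ψ z ^ 2 * ‖fderiv ℝ v z‖ ^ 2 ∂μ ≤ 4 * ∫ z, ‖fderiv ℝ ψ z‖ ^ 2 ∂μ := by
  let b := stdOrthonormalBasis ℝ E
  let H : Fin (Module.finrank ℝ E) → E → ℝ := fun i z ↦ ψ z ^ 2 * fderiv ℝ v z (b i)
  have hH : ∀ i, ContDiff ℝ 1 (H i) := fun i ↦
    (hψ.pow 2).mul ((hv.fderiv_right one_add_one_eq_two.le).clm_apply contDiff_const)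
  have hHc : ∀ i, HasCompactSupport (H i) := fun i ↦
    (hψc.comp_left (g := fun x : ℝ ↦ x ^ 2) (zero_pow two_ne_zero)).mul_right
  have hint : ∀ i, Integrable (fun z ↦ fderiv ℝ (H i) z (b i)) μ := fun i ↦ by
    have hc : Continuous fun z ↦ fderiv ℝ (H i) z (b i) :=
      ((hH i).continuous_fderiv one_ne_zero).clm_apply continuous_const
    exact hc.integrable_of_hasCompactSupport ((hHc i).fderiv_apply (𝕜 := ℝ) (b i))
  have hintψ : Integrable (fun z ↦ ‖fderiv ℝ ψ z‖ ^ 2) μ := by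
    have hc : Continuous fun z ↦ ‖fderiv ℝ ψ z‖ ^ 2 :=
      (hψ.continuous_fderiv one_ne_zero).norm.pow 2
    exact hc.integrable_of_hasCompactSupport
      ((hψc.fderiv ℝ).comp_left (g := fun L : E →L[ℝ] ℝ ↦ ‖L‖ ^ 2) (by simp))
  have hsum := integrable_finsetSum Finset.univ fun i _ ↦ hint i
  calc ∫ z, ψ z ^ 2 * ‖fderiv ℝ v z‖ ^ 2 ∂μ
      ≤ ∫ z, (4 * ‖fderiv ℝ ψ z‖ ^ 2 - 2 * ∑ i, fderiv ℝ (H i) z (b i)) ∂μ :=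
        integral_mono_of_nonneg (Eventually.of_forall fun z ↦ by positivity)
          ((hintψ.const_mul 4).sub (hsum.const_mul 2)) (Eventually.of_forall fun z ↦
            sq_mul_norm_fderiv_sq_le b hv (hψ.differentiable one_ne_zero) (hle z))
    _ = 4 * ∫ z, ‖fderiv ℝ ψ z‖ ^ 2 ∂μ := by
        rw [integral_sub (hintψ.const_mul 4) (hsum.const_mul 2), integral_const_mul,
          integral_const_mul, integral_finsetSum _ fun i _ ↦ hint i]
        simp [integral_fderiv_apply_eq_zero (hH _) (hHc _)]

end Laplacian

theorem exists_lipschitzWith_smoothTransition : ∃ L, LipschitzWith L Real.smoothTransition := by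
  obtain ⟨L, hL⟩ := (Real.smoothTransition.contDiff (n := 1)).locallyLipschitz.locallyLipschitzOn
    |>.exists_lipschitzOnWith_of_compact (isCompact_Icc (a := (0 : ℝ)) (b := 1))
  refine ⟨L, LipschitzWith.of_dist_le_mul fun x y ↦ ?_⟩
  simp only [← Real.smoothTransition.projIcc (x := x), ← Real.smoothTransition.projIcc (x := y)]
  refine (hL.dist_le_mul _ (projIcc 0 1 zero_le_one x).2 _
    (projIcc 0 1 zero_le_one y).2).trans ?_
  gcongr
  exact (LipschitzWith.projIcc zero_le_one).dist_le_mul x y |>.trans_eq (one_mul _)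

theorem smoothTransition_log_div_sq_le {L : ℝ≥0} (hL : LipschitzWith L Real.smoothTransition)
    {x N : ℝ} (hx : 1 ≤ x) (hN : 0 < N) :
    Real.smoothTransition (Real.log x / N) ^ 2 ≤ L / N * (x - 1) := by
  have hlog : 0 ≤ Real.log x / N := div_nonneg (Real.log_nonneg hx) hN.le
  calc Real.smoothTransition (Real.log x / N) ^ 2
      ≤ Real.smoothTransition (Real.log x / N) :=
        pow_le_of_le_one (Real.smoothTransition.nonneg _) (Real.smoothTransition.le_one _)
          two_ne_zero
    _ ≤ L * (Real.log x / N) := by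
        simpa only [Real.dist_eq, Real.smoothTransition.zero, sub_zero, abs_of_nonneg hlog,
          abs_of_nonneg (Real.smoothTransition.nonneg _)] using hL.dist_le_mul (Real.log x / N) 0
    _ ≤ L * ((x - 1) / N) := by
        gcongr
        exact Real.log_le_sub_one_of_pos (zero_lt_one.trans_le hx)
    _ = L / N * (x - 1) := by ring

theorem integral_smoothTransition_log_mul_sq_le {L : ℝ≥0}
    (hL : LipschitzWith L Real.smoothTransition) {α : Type*} [MeasurableSpace α] {μ : Measure α}
    {φ h : α → ℝ} {A N : ℝ} (hφ : ∀ z, ‖φ z‖ ≤ A) (h0 : ∀ z, 0 ≤ h z) (hint : Integrable h μ)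
    (hN : 0 < N) :
    ∫ z, (Real.smoothTransition (Real.log (1 + h z) / N) * φ z) ^ 2 ∂μ ≤
      A ^ 2 * (L / N * ∫ z, h z ∂μ) := by
  rw [← integral_const_mul, ← integral_const_mul]
  refine integral_mono_of_nonneg (ae_of_all _ fun z ↦ sq_nonneg _)
    ((hint.const_mul _).const_mul _) (ae_of_all _ fun z ↦ ?_)
  simp only [mul_pow]
  rw [mul_comm]
  refine mul_le_mul (sq_le_sq' (abs_le.1 (hφ z)).1 (abs_le.1 (hφ z)).2) ?_
    (sq_nonneg _) (sq_nonneg _)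
  simpa only [add_sub_cancel_left] using
    smoothTransition_log_div_sq_le hL (le_add_of_nonneg_right (h0 z)) hN

section LogCutoff

variable {E : Type*} [NormedAddCommGroup E] [NormedSpace ℝ E] {ψ h : E → ℝ} {K : Set E} {N : ℝ}

theorem IsCutoffNear.mul_smoothTransition_log (hψ : IsCutoffNear ψ K) (hh : ContDiff ℝ 1 h)
    (hpos : ∀ z, 0 < h z) (hN : 0 < N) (hK : ∀ᶠ z in 𝓝ˢ K, Real.exp N ≤ h z) :
    IsCutoffNear (fun z ↦ ψ z * Real.smoothTransition (Real.log (h z) / N)) K where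
  contDiff := hψ.contDiff.mul
    (Real.smoothTransition.contDiff.comp ((hh.log fun z ↦ (hpos z).ne').div_const N))
  hasCompactSupport := hψ.hasCompactSupport.mul_right
  nonneg z := mul_nonneg (hψ.nonneg z) (Real.smoothTransition.nonneg _)
  le_one z := mul_le_one₀ (hψ.le_one z) (Real.smoothTransition.nonneg _)
    (Real.smoothTransition.le_one _)
  eventually_eq_one := by
    filter_upwards [hψ.eventually_eq_one, hK] with z hψz hz
    rw [hψz, one_mul]
    refine Real.smoothTransition.one_of_one_le ((one_le_div hN).2 ?_)
    rwa [Real.le_log_iff_exp_le (hpos z)]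

theorem norm_fderiv_mul_smoothTransition_log_le {L : ℝ≥0}
    (hL : LipschitzWith L Real.smoothTransition) (hψ : IsCutoffNear ψ K) (hh : Differentiable ℝ h)
    (hpos : ∀ z, 0 < h z) (hN : 0 < N) (z : E) :
    ‖fderiv ℝ (fun z ↦ ψ z * Real.smoothTransition (Real.log (h z) / N)) z‖ ≤
      Real.smoothTransition (Real.log (h z) / N) * ‖fderiv ℝ ψ z‖ +
        L / N * (ψ z * ‖fderiv ℝ (fun z ↦ Real.log (h z)) z‖) := by
  have hψz := (hψ.contDiff.differentiable one_ne_zero z).hasFDerivAt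
  have hlog := ((hh z).log (hpos z).ne').hasFDerivAt.mul_const N⁻¹
  have hθ : HasFDerivAt (fun z ↦ Real.smoothTransition (Real.log (h z) * N⁻¹))
      (deriv Real.smoothTransition (Real.log (h z) * N⁻¹) •
        N⁻¹ • fderiv ℝ (fun z ↦ Real.log (h z)) z) z :=
    ((Real.smoothTransition.contDiff (n := 1)).differentiable one_ne_zero
      (Real.log (h z) * N⁻¹)).hasDerivAt.comp_hasFDerivAt (f := fun z ↦ Real.log (h z) * N⁻¹)
      z hlog
  have hderiv : ‖deriv Real.smoothTransition (Real.log (h z) * N⁻¹)‖ ≤ L :=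
    norm_deriv_le_of_lipschitz hL
  simp only [div_eq_mul_inv]
  rw [(hψz.fun_mul hθ).fderiv, add_comm]
  refine (norm_add_le _ _).trans (add_le_add ?_ ?_)
  · rw [norm_smul, Real.norm_of_nonneg (Real.smoothTransition.nonneg _)]
  · rw [norm_smul, norm_smul, norm_smul, Real.norm_of_nonneg (hψ.nonneg z),
      Real.norm_of_nonneg (inv_nonneg.2 hN.le)]
    calc ψ z * (‖deriv Real.smoothTransition (Real.log (h z) * N⁻¹)‖ *
          (N⁻¹ * ‖fderiv ℝ (fun z ↦ Real.log (h z)) z‖))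
        ≤ ψ z * (L * (N⁻¹ * ‖fderiv ℝ (fun z ↦ Real.log (h z)) z‖)) := by
          have := hψ.nonneg z
          gcongr
      _ = L * N⁻¹ * (ψ z * ‖fderiv ℝ (fun z ↦ Real.log (h z)) z‖) := by ring

end LogCutoff

section InnerProductSpace

variable {E : Type*} [NormedAddCommGroup E] [InnerProductSpace ℝ E] [FiniteDimensional ℝ E]

theorem integral_norm_fderiv_mul_smoothTransition_log_sq_le [MeasurableSpace E] [BorelSpace E]
    {μ : Measure E} [μ.IsAddHaarMeasure] {ψ h : E → ℝ} {K : Set E} {N A : ℝ} {L : ℝ≥0}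
    (hL : LipschitzWith L Real.smoothTransition) (hψ : IsCutoffNear ψ K)
    (hA : ∀ z, ‖fderiv ℝ ψ z‖ ≤ A) (hh : ContDiff ℝ 2 h) (h0 : ∀ z, 0 ≤ h z)
    (hint : Integrable h μ) (hN : 0 < N)
    (hsuper : ∀ z, ψ z ≠ 0 → Laplacian.laplacian (fun z ↦ 1 + h z) z ≤ 0) :
    ∫ z, ‖fderiv ℝ (fun z ↦ ψ z * Real.smoothTransition (Real.log (1 + h z) / N)) z‖ ^ 2 ∂μ ≤
      2 * (A ^ 2 * (L / N * ∫ z, h z ∂μ)) +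
        8 * ((L / N) ^ 2 * ∫ z, ‖fderiv ℝ ψ z‖ ^ 2 ∂μ) := by
  have hpos : ∀ z, 0 < 1 + h z := fun z ↦ add_pos_of_pos_of_nonneg one_pos (h0 z)
  have hh' : ContDiff ℝ 2 fun z ↦ 1 + h z := contDiff_const.add hh
  have hv : ContDiff ℝ 2 fun z ↦ Real.log (1 + h z) := hh'.log fun z ↦ (hpos z).ne'
  set v := fun z ↦ Real.log (1 + h z) with hv_def
  have hv_cont := hv.continuous
  have hv'_cont := hv.continuous_fderiv two_ne_zero
  have hψ_cont := hψ.contDiff.continuous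
  have hψ'_cont := hψ.contDiff.continuous_fderiv one_ne_zero
  have hcaccioppoli : ∫ z, ψ z ^ 2 * ‖fderiv ℝ v z‖ ^ 2 ∂μ ≤ 4 * ∫ z, ‖fderiv ℝ ψ z‖ ^ 2 ∂μ := by
    refine integral_sq_mul_norm_fderiv_sq_le hv hψ.contDiff hψ.hasCompactSupport fun z hz ↦ ?_
    rw [hv_def, laplacian_log hh' hpos]
    linarith [div_nonpos_of_nonpos_of_nonneg (hsuper z hz) (hpos z).le]
  have hf : Continuous fun z ↦ (Real.smoothTransition (v z / N) * ‖fderiv ℝ ψ z‖) ^ 2 :=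
    ((Real.smoothTransition.continuous.comp (hv_cont.div_const N)).mul hψ'_cont.norm).pow 2
  have hf_supp : HasCompactSupport fun z ↦
      (Real.smoothTransition (v z / N) * ‖fderiv ℝ ψ z‖) ^ 2 :=
    (hψ.hasCompactSupport.fderiv ℝ).mono fun z hz hz' ↦ hz (by simp [hz'])
  have hg : Continuous fun z ↦ (L / N * (ψ z * ‖fderiv ℝ v z‖)) ^ 2 := by fun_prop
  have hg_supp : HasCompactSupport fun z ↦ (L / N * (ψ z * ‖fderiv ℝ v z‖)) ^ 2 :=
    hψ.hasCompactSupport.mono fun z hz hz' ↦ hz (by simp [hz'])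
  have hsq := integral_sq_le_of_le_add (hf.integrable_of_hasCompactSupport hf_supp (μ := μ))
    (hg.integrable_of_hasCompactSupport hg_supp) (fun _ ↦ norm_nonneg _)
    (norm_fderiv_mul_smoothTransition_log_le hL hψ (hh'.differentiable two_ne_zero) hpos hN)
  have hgrad := integral_smoothTransition_log_mul_sq_le hL
    (fun z ↦ (norm_norm (fderiv ℝ ψ z)).trans_le (hA z)) h0 hint hN
  simp only [mul_pow _ (_ * _), mul_pow (ψ _), integral_const_mul] at hsq
  linarith [mul_le_mul_of_nonneg_left hcaccioppoli (sq_nonneg ((L : ℝ) / N))]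

theorem HasZeroCapacity.of_superharmonic [MeasureSpace E] [BorelSpace E]
    [(volume : Measure E).IsAddHaarMeasure] {ψ : E → ℝ} {K : Set E} (hψ : IsCutoffNear ψ K) {C : ℝ}
    (hsuper : ∀ m : ℝ, ∃ h : E → ℝ, ContDiff ℝ 2 h ∧ (∀ z, 0 ≤ h z) ∧ Integrable h ∧
      ∫ z, h z ≤ C ∧ (∀ z, ψ z ≠ 0 → Laplacian.laplacian h z ≤ 0) ∧ ∀ᶠ z in 𝓝ˢ K, m ≤ h z) :
    HasZeroCapacity K := by
  obtain ⟨L, hL⟩ := exists_lipschitzWith_smoothTransition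
  obtain ⟨A, hA⟩ := (hψ.contDiff.continuous_fderiv one_ne_zero).bounded_above_of_compact_support
    (hψ.hasCompactSupport.fderiv ℝ)
  intro ε hε
  have hlim : Tendsto (fun N : ℝ ↦ (L : ℝ) / N) atTop (𝓝 0) :=
    tendsto_const_nhds.div_atTop tendsto_id
  have hlim₁ : Tendsto (fun N : ℝ ↦ 1 ^ 2 * (L / N * C)) atTop (𝓝 0) := by
    simpa only [zero_mul, mul_zero] using (hlim.mul_const C).const_mul (1 ^ 2)
  have hlim₂ : Tendsto (fun N : ℝ ↦ 2 * (A ^ 2 * (L / N * C)) +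
      8 * ((L / N) ^ 2 * ∫ z, ‖fderiv ℝ ψ z‖ ^ 2)) atTop (𝓝 0) := by
    simpa using (((hlim.mul_const C).const_mul (A ^ 2)).const_mul 2).add
      (((hlim.pow 2).mul_const (∫ z, ‖fderiv ℝ ψ z‖ ^ 2)).const_mul 8)
  obtain ⟨N, hN₁, hN₂, hN⟩ := ((hlim₁.eventually_le_const hε).and
    ((hlim₂.eventually_le_const hε).and (eventually_gt_atTop 0))).exists
  obtain ⟨h, hh, h0, hint, hC, hΔ, hK⟩ := hsuper (Real.exp N - 1)
  have hfderiv : fderiv ℝ (fun z ↦ 1 + h z) = fderiv ℝ h := funext fun _ ↦ fderiv_const_add _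
  have hΔ' : ∀ z, ψ z ≠ 0 → Laplacian.laplacian (fun z ↦ 1 + h z) z ≤ 0 := by
    simpa only [laplacian_eq_sum_fderiv_fderiv (stdOrthonormalBasis ℝ E), hfderiv] using hΔ
  refine ⟨_, hψ.mul_smoothTransition_log (contDiff_const.add (hh.of_le one_le_two))
    (fun z ↦ add_pos_of_pos_of_nonneg one_pos (h0 z)) hN
    (hK.mono fun z hz ↦ sub_le_iff_le_add'.1 hz), ?_, ?_⟩
  · have hψ1 : ∀ z, ‖ψ z‖ ≤ 1 := fun z ↦
      (Real.norm_of_nonneg (hψ.nonneg z)).trans_le (hψ.le_one z)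
    simp only [mul_comm (ψ _)]
    refine (integral_smoothTransition_log_mul_sq_le hL hψ1 h0 hint hN).trans (le_trans ?_ hN₁)
    gcongr
  · refine (integral_norm_fderiv_mul_smoothTransition_log_sq_le hL hψ hA hh h0 hint hN hΔ').trans
      (le_trans ?_ hN₂)
    gcongr

end InnerProductSpace

theorem taylor_two_isLittleO {E F : Type*} [NormedAddCommGroup E] [NormedSpace ℝ E]
    [NormedAddCommGroup F] [NormedSpace ℝ F] {f : E → F} {c : E} (hf : ContDiff ℝ 2 f) :
    (fun z ↦ f z - f c - fderiv ℝ f c (z - c) -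
      (2⁻¹ : ℝ) • fderiv ℝ (fderiv ℝ f) c (z - c) (z - c)) =o[𝓝 c] fun z ↦ ‖z - c‖ ^ 2 := by
  have hf1 : Differentiable ℝ f := hf.differentiable two_ne_zero
  have hf2 : HasFDerivAt (fderiv ℝ f) (fderiv ℝ (fderiv ℝ f) c) c :=
    ((hf.fderiv_right (m := 1) one_add_one_eq_two.le).differentiable one_ne_zero c).hasFDerivAt
  have hsymm : IsSymmSndFDerivAt ℝ f c := hf.contDiffAt.isSymmSndFDerivAt (by simp)
  set Q := fderiv ℝ (fderiv ℝ f) c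
  set q := fun z ↦ f z - f c - fderiv ℝ f c (z - c) - (2⁻¹ : ℝ) • Q (z - c) (z - c) with hq
  have hq' : ∀ z, HasFDerivAt q (fderiv ℝ f z - fderiv ℝ f c - Q (z - c)) z := fun z ↦ by
    have hsub := (hasFDerivAt_id (𝕜 := ℝ) z).sub_const c
    have hlin := (fderiv ℝ f c).hasFDerivAt.comp z hsub
    have hquad := ((Q.hasFDerivAt.comp z hsub).clm_apply hsub).const_smul (2⁻¹ : ℝ)
    refine ((((hf1 z).hasFDerivAt.sub_const (f c)).sub hlin).sub hquad).congr_fderiv ?_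
    ext w
    have hw : Q w (z - c) = Q (z - c) w := hsymm w (z - c)
    simp only [ContinuousLinearMap.comp_id, id_eq, Function.comp_apply, sub_apply, add_apply,
      smul_apply, ContinuousLinearMap.flip_apply, hw, sub_right_inj]
    rw [← two_smul ℝ, inv_smul_smul₀ two_ne_zero]
  refine Asymptotics.isLittleO_iff.2 fun ε hε ↦ ?_
  obtain ⟨η, hη, hball⟩ := Metric.eventually_nhds_iff_ball.1 (hf2.isLittleO.def hε)
  filter_upwards [ball_mem_nhds c hη] with z hz
  have hbound : ∀ w ∈ closedBall c ‖z - c‖,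
      ‖fderiv ℝ f w - fderiv ℝ f c - Q (w - c)‖ ≤ ε * ‖z - c‖ := fun w hw ↦ by
    rw [mem_closedBall, dist_eq_norm] at hw
    refine (hball w ?_).trans (by gcongr)
    rw [mem_ball, dist_eq_norm] at hz ⊢
    exact hw.trans_lt hz
  have hmvt := (convex_closedBall c ‖z - c‖).norm_image_sub_le_of_norm_hasFDerivWithin_le
    (fun w _ ↦ (hq' w).hasFDerivWithinAt) hbound (mem_closedBall_self (norm_nonneg _))
    (by rw [mem_closedBall, dist_eq_norm])
  rw [norm_pow, norm_norm, sq, ← mul_assoc]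
  simpa [hq] using hmvt

section CircleAverage

variable {F : Type*} [NormedAddCommGroup F] [NormedSpace ℝ F]

theorem circleAverage_comp_I_mul (f : ℂ → F) (c : ℂ) (R : ℝ) :
    Real.circleAverage (fun z ↦ f (c + Complex.I * (z - c))) c R = Real.circleAverage f c R := by
  rw [Real.circleAverage_eq_integral_add (Real.pi / 2) (f := f), Real.circleAverage_def]
  congr! 4 with θ
  simp only [circleMap, Complex.ofReal_add, add_mul, Complex.exp_add]
  simp only [Complex.ofReal_div, Complex.ofReal_ofNat, Complex.exp_pi_div_two_mul_I]
  ring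

theorem circleAverage_clm_sub_center (L : ℂ →L[ℝ] F) (c : ℂ) (R : ℝ) :
    Real.circleAverage (fun z ↦ L (z - c)) c R = 0 := by
  have h₁ := circleAverage_comp_I_mul (fun z ↦ L (z - c)) c R
  have h₂ := circleAverage_comp_I_mul (fun z ↦ L (Complex.I * (z - c))) c R
  simp only [add_sub_cancel_left, ← mul_assoc, Complex.I_mul_I, neg_one_mul, map_neg] at h₁ h₂
  rw [h₁] at h₂
  have hneg : Real.circleAverage (fun z ↦ -L (z - c)) c R =
      -Real.circleAverage (fun z ↦ L (z - c)) c R := by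
    simp only [Real.circleAverage_def, intervalIntegral.integral_neg, smul_neg]
  rw [hneg] at h₂
  rwa [neg_eq_iff_add_eq_zero, ← two_smul ℝ, smul_eq_zero_iff_right two_ne_zero] at h₂

theorem circleAverage_clm_clm_sub_center [CompleteSpace F] (Q : ℂ →L[ℝ] ℂ →L[ℝ] F) (c : ℂ)
    (R : ℝ) :
    Real.circleAverage (fun z ↦ Q (z - c) (z - c)) c R =
      (R ^ 2 / 2) • (Q 1 1 + Q Complex.I Complex.I) := by
  have hrot := circleAverage_comp_I_mul (fun z ↦ Q (z - c) (z - c)) c R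
  simp only [add_sub_cancel_left] at hrot
  have hQ : ∀ w, Q w w + Q (Complex.I * w) (Complex.I * w) =
      ‖w‖ ^ 2 • (Q 1 1 + Q Complex.I Complex.I) := fun w ↦ by
    have hw : w = w.re • (1 : ℂ) + w.im • Complex.I := by simp
    have hIw : Complex.I * w = w.re • Complex.I - w.im • (1 : ℂ) := by
      apply Complex.ext <;> simp
    rw [hIw, ← Complex.normSq_eq_norm_sq, Complex.normSq_apply]
    nth_rw 1 2 [hw]
    simp only [map_add, map_sub, map_smul, add_apply, sub_apply, smul_apply]
    module
  have hci : ∀ {f : ℂ → F}, Continuous f → CircleIntegrable f c R := fun hf ↦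
    hf.continuousOn.circleIntegrable'
  have hsum : (2 : ℝ) • Real.circleAverage (fun z ↦ Q (z - c) (z - c)) c R =
      R ^ 2 • (Q 1 1 + Q Complex.I Complex.I) := by
    calc (2 : ℝ) • Real.circleAverage (fun z ↦ Q (z - c) (z - c)) c R
        = Real.circleAverage (fun z ↦ Q (z - c) (z - c) +
            Q (Complex.I * (z - c)) (Complex.I * (z - c))) c R := by
          rw [Real.circleAverage_fun_add (hci (by fun_prop)) (hci (by fun_prop)), hrot, two_smul]
      _ = Real.circleAverage (fun _ ↦ R ^ 2 • (Q 1 1 + Q Complex.I Complex.I)) c R := by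
          refine Real.circleAverage_congr_sphere fun z hz ↦ ?_
          rw [mem_sphere, dist_eq_norm] at hz
          simp only [hQ, hz, sq_abs]
      _ = _ := Real.circleAverage_const _ _ _
  rw [div_eq_inv_mul, mul_smul, ← hsum, inv_smul_smul₀ two_ne_zero]

theorem isLittleO_circleAverage {q : ℂ → ℝ} {c : ℂ} (hq : Continuous q)
    (hqc : q =o[𝓝 c] fun z ↦ ‖z - c‖ ^ 2) :
    (fun ρ ↦ Real.circleAverage q c ρ) =o[𝓝 0] fun ρ : ℝ ↦ ρ ^ 2 := by
  refine Asymptotics.isLittleO_iff.2 fun ε hε ↦ ?_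
  obtain ⟨η, hη, hball⟩ := Metric.eventually_nhds_iff_ball.1 (hqc.def hε)
  filter_upwards [ball_mem_nhds 0 hη] with ρ hρ
  have hsphere : ∀ z ∈ sphere c |ρ|, |q z| ≤ ε * ‖ρ ^ 2‖ := fun z hz ↦ by
    have hzη : z ∈ ball c η := by
      rwa [mem_ball, mem_sphere.1 hz, ← Real.norm_eq_abs, ← dist_zero_right]
    simpa only [Real.norm_eq_abs (q z), ← dist_eq_norm, mem_sphere.1 hz, sq_abs] using hball z hzη
  rw [Real.norm_eq_abs]
  exact Real.abs_circleAverage_le_circleAverage_abs.trans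
    (Real.circleAverage_mono_on_of_le_circle hq.abs.continuousOn.circleIntegrable' hsphere)

theorem tendsto_circleAverage_sub_div_sq {h : ℂ → ℝ} (hh : ContDiff ℝ 2 h) (c : ℂ) :
    Tendsto (fun ρ ↦ (Real.circleAverage h c ρ - h c) / ρ ^ 2) (𝓝[≠] 0)
      (𝓝 (Laplacian.laplacian h c / 4)) := by
  set q := fun z ↦ h z - h c - fderiv ℝ h c (z - c) -
      (2⁻¹ : ℝ) • fderiv ℝ (fderiv ℝ h) c (z - c) (z - c)
  have hci : ∀ {f : ℂ → ℝ} {ρ : ℝ}, Continuous f → CircleIntegrable f c ρ := fun hf ↦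
    hf.continuousOn.circleIntegrable'
  have hq_cont : Continuous q := by
    have := hh.continuous
    fun_prop
  have hmean : ∀ ρ : ℝ, Real.circleAverage q c ρ =
      Real.circleAverage h c ρ - h c - ρ ^ 2 * (Laplacian.laplacian h c / 4) := fun ρ ↦ by
    have := hh.continuous
    rw [Real.circleAverage_fun_sub (hci (by fun_prop)) (hci (by fun_prop)),
      Real.circleAverage_fun_sub (hci (by fun_prop)) (hci (by fun_prop)),
      Real.circleAverage_fun_sub (hci (by fun_prop)) (hci (by fun_prop)), Real.circleAverage_const,
      circleAverage_clm_sub_center, Real.circleAverage_fun_smul, circleAverage_clm_clm_sub_center,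
      laplacian_eq_sum_fderiv_fderiv Complex.orthonormalBasisOneI]
    simp
    ring
  have hlittle := isLittleO_circleAverage hq_cont (taylor_two_isLittleO hh)
  have hlim := (hlittle.mono (nhdsWithin_le_nhds (s := {0}ᶜ))).tendsto_div_nhds_zero.add_const
    (Laplacian.laplacian h c / 4)
  rw [zero_add] at hlim
  refine hlim.congr' ?_
  filter_upwards [self_mem_nhdsWithin] with ρ (hρ : ρ ≠ 0)
  rw [hmean]
  field_simp
  ring

theorem laplacian_nonpos_of_circleAverage_le {h : ℂ → ℝ} (hh : ContDiff ℝ 2 h) {c : ℂ}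
    (hmean : ∀ᶠ ρ in 𝓝[>] 0, Real.circleAverage h c ρ ≤ h c) : Laplacian.laplacian h c ≤ 0 := by
  have hlim := (tendsto_circleAverage_sub_div_sq hh c).mono_left (nhdsGT_le_nhdsNE 0)
  have := le_of_tendsto hlim (hmean.mono fun ρ hρ ↦
    div_nonpos_of_nonpos_of_nonneg (sub_nonpos.2 hρ) (sq_nonneg ρ))
  linarith

end CircleAverage

theorem le_normed_convolution {G : Type*} [NormedAddCommGroup G] [NormedSpace ℝ G]
    [HasContDiffBump G] [FiniteDimensional ℝ G] [MeasurableSpace G] [BorelSpace G] {μ : Measure G}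
    [μ.IsAddHaarMeasure] (φ : ContDiffBump (0 : G)) {g : G → ℝ} {x : G} {m : ℝ}
    (hg : LocallyIntegrable g μ) (hm : ∀ y ∈ ball x φ.rOut, m ≤ g y) :
    m ≤ convolution (φ.normed μ) g (.lsmul ℝ ℝ) μ x := by
  have hconv := (φ.hasCompactSupport_normed (μ := μ)).convolutionExists_left (.lsmul ℝ ℝ)
    φ.continuous_normed hg x
  calc m = ∫ t, φ.normed μ t * m ∂μ := by rw [integral_mul_const, φ.integral_normed, one_mul]
    _ ≤ convolution (φ.normed μ) g (.lsmul ℝ ℝ) μ x := by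
      refine integral_mono (φ.integrable_normed.mul_const m) hconv fun t ↦ ?_
      rcases eq_or_ne (φ.normed μ t) 0 with ht | ht
      · simp [ht]
      · have htφ : t ∈ ball 0 φ.rOut := φ.support_normed_eq (μ := μ) ▸ ht
        refine mul_le_mul_of_nonneg_left (hm _ ?_) (φ.nonneg_normed t)
        simpa [dist_eq_norm] using htφ

section CircleAverage

variable {k G : ℂ → ℝ} {b : ℝ}

theorem circleAverage_convolution (hk : Integrable k) (hG : Measurable G)
    (hGb : ∀ z, ‖G z‖ ≤ b) (c : ℂ) (ρ : ℝ) :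
    Real.circleAverage (convolution k G (.lsmul ℝ ℝ) volume) c ρ =
      convolution k (fun z ↦ Real.circleAverage G z ρ) (.lsmul ℝ ℝ) volume c := by
  have hmeas : AEStronglyMeasurable (fun p : ℝ × ℂ ↦ k p.2 * G (circleMap c ρ p.1 - p.2))
      ((volume.restrict (uIoc 0 (2 * Real.pi))).prod volume) := by
    refine hk.aestronglyMeasurable.comp_snd.mul ?_
    exact (hG.comp (((continuous_circleMap c ρ).measurable.comp measurable_fst).sub
      measurable_snd)).aestronglyMeasurable
  have : IsFiniteMeasure (volume.restrict (uIoc 0 (2 * Real.pi))) :=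
    inferInstanceAs (IsFiniteMeasure (volume.restrict (Ioc _ _)))
  have hint : Integrable (fun p : ℝ × ℂ ↦ k p.2 * G (circleMap c ρ p.1 - p.2))
      ((volume.restrict (uIoc 0 (2 * Real.pi))).prod volume) := by
    refine ((hk.norm.mul_const b).comp_snd _).mono' hmeas (ae_of_all _ fun p ↦ ?_)
    rw [norm_mul]
    exact mul_le_mul_of_nonneg_left (hGb _) (norm_nonneg _)
  simp only [Real.circleAverage_def, convolution_def, ContinuousLinearMap.lsmul_apply, smul_eq_mul]
  rw [intervalIntegral_integral_swap hint, ← integral_const_mul]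
  refine integral_congr_ae (ae_of_all _ fun t ↦ ?_)
  simp only [intervalIntegral.integral_const_mul, circleMap, add_sub_right_comm c]
  ring

theorem circleAverage_convolution_le (hk : Integrable k) (hk0 : ∀ t, 0 ≤ k t) (hG : Measurable G)
    (hG0 : ∀ z, 0 ≤ G z) (hGb : ∀ z, G z ≤ b) {c : ℂ} {ρ : ℝ}
    (hmean : ∀ t, k t ≠ 0 → Real.circleAverage G (c - t) ρ ≤ G (c - t)) :
    Real.circleAverage (convolution k G (.lsmul ℝ ℝ) volume) c ρ ≤
      convolution k G (.lsmul ℝ ℝ) volume c := by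
  have hGb' : ∀ z, ‖G z‖ ≤ b := fun z ↦ (Real.norm_of_nonneg (hG0 z)).trans_le (hGb z)
  rw [circleAverage_convolution hk hG hGb']
  refine integral_mono_of_nonneg (ae_of_all _ fun t ↦ mul_nonneg (hk0 t) ?_) ?_
    (ae_of_all _ fun t ↦ ?_)
  · exact Real.circleAverage_nonneg_of_nonneg fun z _ ↦ hG0 z
  · exact hk.mul_bdd (c := b) (hG.comp (measurable_const.sub measurable_id)).aestronglyMeasurable
      (ae_of_all _ fun t ↦ hGb' _)
  · rcases eq_or_ne (k t) 0 with ht | ht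
    · simp [ht]
    · exact mul_le_mul_of_nonneg_left (hmean t ht) (hk0 t)

theorem exists_contDiff_superharmonic (hG : Measurable G) (hGi : Integrable G)
    (hG0 : ∀ z, 0 ≤ G z) (hGb : ∀ z, G z ≤ b) {B : Set ℂ} (hB : IsOpen B)
    (hmean : ∀ z ρ, 0 < ρ → closedBall z ρ ⊆ B → Real.circleAverage G z ρ ≤ G z) {S K O : Set ℂ}
    (hS : IsCompact S) (hSB : S ⊆ B) (hK : IsCompact K) (hO : IsOpen O) (hKO : K ⊆ O) {m : ℝ}
    (hm : ∀ z ∈ O, m ≤ G z) :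
    ∃ h : ℂ → ℝ, ContDiff ℝ 2 h ∧ (∀ z, 0 ≤ h z) ∧ Integrable h ∧ ∫ z, h z = ∫ z, G z ∧
      (∀ z ∈ S, Laplacian.laplacian h z ≤ 0) ∧ ∀ᶠ z in 𝓝ˢ K, m ≤ h z := by
  obtain ⟨δ, hδ, hSδ⟩ := hS.exists_thickening_subset_open hB hSB
  obtain ⟨η, hη, hKη⟩ := hK.exists_thickening_subset_open hO hKO
  have hr : 0 < min (δ / 2) (η / 2) := lt_min (half_pos hδ) (half_pos hη)
  let φ : ContDiffBump (0 : ℂ) := ⟨min (δ / 2) (η / 2) / 2, min (δ / 2) (η / 2), half_pos hr,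
    half_lt_self hr⟩
  have hφδ : φ.rOut ≤ δ / 2 := min_le_left _ _
  have hφη : φ.rOut ≤ η / 2 := min_le_right _ _
  have hφi : Integrable (φ.normed volume) := φ.integrable_normed
  have hh : ContDiff ℝ 2 (convolution (φ.normed volume) G (.lsmul ℝ ℝ) volume) :=
    φ.hasCompactSupport_normed.contDiff_convolution_left _ φ.contDiff_normed hGi.locallyIntegrable
  refine ⟨_, hh, fun z ↦ ?_, hφi.integrable_convolution (.lsmul ℝ ℝ) hGi, ?_, fun z hz ↦ ?_, ?_⟩
  · exact le_normed_convolution φ hGi.locallyIntegrable fun y _ ↦ hG0 y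
  · rw [integral_convolution _ hφi hGi]
    simp [φ.integral_normed]
  · refine laplacian_nonpos_of_circleAverage_le hh ?_
    filter_upwards [Ioo_mem_nhdsGT (half_pos hδ)] with ρ hρ
    refine circleAverage_convolution_le hφi (φ.nonneg_normed ·) hG hG0 hGb fun t ht ↦ ?_
    have htφ : ‖t‖ < φ.rOut :=
      mem_ball_zero_iff.1 (φ.support_normed_eq (μ := volume) ▸ ht : t ∈ ball 0 φ.rOut)
    refine hmean _ _ hρ.1 (Subset.trans (fun w hw ↦ ?_) hSδ)
    refine mem_thickening_iff.2 ⟨z, hz, ?_⟩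
    have hzt : dist (z - t) z = ‖t‖ := by simp
    linarith [dist_triangle w (z - t) z, mem_closedBall.1 hw, hρ.2]
  · filter_upwards [isOpen_thickening.mem_nhdsSet.2 (self_subset_thickening (half_pos hη) K)]
      with z hz
    refine le_normed_convolution φ hGi.locallyIntegrable fun y hy ↦ hm _ (hKη ?_)
    obtain ⟨x, hx, hzx⟩ := mem_thickening_iff.1 hz
    refine mem_thickening_iff.2 ⟨x, hx, ?_⟩
    linarith [dist_triangle y z x, mem_ball.1 hy]

end CircleAverage

/-- The function `M - max u (-n)` on `B`, extended by zero. For `u ≤ M` subharmonic near `B`, it is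
bounded, nonnegative and superharmonic on `B`, and it is large where `u` is close to `-∞`. -/
noncomputable def truncDeficit (u : ℂ → EReal) (B : Set ℂ) (M : ℝ) (n : ℕ) : ℂ → ℝ :=
  B.indicator fun z ↦ M - (max (u z) (-(n : ℝ) : EReal)).toReal

theorem truncDeficit_of_mem {u : ℂ → EReal} {B : Set ℂ} {z : ℂ} (hz : z ∈ B) (M : ℝ) (n : ℕ) :
    truncDeficit u B M n z = M - (max (u z) (-(n : ℝ) : EReal)).toReal :=
  indicator_of_mem hz _

theorem truncDeficit_of_notMem {u : ℂ → EReal} {B : Set ℂ} {z : ℂ} (hz : z ∉ B) (M : ℝ) (n : ℕ) :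
    truncDeficit u B M n z = 0 :=
  indicator_of_notMem hz _

theorem coe_toReal_max_neg {x : EReal} (hx : x < ⊤) (a : ℝ) :
    ((max x (-a : EReal)).toReal : EReal) = max x (-a : EReal) := by
  rw [← EReal.coe_neg]
  exact EReal.coe_toReal (max_lt hx (EReal.coe_lt_top _)).ne
    (lt_max_of_lt_right (EReal.bot_lt_coe _)).ne'

theorem toReal_le_toReal_max {x : EReal} (hx : x ≠ ⊥) (hx' : x < ⊤) (a : ℝ) :
    x.toReal ≤ (max x (-a : EReal)).toReal := by
  rw [← EReal.coe_le_coe_iff, coe_toReal_max_neg hx', EReal.coe_toReal hx'.ne hx]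
  exact le_max_left _ _

theorem le_truncDeficit {u : ℂ → EReal} {B : Set ℂ} {M m : ℝ} {n : ℕ} {z : ℂ} (hz : z ∈ B)
    (hu : u z < ((M - m : ℝ) : EReal)) (hn : m - M ≤ n) : m ≤ truncDeficit u B M n z := by
  have hmax : max (u z) (-(n : ℝ) : EReal) ≤ ((M - m : ℝ) : EReal) := by
    rw [← EReal.coe_neg]
    exact max_le hu.le (EReal.coe_le_coe_iff.2 (by linarith))
  rw [truncDeficit_of_mem hz]
  rw [← coe_toReal_max_neg (hu.trans (EReal.coe_lt_top _)), EReal.coe_le_coe_iff] at hmax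
  linarith

namespace SubharmonicOn

variable {u : ℂ → EReal} {U B : Set ℂ} {M : ℝ} {n : ℕ}

theorem exists_le_coe (hu : SubharmonicOn u U) {K : Set ℂ} (hK : IsCompact K) (hKU : K ⊆ U) :
    ∃ M : ℝ, 0 ≤ M ∧ ∀ z ∈ K, u z ≤ M := by
  rcases K.eq_empty_or_nonempty with rfl | hne
  · exact ⟨0, le_rfl, by simp⟩
  obtain ⟨a, ha, hmax⟩ := (hu.1.mono hKU).exists_isMaxOn hne hK
  refine ⟨max (u a).toReal 0, le_max_right _ _, fun z hz ↦ (hmax hz).trans ?_⟩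
  exact (EReal.le_coe_toReal (hu.2.1 a (hKU ha)).ne).trans
    (EReal.coe_le_coe_iff.2 (le_max_left _ _))

theorem measurable_truncDeficit (hu : UpperSemicontinuousOn u B) (hB : MeasurableSet B) :
    Measurable (truncDeficit u B M n) := by
  have hmeas : Measurable fun z : B ↦ u z := (upperSemicontinuousOn_iff_restrict.2 hu).measurable
  refine measurable_of_restrict_of_restrict_compl hB ?_ ?_
  · have : B.domRestrict (truncDeficit u B M n) =
        fun z : B ↦ M - (max (u z) (-(n : ℝ) : EReal)).toReal :=
      funext fun z ↦ truncDeficit_of_mem z.2 M n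
    rw [this]
    exact measurable_const.sub (hmeas.max measurable_const).ereal_toReal
  · have : Bᶜ.domRestrict (truncDeficit u B M n) = fun _ ↦ 0 :=
      funext fun z ↦ truncDeficit_of_notMem z.2 M n
    rw [this]
    exact measurable_const

variable (hu : SubharmonicOn u U) (hBU : B ⊆ U) (hM : 0 ≤ M) (huM : ∀ z ∈ B, u z ≤ M)

include hu hBU hM huM

theorem truncDeficit_mem_Icc (z : ℂ) : truncDeficit u B M n z ∈ Icc 0 (M + n) := by
  by_cases hz : z ∈ B
  · have htop : u z < ⊤ := hu.2.1 z (hBU hz)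
    have hlower : -(n : ℝ) ≤ (max (u z) (-(n : ℝ) : EReal)).toReal := by
      rw [← EReal.coe_le_coe_iff, coe_toReal_max_neg htop, EReal.coe_neg]
      exact le_max_right _ _
    have hupper : (max (u z) (-(n : ℝ) : EReal)).toReal ≤ M := by
      rw [← EReal.coe_le_coe_iff, coe_toReal_max_neg htop, ← EReal.coe_neg]
      exact max_le (huM z hz) (EReal.coe_le_coe_iff.2 ((neg_nonpos.2 n.cast_nonneg).trans hM))
    rw [truncDeficit_of_mem hz]
    constructor <;> linarith
  · rw [truncDeficit_of_notMem hz]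
    exact ⟨le_rfl, by positivity⟩

theorem norm_truncDeficit_le (z : ℂ) : ‖truncDeficit u B M n z‖ ≤ M + n := by
  have hz := truncDeficit_mem_Icc hu hBU hM huM (n := n) z
  rw [Real.norm_of_nonneg hz.1]
  exact hz.2

theorem integrable_truncDeficit (hB : IsOpen B) (hBb : Bornology.IsBounded B) :
    Integrable (truncDeficit u B M n) := by
  have hmeas : Measurable (truncDeficit u B M n) :=
    measurable_truncDeficit (hu.1.mono hBU) hB.measurableSet
  have hint : IntegrableOn (truncDeficit u B M n) B :=
    Measure.integrableOn_of_bounded hBb.measure_lt_top.ne hmeas.aestronglyMeasurable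
      (ae_of_all _ fun z ↦ norm_truncDeficit_le hu hBU hM huM z)
  exact (integrableOn_iff_integrable_of_support_subset support_indicator_subset).1 hint

theorem circleAverage_truncDeficit_le (hB : IsOpen B) {c : ℂ} {ρ : ℝ} (hρ : 0 < ρ)
    (hcρ : closedBall c ρ ⊆ B) :
    Real.circleAverage (truncDeficit u B M n) c ρ ≤ truncDeficit u B M n c := by
  have hc : c ∈ B := hcρ (mem_closedBall_self hρ.le)
  set T : ℂ → ℝ := fun z ↦ (max (u z) (-(n : ℝ) : EReal)).toReal
  have hG : CircleIntegrable (truncDeficit u B M n) c ρ :=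
    intervalIntegrable_const.mono_fun'
      ((measurable_truncDeficit (hu.1.mono hBU) hB.measurableSet).comp
        (continuous_circleMap c ρ).measurable).aestronglyMeasurable
      (ae_of_all _ fun θ ↦ norm_truncDeficit_le hu hBU hM huM _)
  have hT : EqOn T (fun z ↦ M - truncDeficit u B M n z) (sphere c |ρ|) := fun z hz ↦ by
    rw [abs_of_pos hρ] at hz
    simp only [truncDeficit_of_mem (hcρ (sphere_subset_closedBall hz)), sub_sub_cancel, T]
  have havg : Real.circleAverage T c ρ = M - Real.circleAverage (truncDeficit u B M n) c ρ := by
    rw [Real.circleAverage_congr_sphere hT,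
      Real.circleAverage_fun_sub (circleIntegrable_const M c ρ) hG, Real.circleAverage_const]
  have hupper : Real.circleAverage (truncDeficit u B M n) c ρ ≤ M + n :=
    Real.circleAverage_mono_on_of_le_circle hG
      fun z _ ↦ (truncDeficit_mem_Icc hu hBU hM huM z).2
  have hle : T c ≤ Real.circleAverage T c ρ := by
    rw [← EReal.coe_le_coe_iff, coe_toReal_max_neg (hu.2.1 c (hBU hc)), ← EReal.coe_neg]
    refine max_le ((hu.2.2 c (hBU hc) ρ hρ (hcρ.trans hBU)).trans (iInf_le _ n)) ?_
    exact EReal.coe_le_coe_iff.2 (by linarith)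
  rw [truncDeficit_of_mem hc]
  linarith

end SubharmonicOn

namespace SubharmonicOn

variable {u : ℂ → EReal} {U : Set ℂ} {M R : ℝ} {y : ℂ}

theorem integral_truncDeficit_ball_le (hu : SubharmonicOn u U) (hy : u y ≠ ⊥) (hR : 0 < R)
    (hyU : ball y R ⊆ U) (hM : 0 ≤ M) (huM : ∀ z ∈ ball y R, u z ≤ M) (n : ℕ) :
    ∫ z, truncDeficit u (ball y R) M n z ≤ Real.pi * R ^ 2 * (M - (u y).toReal) := by
  have hyR : y ∈ ball y R := mem_ball_self hR
  have hint := integrable_truncDeficit hu hyU hM huM isOpen_ball isBounded_ball (n := n)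
  have hmean : ∀ ρ ∈ Ioo 0 R, Real.circleAverage (truncDeficit u (ball y R) M n) y ρ ≤
      truncDeficit u (ball y R) M n y := fun ρ hρ ↦
    circleAverage_truncDeficit_le hu hyU hM huM isOpen_ball hρ.1 (closedBall_subset_ball hρ.2)
  calc ∫ z, truncDeficit u (ball y R) M n z
      = ∫ z in ball y R, truncDeficit u (ball y R) M n z :=
        (setIntegral_eq_integral_of_forall_compl_eq_zero
          fun z hz ↦ truncDeficit_of_notMem hz M n).symm
    _ ≤ Real.pi * R ^ 2 * truncDeficit u (ball y R) M n y :=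
        setIntegral_ball_le_of_circleAverage_le hR.le hint.integrableOn hmean
    _ ≤ Real.pi * R ^ 2 * (M - (u y).toReal) := by
        rw [truncDeficit_of_mem hyR]
        have := toReal_le_toReal_max hy (hu.2.1 y (hyU hyR)) n
        gcongr

theorem eq_empty_of_eqOn_bot (hu : SubharmonicOn u U) (hy : u y ≠ ⊥) (hR : 0 < R)
    (hyU : closedBall y R ⊆ U) {W : Set ℂ} (hW : IsOpen W) (hWR : W ⊆ ball y R)
    (hbot : ∀ z ∈ W, u z = ⊥) : W = ∅ := by
  obtain ⟨M, hM, huM⟩ := hu.exists_le_coe (isCompact_closedBall y R) hyU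
  replace huM : ∀ z ∈ ball y R, u z ≤ M := fun z hz ↦ huM z (ball_subset_closedBall hz)
  have hyU' : ball y R ⊆ U := ball_subset_closedBall.trans hyU
  have hWtop : volume W ≠ ⊤ := (isBounded_ball.subset hWR).measure_lt_top.ne
  have hle : ∀ n : ℕ, (M + n) * volume.real W ≤ Real.pi * R ^ 2 * (M - (u y).toReal) := by
    intro n
    have hint := integrable_truncDeficit hu hyU' hM huM isOpen_ball isBounded_ball (n := n)
    calc (M + n) * volume.real W = ∫ z in W, truncDeficit u (ball y R) M n z := by
          rw [setIntegral_congr_fun hW.measurableSet (g := fun _ ↦ M + n) fun z hz ↦ by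
            rw [truncDeficit_of_mem (hWR hz), hbot z hz, max_eq_right bot_le, ← EReal.coe_neg,
              EReal.toReal_coe, sub_neg_eq_add],
            setIntegral_const, smul_eq_mul, mul_comm]
      _ ≤ ∫ z, truncDeficit u (ball y R) M n z :=
          setIntegral_le_integral hint
            (ae_of_all _ fun z ↦ (truncDeficit_mem_Icc hu hyU' hM huM z).1)
      _ ≤ _ := hu.integral_truncDeficit_ball_le hy hR hyU' hM huM n
  rw [← hW.measure_eq_zero_iff volume]
  by_contra hne
  have hpos : 0 < volume.real W := ENNReal.toReal_pos hne hWtop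
  obtain ⟨n, hn⟩ := exists_nat_gt (Real.pi * R ^ 2 * (M - (u y).toReal) / volume.real W)
  rw [div_lt_iff₀ hpos] at hn
  nlinarith [hle n, mul_nonneg hM hpos.le]

theorem exists_ne_bot_mem (hu : SubharmonicOn u U) (hU : IsOpen U) (hUc : IsPreconnected U)
    (hne : ∃ z ∈ U, u z ≠ ⊥) {W : Set ℂ} (hW : IsOpen W) (hWU : W ⊆ U) (hWne : W.Nonempty) :
    ∃ z ∈ W, u z ≠ ⊥ := by
  by_contra! hbot
  obtain ⟨x, hx⟩ := hWne
  obtain ⟨z, hz, hzbot⟩ := hne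
  suffices h : U ⊆ {a | ∀ᶠ z in 𝓝 a, u z = ⊥} from hzbot (h hz).self_of_nhds
  refine hUc.subset_of_closure_inter_subset isOpen_setOfPred_eventually_nhds
    ⟨x, hWU hx, (hW.eventually_mem hx).mono hbot⟩ ?_
  rintro a ⟨ha, haU⟩
  obtain ⟨R, hR, haR⟩ := Metric.isOpen_iff.1 hU a haU
  refine eventually_of_mem (ball_mem_nhds a (half_pos (half_pos hR))) fun y hy ↦ ?_
  by_contra hybot
  obtain ⟨b, hb, hab⟩ := Metric.mem_closure_iff.1 ha _ (half_pos (half_pos hR))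
  have hempty : {a | ∀ᶠ z in 𝓝 a, u z = ⊥} ∩ ball y (R / 2) = ∅ :=
    hu.eq_empty_of_eqOn_bot hybot (half_pos hR)
      ((closedBall_subset_ball' (by rw [mem_ball] at hy; linarith)).trans haR)
      (isOpen_setOfPred_eventually_nhds.inter isOpen_ball) inter_subset_right
      fun z hz ↦ hz.1.self_of_nhds
  refine (hempty ▸ ⟨hb, ?_⟩ : b ∈ (∅ : Set ℂ)).elim
  rw [mem_ball] at hy ⊢
  linarith [dist_triangle b a y, dist_comm b a, dist_comm y a]

theorem hasZeroCapacity_of_eqOn_bot (hu : SubharmonicOn u U) (hy : u y ≠ ⊥) (hR : 0 < R)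
    (hyU : closedBall y (3 * R) ⊆ U) {K : Set ℂ} (hK : IsCompact K) (hKR : K ⊆ ball y R)
    (hbot : ∀ z ∈ K, u z = ⊥) : HasZeroCapacity K := by
  obtain ⟨M, hM, huM⟩ := hu.exists_le_coe (isCompact_closedBall y (3 * R)) hyU
  set B : Set ℂ := ball y (3 * R)
  replace huM : ∀ z ∈ B, u z ≤ M := fun z hz ↦ huM z (ball_subset_closedBall hz)
  have hBU : B ⊆ U := ball_subset_closedBall.trans hyU
  let ψ : ContDiffBump y := ⟨R, 2 * R, hR, by linarith⟩
  have hψ : IsCutoffNear ψ K :=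
    ⟨ψ.contDiff, ψ.hasCompactSupport, fun _ ↦ ψ.nonneg, fun _ ↦ ψ.le_one,
      eventually_of_mem (isOpen_ball.mem_nhdsSet.2 hKR)
        fun z hz ↦ ψ.one_of_mem_closedBall (ball_subset_closedBall hz)⟩
  have hψsupp : ∀ z, ψ z ≠ 0 → z ∈ closedBall y (2 * R) := fun z hz ↦
    ball_subset_closedBall (ψ.support_eq ▸ hz)
  refine .of_superharmonic hψ (C := Real.pi * (3 * R) ^ 2 * (M - (u y).toReal)) fun m ↦ ?_
  obtain ⟨n, hn⟩ := exists_nat_ge (m - M)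
  have hO : IsOpen (B ∩ u ⁻¹' Iio ((M - m : ℝ) : EReal)) := by
    obtain ⟨V, hV, hVB⟩ := upperSemicontinuousOn_iff_preimage_Iio.1 (hu.1.mono hBU) _
    exact hVB ▸ isOpen_ball.inter hV
  obtain ⟨h, hh, hh0, hhi, hint, hlap, hmK⟩ := exists_contDiff_superharmonic
    (measurable_truncDeficit (hu.1.mono hBU) isOpen_ball.measurableSet)
    (integrable_truncDeficit hu hBU hM huM isOpen_ball isBounded_ball)
    (fun z ↦ (truncDeficit_mem_Icc hu hBU hM huM z).1)
    (fun z ↦ (truncDeficit_mem_Icc hu hBU hM huM z).2) isOpen_ball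
    (fun z ρ ↦ circleAverage_truncDeficit_le hu hBU hM huM isOpen_ball)
    (isCompact_closedBall y (2 * R)) (closedBall_subset_ball (by linarith)) hK hO
    (fun z hz ↦
      ⟨ball_subset_ball (by linarith) (hKR hz), (hbot z hz).trans_lt (EReal.bot_lt_coe _)⟩)
    (fun z hz ↦ le_truncDeficit hz.1 hz.2 hn)
  exact ⟨h, hh, hh0, hhi,
    hint.trans_le (hu.integral_truncDeficit_ball_le hy (by linarith) hBU hM huM n),
    fun z hz ↦ hlap z (hψsupp z hz), hmK⟩

end SubharmonicOn

theorem PolarSet.hasZeroCapacity_of_isCompact {P K : Set ℂ} (hP : PolarSet P) (hK : IsCompact K)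
    (hKP : K ⊆ P) : HasZeroCapacity K := by
  refine .of_isCompact hK fun x hx ↦ ?_
  obtain ⟨U, hU, hUc, hxU, u, hu, hne, hbot⟩ := hP x (hKP hx)
  obtain ⟨R, hR, hxR⟩ := Metric.isOpen_iff.1 hU x hxU
  obtain ⟨y, hy, hybot⟩ := hu.exists_ne_bot_mem hU hUc.isPreconnected hne (W := ball x (R / 10))
    isOpen_ball ((ball_subset_ball (by linarith)).trans hxR) (nonempty_ball.2 (by positivity))
  rw [mem_ball'] at hy
  refine ⟨closedBall x (R / 20), closedBall_mem_nhds x (by positivity), ?_⟩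
  refine hu.hasZeroCapacity_of_eqOn_bot hybot (R := R / 5) (by positivity) ?_
    (hK.inter_left isClosed_closedBall) ?_ fun z hz ↦ ?_
  · exact (closedBall_subset_ball' (by linarith [dist_comm x y])).trans hxR
  · exact inter_subset_left.trans (closedBall_subset_ball' (by linarith))
  · exact hbot z ⟨hKP hz.2, hxR (closedBall_subset_ball (by linarith) hz.1)⟩

section HolomorphicParameter

variable {E F X : Type*} [NormedAddCommGroup E] [NormedSpace ℂ E] [NormedAddCommGroup F]
  [NormedSpace ℂ F]

theorem norm_fderiv_le_of_forall_mem_ball_norm_le {f : E → F} {c : E} {R M : ℝ} (hR : 0 < R)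
    (hf : DifferentiableOn ℂ f (ball c R)) (hM : ∀ z ∈ ball c R, ‖f z‖ ≤ M) :
    ‖fderiv ℂ f c‖ ≤ 2 * M / R := by
  refine Complex.norm_fderiv_le_div_of_mapsTo_ball hf (fun z hz ↦ ?_) hR
  rw [mem_closedBall, dist_eq_norm]
  linarith [norm_sub_le (f z) (f c), hM z hz, hM c (mem_ball_self hR)]

variable [ProperSpace E] [TopologicalSpace X] {U : Set E} {Φ : E → X → F} {p : E}

theorem continuous_fderiv_of_continuousOn_uncurry (hU : IsOpen U)
    (hΦ : ContinuousOn (Function.uncurry Φ) (U ×ˢ univ))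
    (hd : ∀ x, DifferentiableOn ℂ (Φ · x) U) (hp : p ∈ U) :
    Continuous fun x ↦ fderiv ℂ (Φ · x) p := by
  obtain ⟨R, hR, hRU⟩ := nhds_basis_closedBall.mem_iff.1 (hU.mem_nhds hp)
  refine continuous_iff_continuousAt.2 fun x₀ ↦ Metric.continuousAt_iff'.2 fun ε hε ↦ ?_
  have hswap : ContinuousOn (Function.uncurry fun x p ↦ Φ p x) (univ ×ˢ closedBall p R) :=
    hΦ.comp continuous_swap.continuousOn fun q hq ↦ ⟨hRU hq.2, mem_univ _⟩
  obtain ⟨v, hv, hvΦ⟩ := (isCompact_closedBall p R).mem_uniformity_of_prod hswap (mem_univ x₀)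
    (dist_mem_uniformity (show 0 < ε * R / 4 by positivity))
  rw [nhdsWithin_univ] at hv
  filter_upwards [hv] with x hx
  have hdiff : ∀ x, DifferentiableAt ℂ (Φ · x) p := fun x ↦ (hd x).differentiableAt (hU.mem_nhds hp)
  rw [dist_eq_norm, ← fderiv_sub (hdiff x) (hdiff x₀)]
  calc ‖fderiv ℂ ((Φ · x) - (Φ · x₀)) p‖ ≤ 2 * (ε * R / 4) / R := by
        refine norm_fderiv_le_of_forall_mem_ball_norm_le hR
          (((hd x).sub (hd x₀)).mono (ball_subset_closedBall.trans hRU)) fun q hq ↦ ?_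
        have : dist (Φ q x) (Φ q x₀) < ε * R / 4 := hvΦ x hx q (ball_subset_closedBall hq)
        exact (dist_eq_norm (Φ q x) (Φ q x₀) ▸ this).le
    _ = ε / 2 := by field_simp; norm_num
    _ < ε := half_lt_self hε

theorem exists_bound_fderiv_of_continuousOn_uncurry (hU : IsOpen U)
    (hΦ : ContinuousOn (Function.uncurry Φ) (U ×ˢ univ))
    (hd : ∀ x, DifferentiableOn ℂ (Φ · x) U) (hp : p ∈ U) {K : Set X} (hK : IsCompact K) :
    ∃ C, ∃ V ∈ 𝓝 p, V ⊆ U ∧ ∀ x ∈ K, ∀ q ∈ V, ‖fderiv ℂ (Φ · x) q‖ ≤ C := by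
  obtain ⟨R, hR, hRU⟩ := nhds_basis_closedBall.mem_iff.1 (hU.mem_nhds hp)
  obtain ⟨M, hM⟩ := ((isCompact_closedBall p R).prod hK).exists_bound_of_continuousOn
    (hΦ.mono (prod_mono hRU (subset_univ _)))
  have hsub : ∀ q ∈ ball p (R / 2), ball q (R / 2) ⊆ closedBall p R := fun q hq ↦
    ball_subset_closedBall.trans (closedBall_subset_closedBall' (by linarith [mem_ball.1 hq]))
  refine ⟨2 * M / (R / 2), ball p (R / 2), ball_mem_nhds p (half_pos hR),
    (ball_subset_closedBall.trans (closedBall_subset_closedBall (by linarith))).trans hRU,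
    fun x hx q hq ↦ ?_⟩
  exact norm_fderiv_le_of_forall_mem_ball_norm_le (half_pos hR)
    ((hd x).mono ((hsub q hq).trans hRU)) fun z hz ↦ hM (z, x) ⟨hsub q hq hz, hx⟩

theorem differentiableOn_intervalIntegral_of_continuousOn_uncurry {Φ : E → ℝ → F} (hU : IsOpen U)
    (hΦ : ContinuousOn (Function.uncurry Φ) (U ×ˢ univ))
    (hd : ∀ θ, DifferentiableOn ℂ (Φ · θ) U) (a b : ℝ) :
    DifferentiableOn ℂ (fun p ↦ ∫ θ in a..b, Φ p θ) U := by
  intro p hp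
  have hcont : ∀ q ∈ U, Continuous (Φ q) := fun q hq ↦
    hΦ.comp_continuous (f := fun θ ↦ (q, θ)) (by fun_prop) fun θ ↦ ⟨hq, mem_univ _⟩
  obtain ⟨C, V, hV, hVU, hC⟩ :=
    exists_bound_fderiv_of_continuousOn_uncurry hU hΦ hd hp (isCompact_uIcc (a := a) (b := b))
  have hderiv := intervalIntegral.hasFDerivAt_integral_of_dominated_of_fderiv_le (μ := volume)
    (F' := fun q θ ↦ fderiv ℂ (Φ · θ) q) (a := a) (b := b) hV
    (eventually_of_mem hV fun q hq ↦ (hcont q (hVU hq)).aestronglyMeasurable)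
    ((hcont p hp).intervalIntegrable _ _)
    (continuous_fderiv_of_continuousOn_uncurry hU hΦ hd hp).aestronglyMeasurable
    (ae_of_all _ fun θ hθ ↦ hC θ (uIoc_subset_uIcc hθ)) intervalIntegrable_const
    (ae_of_all _ fun θ _ q hq ↦ ((hd θ).differentiableAt (hU.mem_nhds (hVU hq))).hasFDerivAt)
  exact hderiv.differentiableAt.differentiableWithinAt

theorem differentiableOn_circleIntegral_sub_inv_mul {D : Set (E × ℂ)} {f : E × ℂ → ℂ}
    (hf : DifferentiableOn ℂ f D) {V : Set E} (hV : IsOpen V) {c : ℂ} {s : ℝ}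
    (hVs : V ×ˢ sphere c s ⊆ D) :
    DifferentiableOn ℂ (fun p : E × ℂ ↦ ∮ ζ in C(c, s), (ζ - p.2)⁻¹ * f (p.1, ζ))
      (V ×ˢ ball c s) := by
  have hne : ∀ p ∈ V ×ˢ ball c s, ∀ θ, circleMap c s θ - p.2 ≠ 0 := fun p hp θ ↦
    sub_ne_zero.2 (circleMap_ne_mem_ball hp.2 θ)
  have hmem : ∀ p ∈ V ×ˢ ball c s, ∀ θ, (p.1, circleMap c s θ) ∈ D := fun p hp θ ↦
    hVs ⟨hp.1, circleMap_mem_sphere c (dist_nonneg.trans_lt hp.2).le θ⟩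
  simp only [circleIntegral, deriv_circleMap, smul_eq_mul]
  refine differentiableOn_intervalIntegral_of_continuousOn_uncurry (hV.prod isOpen_ball) ?_
    (fun θ ↦ ?_) _ _
  · refine .mul (by fun_prop) (.mul ?_ ?_)
    · exact .inv₀ (by fun_prop) fun x hx ↦ hne x.1 hx.1 x.2
    · exact hf.continuousOn.comp (by fun_prop) fun x hx ↦ hmem x.1 hx.1 x.2
  · refine .const_mul (.mul ?_ ?_) _
    · exact .inv (by fun_prop) fun p hp ↦ hne p hp θ
    · exact hf.comp (by fun_prop) fun p hp ↦ hmem p hp θ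

end HolomorphicParameter

theorem PolarSet.circleIntegral_sub_inv_mul {O : Set ℂ} {g : ℂ → ℂ} {c w : ℂ} {s t : ℝ}
    (hP : PolarSet (ball c t \ O)) (hO : IsOpen O) (hg : DifferentiableOn ℂ g O)
    (hg2 : MemLp (O.indicator g) 2) (hst : s < t) (hsO : sphere c s ⊆ O) (hw : w ∈ ball c s)
    (hwO : w ∈ O) :
    ∮ ζ in C(c, s), (ζ - w)⁻¹ * g ζ = 2 * Real.pi * Complex.I * g w := by
  obtain ⟨t', hst', htt'⟩ := exists_between hst
  have hcap : HasZeroCapacity (ball c t' \ O) :=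
    (hP.hasZeroCapacity_of_isCompact ((isCompact_closedBall c t').diff hO)
      (sdiff_subset_sdiff_left (closedBall_subset_ball htt'))).mono
      (sdiff_subset_sdiff_left ball_subset_closedBall)
  have hweak : IsWeaklyHolomorphicOn (O.indicator g) (ball c t') :=
    (IsWeaklyHolomorphicOn.indicator_of_differentiableOn hO hg).of_hasZeroCapacity_diff hg2 hcap
  have hcont : ∀ z ∈ O, ContinuousAt (O.indicator g) z := fun z hz ↦
    (hg.continuousOn.continuousAt (hO.mem_nhds hz)).congr
      (eventually_of_mem (hO.mem_nhds hz) fun y hy ↦ (indicator_of_mem hy g).symm)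
  have hcauchy := hweak.circleIntegral_sub_inv_mul (hg2.locallyIntegrable one_le_two) hst'
    (fun z hz ↦ hcont z (hsO hz)) hw (hcont w hwO)
  rw [indicator_of_mem hwO] at hcauchy
  rw [← hcauchy]
  refine circleIntegral.integral_congr (dist_nonneg.trans_lt hw).le fun ζ hζ ↦ ?_
  simp only [indicator_of_mem (hsO hζ)]

theorem memLp_two_indicator_of_mem_L2h {E : Type*} [NormedAddCommGroup E] [NormedSpace ℂ E]
    [SecondCountableTopology E] [MeasureSpace E] [OpensMeasurableSpace E] {D : Set E} {f : E → ℂ}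
    (hD : IsOpen D) (hf : f ∈ L2h D) : MemLp (D.indicator f) 2 := by
  rw [memLp_indicator_iff_restrict hD.measurableSet]
  refine ⟨hf.1.continuousOn.aestronglyMeasurable hD.measurableSet, ?_⟩
  rw [eLpNorm_lt_top_iff_lintegral_rpow_enorm_lt_top two_ne_zero ENNReal.ofNat_ne_top]
  simpa [enorm_eq_nnnorm] using hf.2

section Fibers

variable {X Y : Type*}

theorem memLp_two_prod_right_ae [MeasurableSpace X] [MeasurableSpace Y] {μ : Measure X}
    {ν : Measure Y} [SFinite μ] [SFinite ν] {G : Type*} [NormedAddCommGroup G] {f : X × Y → G}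
    (hf : MemLp f 2 (μ.prod ν)) :
    ∀ᵐ x ∂μ, MemLp (fun y ↦ f (x, y)) 2 ν := by
  filter_upwards [hf.1.prodMk_left,
    ((memLp_two_iff_integrable_sq_norm hf.1).1 hf).prod_right_ae] with x hmeas hint
  exact (memLp_two_iff_integrable_sq_norm hmeas).2 hint

theorem eqOn_of_ae_eq_fiber [TopologicalSpace X] [TopologicalSpace Y] {Z : Type*}
    [TopologicalSpace Z] [T2Space Z] [MeasurableSpace X] {μ : Measure X} [μ.IsOpenPosMeasure]
    {f g : X × Y → Z} {W : Set (X × Y)} (hW : IsOpen W) (hf : ContinuousOn f W)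
    (hg : ContinuousOn g W) (h : ∀ᵐ x ∂μ, ∀ y, (x, y) ∈ W → f (x, y) = g (x, y)) :
    EqOn f g W := by
  rintro ⟨x, y⟩ hxy
  by_contra hne
  have hopen : IsOpen (W ∩ {p | f p ≠ g p}) :=
    (hf.prodMk hg).isOpen_inter_preimage hW isClosed_diagonal.isOpen_compl
  obtain ⟨x', ⟨hx'W, hx'ne⟩, hx'⟩ := (Measure.dense_of_ae h).inter_open_nonempty _
    (hopen.preimage (Continuous.prodMk_left y)) ⟨x, hxy, hne⟩
  exact hx'ne (hx' y hx'W)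

end Fibers

section Extension

variable {E : Type*} [NormedAddCommGroup E]

theorem PolarSet.exists_prod_sphere_subset {D : Set (E × ℂ)} (hD : IsOpen D) {a : E} {c : ℂ}
    {r t : ℝ} (hr : 0 ≤ r) (hrt : r < t) (hP : PolarSet (ball c t \ Prod.mk a ⁻¹' D)) {V : Set E}
    (hV : V ∈ 𝓝 a) :
    ∃ s ∈ Ioo r t, ∃ V' ⊆ V, IsOpen V' ∧ a ∈ V' ∧ V' ×ˢ sphere c s ⊆ D := by
  obtain ⟨t', hrt', htt'⟩ := exists_between hrt
  have hcap : HasZeroCapacity (closedBall c t' \ Prod.mk a ⁻¹' D) :=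
    hP.hasZeroCapacity_of_isCompact
      ((isCompact_closedBall c t').diff (hD.preimage (Continuous.prodMk_right a)))
      (sdiff_subset_sdiff_left (closedBall_subset_ball htt'))
  obtain ⟨s, hs, hdisj⟩ := hcap.exists_sphere_disjoint c hr hrt'
  have hsphere : {a} ×ˢ sphere c s ⊆ D := by
    rintro ⟨_, w⟩ ⟨rfl, hw⟩
    by_contra hnot
    exact hdisj.le_bot
      ⟨hw, closedBall_subset_closedBall hs.2.le (sphere_subset_closedBall hw), hnot⟩
  obtain ⟨V₁, W, hV₁, -, haV₁, hsW, hVW⟩ :=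
    generalized_tube_lemma isCompact_singleton (isCompact_sphere c s) hD hsphere
  exact ⟨s, ⟨hs.1, hs.2.trans htt'⟩, V₁ ∩ interior V, inter_subset_right.trans interior_subset,
    hV₁.inter isOpen_interior, ⟨haV₁ rfl, mem_interior_iff_mem_nhds.2 hV⟩,
    (prod_mono inter_subset_left hsW).trans hVW⟩

variable [NormedSpace ℂ E] [ProperSpace E] [MeasureSpace E] [BorelSpace E]
  [SFinite (volume : Measure E)]

theorem ae_circleIntegral_sub_inv_mul {D : Set (E × ℂ)} (hD : IsOpen D) {f : E × ℂ → ℂ}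
    (hf : f ∈ L2h D) {c : ℂ} {s t : ℝ} (hst : s < t) {V : Set E} (hVs : V ×ˢ sphere c s ⊆ D)
    (hae : ∀ᵐ z : E, z ∈ V → PolarSet (ball c t \ Prod.mk z ⁻¹' D)) :
    ∀ᵐ z : E, ∀ w, (z, w) ∈ (V ×ˢ ball c s) ∩ D →
      (2 * Real.pi * Complex.I)⁻¹ * (∮ ζ in C(c, s), (ζ - w)⁻¹ * f (z, ζ)) = f (z, w) := by
  filter_upwards [hae, memLp_two_prod_right_ae (memLp_two_indicator_of_mem_L2h hD hf)]
    with z hP hL2 w ⟨⟨hz, hw⟩, hwD⟩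
  have hfz : DifferentiableOn ℂ (fun w ↦ f (z, w)) (Prod.mk z ⁻¹' D) :=
    hf.1.comp (by fun_prop) (mapsTo_preimage _ _)
  rw [(hP hz).circleIntegral_sub_inv_mul (hD.preimage (Continuous.prodMk_right z)) hfz hL2 hst
    (fun ζ hζ ↦ hVs ⟨hz, hζ⟩) hw hwD, inv_mul_cancel_left₀ Complex.two_pi_I_ne_zero]

theorem extension_of_ae_polar_fibers_general [(volume : Measure E).IsOpenPosMeasure]
    {D : Set (E × ℂ)} (hD : IsOpen D) {a : E} {c : ℂ} {r t : ℝ} (hr : 0 ≤ r) (hrt : r < t)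
    (ha : PolarSet (ball c t \ Prod.mk a ⁻¹' D)) {V : Set E} (hV : V ∈ 𝓝 a)
    (hae : ∀ᵐ z : E, z ∈ V → PolarSet (ball c t \ Prod.mk z ⁻¹' D)) :
    ∃ V', IsOpen V' ∧ a ∈ V' ∧ V' ⊆ V ∧ ∀ f ∈ L2h D, ∃ F : E × ℂ → ℂ,
      DifferentiableOn ℂ F (V' ×ˢ ball c r) ∧ EqOn F f ((V' ×ˢ ball c r) ∩ D) := by
  obtain ⟨s, hs, V', hV'V, hV', haV', hVs⟩ := ha.exists_prod_sphere_subset hD hr hrt hV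
  refine ⟨V', hV', haV', hV'V, fun f hf ↦ ?_⟩
  let F : E × ℂ → ℂ := fun p ↦
    (2 * Real.pi * Complex.I)⁻¹ * ∮ ζ in C(c, s), (ζ - p.2)⁻¹ * f (p.1, ζ)
  have hF : DifferentiableOn ℂ F (V' ×ˢ ball c s) :=
    (differentiableOn_circleIntegral_sub_inv_mul hf.1 hV' hVs).const_mul _
  have hsub : V' ×ˢ ball c r ⊆ V' ×ˢ ball c s := prod_mono_right (ball_subset_ball hs.1.le)
  have heq : EqOn F f ((V' ×ˢ ball c s) ∩ D) :=
    eqOn_of_ae_eq_fiber ((hV'.prod isOpen_ball).inter hD) (hF.continuousOn.mono inter_subset_left)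
      (hf.1.continuousOn.mono inter_subset_right)
      (ae_circleIntegral_sub_inv_mul hD hf hs.2 hVs (hae.mono fun z hz hzV ↦ hz (hV'V hzV)))
  exact ⟨F, hF.mono hsub, heq.mono (inter_subset_inter_left D hsub)⟩

end Extension

/-- **Lemma 9.** Let `D` be a domain in `ℂⁿ = ℂ^{n-1} × ℂ`, `n ≥ 2`, and `0 < r < t`. For
`z' ∈ ℂ^{n-1}` let `K(z') = {zₙ : |zₙ| < t, (z', zₙ) ∉ D}`. If `K(0')` is polar and for a.e.
`z'` in some neighborhood `V` of `0'` the set `K(z')` is polar, then there is a neighborhood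
`V' ⊆ V` of `0'` such that every `f ∈ L²ₕ(D)` extends holomorphically to `V' × rE`. -/
theorem extension_of_ae_polar_fibers {n : ℕ} (hn : 2 ≤ n)
    (D : Set ((Fin (n - 1) → ℂ) × ℂ)) (hopen : IsOpen D) (hconn : IsConnected D)
    (r t : ℝ) (hr : 0 < r) (hrt : r < t)
    (K : (Fin (n - 1) → ℂ) → Set ℂ)
    (hK : ∀ z' : Fin (n - 1) → ℂ, K z' = {zn : ℂ | ‖zn‖ < t ∧ (z', zn) ∉ D})
    (h0 : PolarSet (K 0))
    (V : Set (Fin (n - 1) → ℂ)) (hV : V ∈ 𝓝 (0 : Fin (n - 1) → ℂ))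
    (hae : ∀ᵐ z' ∂(volume : Measure (Fin (n - 1) → ℂ)), z' ∈ V → PolarSet (K z')) :
    ∃ V' : Set (Fin (n - 1) → ℂ), IsOpen V' ∧ (0 : Fin (n - 1) → ℂ) ∈ V' ∧ V' ⊆ V ∧
      ∀ f ∈ L2h D, ∃ F : ((Fin (n - 1) → ℂ) × ℂ) → ℂ,
        DifferentiableOn ℂ F (V' ×ˢ Metric.ball (0 : ℂ) r) ∧
        Set.EqOn F f ((V' ×ˢ Metric.ball (0 : ℂ) r) ∩ D) := by
  obtain rfl : K = fun z ↦ ball 0 t \ Prod.mk z ⁻¹' D := by ext; simp [hK]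
  exact extension_of_ae_polar_fibers_general hopen hr.le hrt h0 hV hae
end

section
/- Let D be a bounded domain in ℂ and let w ∈ ∂D be a regular boundary point. For p ∈ D set D(p) := { z ∈ D : g_D(p, z) < -1 } and r(p) := diam D(p). Then r(p) → 0 as D ∋ p → w. -/
open MeasureTheory Filter Topology Metric Set
open scoped ENNReal NNReal

/-! Harmonic measure on `∂D` at `p` is replaced by a linear functional `L` on `C(∂D)` that dominates
the value at `p` of every Perron minorant; it exists by the M. Riesz extension theorem. Since
`log ‖ζ - z‖` is harmonic in `z` for every `ζ ∈ ∂D`, the function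
`z ↦ log ‖z - p‖ - L (log ‖· - z‖)` is nonpositive and subharmonic with a logarithmic pole at `p`,
hence a lower bound for the Green function.

As `‖ζ - z‖ ≤ ‖z - p‖ + ‖p - w‖ + ‖ζ - w‖`, concavity of `log` gives
`L (log ‖· - z‖) ≤ log ‖z - p‖ + (‖p - w‖ + L ‖· - w‖) / ‖z - p‖`. Where the Green function is less
than `-1` the last quotient exceeds `1`, so the sublevel set lies in the ball around `p` of radius
`‖p - w‖ + L ‖· - w‖`. Finally `L ‖· - w‖ → 0` as `p → w`, because Bouligand's construction turns
the weak barrier given at `w` into barriers that equal `-1` off a prescribed disc around `w`. -/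

open InnerProductSpace (HarmonicAt HarmonicOnNhd harmonicAt_const harmonicAt_congr_nhds)
open Real (circleAverage)

/-! ### Local submean property -/

/-- `f` is subharmonic at `c` in the local sense: it is upper semicontinuous at `c` and `f c` is at
most the mean of `f` over every sufficiently small circle around `c`. Only arbitrarily small circles
matter, so that the notion depends on the germ of `f` at `c`. -/
structure SubMeanAt (f : ℂ → ℝ) (c : ℂ) : Prop where
  upperSemicontinuousAt : UpperSemicontinuousAt f c
  le_circleAverage : ∀ᶠ R in 𝓝[>] (0 : ℝ), CircleIntegrable f c R ∧ f c ≤ circleAverage f c R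

theorem eventually_nhdsGT_sphere_subset {c : ℂ} {s : Set ℂ} (hs : s ∈ 𝓝 c) :
    ∀ᶠ R in 𝓝[>] (0 : ℝ), sphere c |R| ⊆ s := by
  filter_upwards [nhdsWithin_le_nhds (eventually_closedBall_subset hs), self_mem_nhdsWithin]
    with R hR hR0
  rw [abs_of_pos hR0]
  exact sphere_subset_closedBall.trans hR

theorem circleIntegrable_max {f g : ℂ → ℝ} {c : ℂ} {R : ℝ} (hf : CircleIntegrable f c R)
    (hg : CircleIntegrable g c R) : CircleIntegrable (fun z => max (f z) (g z)) c R := by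
  rw [circleIntegrable_def, intervalIntegrable_iff] at *
  exact hf.sup hg

namespace SubMeanAt

variable {f g : ℂ → ℝ} {c : ℂ}

theorem congr (hf : SubMeanAt f c) (hfg : f =ᶠ[𝓝 c] g) : SubMeanAt g c := by
  refine ⟨fun y hy => ?_, ?_⟩
  · filter_upwards [hfg, hf.upperSemicontinuousAt y (hfg.eq_of_nhds.trans_lt hy)] with z hz hzy
    exact hz.symm.trans_lt hzy
  · filter_upwards [hf.le_circleAverage, eventually_nhdsGT_sphere_subset hfg] with R hR hsub
    rwa [← circleIntegrable_congr hsub, ← Real.circleAverage_congr_sphere hsub, ← hfg.eq_of_nhds]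

theorem of_harmonicAt (hf : HarmonicAt f c) : SubMeanAt f c := by
  refine ⟨hf.1.continuousAt.upperSemicontinuousAt, ?_⟩
  filter_upwards [nhdsWithin_le_nhds (eventually_closedBall_subset hf.eventually),
    self_mem_nhdsWithin] with R hR hR0
  have hR : HarmonicOnNhd f (closedBall c |R|) := by rwa [abs_of_pos hR0]
  exact ⟨(hR.continuousOn.mono sphere_subset_closedBall).circleIntegrable',
    hR.circleAverage_eq.ge⟩

theorem const (a : ℝ) (c : ℂ) : SubMeanAt (fun _ => a) c :=
  of_harmonicAt (harmonicAt_const a)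

theorem add (hf : SubMeanAt f c) (hg : SubMeanAt g c) : SubMeanAt (fun z => f z + g z) c := by
  refine ⟨hf.upperSemicontinuousAt.add hg.upperSemicontinuousAt, ?_⟩
  filter_upwards [hf.le_circleAverage, hg.le_circleAverage] with R hf hg
  exact ⟨hf.1.add hg.1,
    (add_le_add hf.2 hg.2).trans_eq (Real.circleAverage_fun_add hf.1 hg.1).symm⟩

theorem const_mul (hf : SubMeanAt f c) {t : ℝ} (ht : 0 ≤ t) : SubMeanAt (fun z => t * f z) c := by
  refine ⟨(continuous_const_mul t).continuousAt.comp_upperSemicontinuousAt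
    hf.upperSemicontinuousAt (monotone_mul_left_of_nonneg ht), ?_⟩
  filter_upwards [hf.le_circleAverage] with R hf
  exact ⟨hf.1.const_smul, (mul_le_mul_of_nonneg_left hf.2 ht).trans_eq
    (Real.circleAverage_fun_smul (a := t)).symm⟩

theorem max (hf : SubMeanAt f c) (hg : SubMeanAt g c) :
    SubMeanAt (fun z => max (f z) (g z)) c := by
  refine ⟨hf.upperSemicontinuousAt.sup hg.upperSemicontinuousAt, ?_⟩
  filter_upwards [hf.le_circleAverage, hg.le_circleAverage] with R hf hg
  have hfg := circleIntegrable_max hf.1 hg.1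
  exact ⟨hfg, max_le
    (hf.2.trans (Real.circleAverage_mono hf.1 hfg fun _ _ => le_max_left _ _))
    (hg.2.trans (Real.circleAverage_mono hg.1 hfg fun _ _ => le_max_right _ _))⟩

end SubMeanAt

theorem circleIntegrable_of_upperSemicontinuousOn {f : ℂ → ℝ} {c : ℂ} {R m : ℝ}
    (hf : UpperSemicontinuousOn f (sphere c |R|)) (hm : ∀ z ∈ sphere c |R|, m ≤ f z) :
    CircleIntegrable f c R := by
  obtain ⟨M, hM⟩ := hf.bddAbove_of_isCompact (isCompact_sphere c |R|)
  have husc : UpperSemicontinuous fun θ => f (circleMap c R θ) := by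
    rw [← upperSemicontinuousOn_univ_iff]
    exact hf.comp (continuous_circleMap c R).continuousOn fun θ _ => circleMap_mem_sphere' c R θ
  rw [circleIntegrable_def, intervalIntegrable_iff]
  refine (integrableOn_const (C := max |M| |m|) ?_).mono'
    husc.measurable.aestronglyMeasurable (.of_forall fun θ => ?_)
  · simp [uIoc_of_le Real.two_pi_pos.le, ENNReal.mul_eq_top]
  · have hθ := circleMap_mem_sphere' c R θ
    exact abs_le_max_abs_abs (hm _ hθ) (hM (mem_image_of_mem f hθ)) |>.trans_eq (max_comm _ _)

/-- The real-valued function obtained from `u` by truncating below at `-n`. -/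
noncomputable def truncBelow (u : ℂ → EReal) (n : ℕ) (z : ℂ) : ℝ :=
  (max (u z) (-(n : ℝ) : EReal)).toReal

theorem coe_truncBelow {u : ℂ → EReal} {z : ℂ} (hu : u z < ⊤) (n : ℕ) :
    (truncBelow u n z : EReal) = max (u z) ((-n : ℝ) : EReal) := by
  refine EReal.coe_toReal ?_ ?_
  · exact (max_lt hu (EReal.coe_lt_top (-n))).ne
  · exact ((EReal.bot_lt_coe (-n)).trans_le (le_max_right _ _)).ne'

theorem neg_le_truncBelow {u : ℂ → EReal} {z : ℂ} (hu : u z < ⊤) (n : ℕ) :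
    (-n : ℝ) ≤ truncBelow u n z := by
  rw [← EReal.coe_le_coe_iff, coe_truncBelow hu]
  exact le_max_right _ _

theorem SubharmonicOn.upperSemicontinuousOn_truncBelow {u : ℂ → EReal} {Ω : Set ℂ}
    (hu : SubharmonicOn u Ω) (n : ℕ) : UpperSemicontinuousOn (truncBelow u n) Ω := by
  intro z hz y hy
  rw [← EReal.coe_lt_coe_iff, coe_truncBelow (hu.2.1 z hz), max_lt_iff] at hy
  filter_upwards [hu.1 z hz y hy.1, self_mem_nhdsWithin] with x hx hxΩ
  rw [← EReal.coe_lt_coe_iff, coe_truncBelow (hu.2.1 x hxΩ)]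
  exact max_lt hx hy.2

theorem SubharmonicOn.subMeanAt_truncBelow {u : ℂ → EReal} {Ω : Set ℂ} (hu : SubharmonicOn u Ω)
    (hΩ : IsOpen Ω) {c : ℂ} (hc : c ∈ Ω) (n : ℕ) : SubMeanAt (truncBelow u n) c := by
  have husc := hu.upperSemicontinuousOn_truncBelow n
  refine ⟨fun y hy => ?_, ?_⟩
  · simpa only [hΩ.nhdsWithin_eq hc] using husc c hc y hy
  filter_upwards [nhdsWithin_le_nhds (eventually_closedBall_subset (hΩ.mem_nhds hc)),
    self_mem_nhdsWithin] with R hR hR0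
  have hsub : sphere c |R| ⊆ Ω := by
    rw [abs_of_pos hR0]
    exact sphere_subset_closedBall.trans hR
  have hbelow : ∀ z ∈ sphere c |R|, (-n : ℝ) ≤ truncBelow u n z := fun z hz =>
    neg_le_truncBelow (hu.2.1 z (hsub hz)) n
  have hint := circleIntegrable_of_upperSemicontinuousOn
    (husc.mono hsub) hbelow
  refine ⟨hint, ?_⟩
  rw [← EReal.coe_le_coe_iff, coe_truncBelow (hu.2.1 c hc)]
  refine max_le ((hu.2.2 c hc R hR0 hR).trans (iInf_le _ n)) (EReal.coe_le_coe_iff.2 ?_)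
  exact (Real.circleAverage_const _ c R).symm.trans_le
    (Real.circleAverage_mono (circleIntegrable_const _ c R) hint hbelow)

/-! ### Maximum principle -/

open scoped ComplexConjugate in
theorem circleAverage_norm_sq (c : ℂ) (R : ℝ) :
    circleAverage (fun z => ‖z‖ ^ 2) c R = ‖c‖ ^ 2 + R ^ 2 := by
  have hharm : HarmonicOnNhd
      (fun z => ((‖c‖ ^ 2 + R ^ 2 : ℝ) + 2 * (conj c * (z - c)) : ℂ).re) (closedBall c |R|) :=
    fun z _ => AnalyticAt.harmonicAt_re (f := fun z => ((‖c‖ ^ 2 + R ^ 2 : ℝ) +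
      2 * (conj c * (z - c)) : ℂ)) (by fun_prop)
  rw [Real.circleAverage_congr_sphere fun z hz => ?_, hharm.circleAverage_eq]
  · rw [sub_self, mul_zero, mul_zero, add_zero, Complex.ofReal_re]
  · have hR : ‖z - c‖ ^ 2 = R ^ 2 := by rw [mem_sphere_iff_norm.1 hz, sq_abs]
    simp only [← hR, Complex.sq_norm, Complex.normSq_apply]
    simp only [Complex.add_re, Complex.mul_re, Complex.mul_im, Complex.sub_re, Complex.sub_im,
      Complex.ofReal_re, Complex.conj_re, Complex.conj_im, Complex.re_ofNat, Complex.im_ofNat]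
    ring

theorem SubMeanAt.lt_circleAverage_add_norm_sq {f : ℂ → ℝ} {c : ℂ} (hf : SubMeanAt f c) {δ : ℝ}
    (hδ : 0 < δ) : ∀ᶠ R in 𝓝[>] (0 : ℝ), 0 < R ∧
      CircleIntegrable (fun z => f z + δ * ‖z‖ ^ 2) c R ∧
      f c + δ * ‖c‖ ^ 2 < circleAverage (fun z => f z + δ * ‖z‖ ^ 2) c R := by
  filter_upwards [hf.le_circleAverage, self_mem_nhdsWithin] with R hR hR0
  have hsq : CircleIntegrable (fun z : ℂ => δ * ‖z‖ ^ 2) c R :=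
    ContinuousOn.circleIntegrable' (by fun_prop)
  refine ⟨hR0, hR.1.add hsq, ?_⟩
  rw [Real.circleAverage_fun_add hR.1 hsq]
  have h := Real.circleAverage_fun_smul (a := δ) (f := fun z : ℂ => ‖z‖ ^ 2) (c := c) (R := R)
  simp only [smul_eq_mul, circleAverage_norm_sq] at h
  rw [h]
  nlinarith [hR.2, mul_pos hδ (pow_pos (mem_Ioi.1 hR0) 2)]

/-- Adding `δ ‖z‖ ^ 2` makes the submean inequality strict, so that a maximum cannot be attained
inside `D`. -/
theorem SubMeanAt.not_isLocalMax_add_norm_sq {f : ℂ → ℝ} {c : ℂ} (hf : SubMeanAt f c) {δ : ℝ}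
    (hδ : 0 < δ) : ¬ IsLocalMax (fun z => f z + δ * ‖z‖ ^ 2) c := by
  intro hmax
  obtain ⟨R, ⟨-, hint, hlt⟩, hsub⟩ := ((hf.lt_circleAverage_add_norm_sq hδ).and
    (eventually_nhdsGT_sphere_subset hmax)).exists
  exact hlt.not_ge (Real.circleAverage_mono_on_of_le_circle hint hsub)

theorem upperSemicontinuousOn_closure_piecewise {D : Set ℂ} [∀ z, Decidable (z ∈ D)] (hD : IsOpen D)
    {s : ℂ → ℝ} (hs : ∀ z ∈ D, UpperSemicontinuousAt s z) {M : ℝ}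
    (hM : ∀ ζ ∈ frontier D, ∀ y > M, ∀ᶠ z in 𝓝[D] ζ, s z < y) :
    UpperSemicontinuousOn (D.piecewise s fun _ => M) (closure D) := by
  intro z hz y hy
  by_cases hzD : z ∈ D
  · rw [piecewise_eq_of_mem _ _ _ hzD] at hy
    refine nhdsWithin_le_nhds ?_
    filter_upwards [hs z hzD y hy, hD.mem_nhds hzD] with x hx hxD
    rwa [piecewise_eq_of_mem _ _ _ hxD]
  · rw [piecewise_eq_of_notMem _ _ _ hzD] at hy
    have hfr : z ∈ frontier D := hD.frontier_eq ▸ ⟨hz, hzD⟩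
    filter_upwards [nhdsWithin_le_nhds (eventually_nhdsWithin_iff.1 (hM z hfr y hy))] with x hx
    by_cases hxD : x ∈ D
    · rw [piecewise_eq_of_mem _ _ _ hxD]
      exact hx hxD
    · rwa [piecewise_eq_of_notMem _ _ _ hxD]

theorem le_of_forall_subMeanAt {D : Set ℂ} (hD : IsOpen D) (hbd : Bornology.IsBounded D)
    {s : ℂ → ℝ} (hs : ∀ z ∈ D, SubMeanAt s z) {M : ℝ}
    (hM : ∀ ζ ∈ frontier D, ∀ y > M, ∀ᶠ z in 𝓝[D] ζ, s z < y) {p : ℂ} (hp : p ∈ D) :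
    s p ≤ M := by
  classical
  obtain ⟨B, hB0, hB⟩ := hbd.closure.exists_pos_norm_le
  by_contra! hlt
  obtain ⟨δ, hδ0, hδ⟩ : ∃ δ > 0, δ * B ^ 2 < s p - M :=
    ⟨(s p - M) / (2 * B ^ 2), div_pos (sub_pos.2 hlt) (by positivity), by
      field_simp; linarith⟩
  set G : ℂ → ℝ := fun z => D.piecewise s (fun _ => M) z + δ * ‖z‖ ^ 2 with hG
  have hGs : EqOn G (fun z => s z + δ * ‖z‖ ^ 2) D := fun z hz => by
    simp only [hG, piecewise_eq_of_mem _ _ _ hz]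
  have husc : UpperSemicontinuousOn G (closure D) :=
    (upperSemicontinuousOn_closure_piecewise hD (fun z hz => (hs z hz).upperSemicontinuousAt)
      hM).add (ContinuousOn.upperSemicontinuousOn (by fun_prop))
  obtain ⟨x, hx, hmax⟩ := husc.exists_isMaxOn ⟨p, subset_closure hp⟩ hbd.isCompact_closure
  have hxD : x ∈ D := by
    by_contra hxD
    have hpx : G p ≤ G x := hmax (subset_closure hp)
    rw [hGs hp] at hpx
    simp only [hG, piecewise_eq_of_notMem _ _ _ hxD] at hpx
    have hδB : δ * ‖x‖ ^ 2 ≤ δ * B ^ 2 := by gcongr; exact hB x hx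
    linarith [mul_nonneg hδ0.le (sq_nonneg ‖p‖)]
  refine (hs x hxD).not_isLocalMax_add_norm_sq hδ0 ?_
  filter_upwards [hD.mem_nhds hxD] with z hz
  exact (hGs hz).symm.trans_le ((hmax (subset_closure hz)).trans_eq (hGs hxD))

/-! ### Harmonic functionals -/

/-- The real-valued lower class of Perron's method for the Dirichlet problem on `D` with boundary
data `f`: subharmonic functions on `D` whose upper boundary limits are at most `f`. -/
structure IsPerronMinorant (D : Set ℂ) (f : C(frontier D, ℝ)) (s : ℂ → ℝ) : Prop where
  subMeanAt : ∀ z ∈ D, SubMeanAt s z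
  eventually_lt : ∀ ζ : frontier D, ∀ y > f ζ, ∀ᶠ z in 𝓝[D] (ζ : ℂ), s z < y

/-- `L` plays the role of integration against the harmonic measure of `D` at `p`: it is required to
dominate the value at `p` of the lower Perron solution of every continuous boundary function. At a
`p` for which the lower and the upper solution of some boundary function differ it is not unique. -/
def IsHarmonicFunctional (D : Set ℂ) (p : ℂ) (L : C(frontier D, ℝ) →L[ℝ] ℝ) : Prop :=
  ∀ f s, IsPerronMinorant D f s → s p ≤ L f

namespace IsPerronMinorant

variable {D : Set ℂ} {f g : C(frontier D, ℝ)} {s t : ℂ → ℝ}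

theorem of_le_of_continuous {F : ℂ → ℝ} (hs : ∀ z ∈ D, SubMeanAt s z) (hF : Continuous F)
    (hsF : ∀ z ∈ D, s z ≤ F z) (hFf : ∀ ζ : frontier D, F ζ = f ζ) : IsPerronMinorant D f s := by
  refine ⟨hs, fun ζ y hy => ?_⟩
  filter_upwards [nhdsWithin_le_nhds (hF.continuousAt.eventually_lt_const ((hFf ζ).trans_lt hy)),
    self_mem_nhdsWithin] with z hz hzD
  exact (hsF z hzD).trans_lt hz

theorem const {a : ℝ} (ha : ∀ ζ, a ≤ f ζ) : IsPerronMinorant D f fun _ => a :=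
  ⟨fun z _ => .const a z, fun ζ _ hy => .of_forall fun _ => (ha ζ).trans_lt hy⟩

theorem add (hs : IsPerronMinorant D f s) (ht : IsPerronMinorant D g t) :
    IsPerronMinorant D (f + g) fun z => s z + t z := by
  refine ⟨fun z hz => (hs.subMeanAt z hz).add (ht.subMeanAt z hz), fun ζ y hy => ?_⟩
  obtain ⟨ε, hε, hy⟩ : ∃ ε > 0, y = f ζ + ε + (g ζ + ε) :=
    ⟨(y - (f ζ + g ζ)) / 2, half_pos (sub_pos.2 hy), by ring⟩
  filter_upwards [hs.eventually_lt ζ _ (lt_add_of_pos_right _ hε),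
    ht.eventually_lt ζ _ (lt_add_of_pos_right _ hε)] with z hsz htz
  exact hy ▸ add_lt_add hsz htz

theorem smul (hs : IsPerronMinorant D f s) {c : ℝ} (hc : 0 < c) :
    IsPerronMinorant D (c • f) fun z => c * s z := by
  refine ⟨fun z hz => (hs.subMeanAt z hz).const_mul hc.le, fun ζ y hy => ?_⟩
  filter_upwards [hs.eventually_lt ζ (y / c) ((lt_div_iff₀' hc).2 hy)] with z hz
  exact (lt_div_iff₀' hc).1 hz

theorem le_of_forall_le (hD : IsOpen D) (hbd : Bornology.IsBounded D)
    (hs : IsPerronMinorant D f s) {M : ℝ} (hM : ∀ ζ, f ζ ≤ M) {p : ℂ} (hp : p ∈ D) : s p ≤ M :=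
  le_of_forall_subMeanAt hD hbd hs.subMeanAt
    (fun ζ hζ y hy => hs.eventually_lt ⟨ζ, hζ⟩ y ((hM _).trans_lt hy)) hp

end IsPerronMinorant

/-- The functions in `C(frontier D, ℝ)` whose lower Perron solution is nonnegative at `p`, witnessed
by a single minorant. -/
def perronCone (D : Set ℂ) (p : ℂ) : PointedCone ℝ C(frontier D, ℝ) where
  carrier := {f | ∃ s, IsPerronMinorant D f s ∧ 0 ≤ s p}
  add_mem' := fun ⟨_, hs, hsp⟩ ⟨_, ht, htp⟩ => ⟨_, hs.add ht, add_nonneg hsp htp⟩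
  zero_mem' := ⟨_, .const (a := 0) fun _ => le_rfl, le_rfl⟩
  smul_mem' := by
    rintro ⟨c, hc⟩ f ⟨s, hs, hsp⟩
    rcases hc.eq_or_lt with rfl | hc
    · exact ⟨_, .const (a := 0) fun _ => by simp, le_rfl⟩
    · exact ⟨_, hs.smul hc, mul_nonneg hc.le hsp⟩

theorem mem_perronCone_of_nonneg {D : Set ℂ} {f : C(frontier D, ℝ)} (hf : 0 ≤ f) (p : ℂ) :
    f ∈ perronCone D p :=
  ⟨_, .const hf, le_rfl⟩

theorem nonempty_frontier_of_isBounded {D : Set ℂ} (hbd : Bornology.IsBounded D)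
    (hne : D.Nonempty) : (frontier D).Nonempty :=
  nonempty_frontier_iff.2 ⟨hne, fun h => NormedSpace.unbounded_univ ℝ ℂ (h ▸ hbd)⟩

theorem compactSpace_frontier {D : Set ℂ} (hbd : Bornology.IsBounded D) :
    CompactSpace (frontier D) :=
  isCompact_iff_compactSpace.1
    (hbd.isCompact_closure.of_isClosed_subset isClosed_frontier frontier_subset_closure)

theorem exists_linearMap_nonneg_on_perronCone {D : Set ℂ} (hD : IsOpen D)
    (hbd : Bornology.IsBounded D) {p : ℂ} (hp : p ∈ D) :
    ∃ g : C(frontier D, ℝ) →ₗ[ℝ] ℝ, g 1 = 1 ∧ ∀ f ∈ perronCone D p, 0 ≤ g f := by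
  have : CompactSpace (frontier D) := compactSpace_frontier hbd
  have : Nonempty (frontier D) := (nonempty_frontier_of_isBounded hbd ⟨p, hp⟩).to_subtype
  let f : C(frontier D, ℝ) →ₗ.[ℝ] ℝ := LinearPMap.mkSpanSingleton 1 1 one_ne_zero
  have nonneg : ∀ x : f.domain, (x : C(frontier D, ℝ)) ∈ perronCone D p → 0 ≤ f x := by
    rintro ⟨x, hx⟩ ⟨s, hs, hsp⟩
    obtain ⟨t, rfl⟩ := Submodule.mem_span_singleton.1 hx
    rw [LinearPMap.mkSpanSingleton'_apply, smul_eq_mul, mul_one]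
    exact hsp.trans (hs.le_of_forall_le hD hbd (fun ζ => by simp) hp)
  have cofinal : ∀ y, ∃ x : f.domain, (x : C(frontier D, ℝ)) + y ∈ perronCone D p := fun y =>
    ⟨⟨‖y‖ • 1, Submodule.smul_mem _ _ (Submodule.mem_span_singleton_self _)⟩,
      mem_perronCone_of_nonneg (fun ζ => by
        simpa [add_comm] using neg_le_iff_add_nonneg.1 (neg_le_of_abs_le (y.norm_coe_le_norm ζ))) p⟩
  obtain ⟨g, hgf, hg⟩ := riesz_extension (perronCone D p) f nonneg cofinal
  exact ⟨g, (hgf ⟨1, Submodule.mem_span_singleton_self 1⟩).trans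
    (LinearPMap.mkSpanSingleton_apply ℝ ℝ one_ne_zero 1), hg⟩

theorem exists_isHarmonicFunctional {D : Set ℂ} (hD : IsOpen D) (hbd : Bornology.IsBounded D)
    {p : ℂ} (hp : p ∈ D) : ∃ L, IsHarmonicFunctional D p L := by
  have : CompactSpace (frontier D) := compactSpace_frontier hbd
  obtain ⟨g, hg1, hg⟩ := exists_linearMap_nonneg_on_perronCone hD hbd hp
  have hle : ∀ f, g f ≤ ‖f‖ := fun f => by
    have := hg _ (mem_perronCone_of_nonneg (f := ‖f‖ • 1 - f) (fun ζ => by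
      simpa using (le_abs_self _).trans (f.norm_coe_le_norm ζ)) p)
    simpa [hg1] using this
  refine ⟨g.mkContinuous 1 fun f => ?_, fun f s hs => ?_⟩
  · rw [one_mul, Real.norm_eq_abs, abs_le', ← map_neg]
    exact ⟨hle f, (hle (-f)).trans_eq (norm_neg f)⟩
  · have := hg _ ⟨_, hs.add (.const (f := -(s p) • 1) (a := -(s p)) fun ζ => by simp),
      (add_neg_cancel (s p)).ge⟩
    simpa [hg1] using this

namespace IsHarmonicFunctional

variable {D : Set ℂ} {p : ℂ} {L : C(frontier D, ℝ) →L[ℝ] ℝ} {f g : C(frontier D, ℝ)}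

theorem map_nonneg (hL : IsHarmonicFunctional D p L) (hf : 0 ≤ f) : 0 ≤ L f :=
  hL f _ (.const hf)

theorem monotone (hL : IsHarmonicFunctional D p L) : Monotone L := fun f g hfg => by
  simpa using hL.map_nonneg (sub_nonneg.2 hfg)

theorem map_const (hL : IsHarmonicFunctional D p L) (a : ℝ) : L (ContinuousMap.const _ a) = a := by
  refine le_antisymm ?_ (hL _ _ (.const fun _ => le_rfl))
  have := hL _ _ (.const (f := -ContinuousMap.const (frontier D) a) (a := -a) fun _ => le_rfl)
  rw [map_neg] at this
  exact neg_le_neg_iff.1 this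

end IsHarmonicFunctional

/-! ### The logarithmic potential of a harmonic functional -/

/-- The continuous function `ζ ↦ log ‖ζ - z‖` on `K`. It is meant for `z ∉ K`; for other `z` it may
fail to be continuous and is then replaced by `0`. -/
noncomputable def logKernel (K : Set ℂ) (z : ℂ) : C(K, ℝ) :=
  .mkD (fun ζ => Real.log ‖(ζ : ℂ) - z‖) 0

theorem continuousOn_uncurry_log_norm_sub (K : Set ℂ) :
    ContinuousOn (Function.uncurry fun (z : ℂ) (ζ : K) => Real.log ‖(ζ : ℂ) - z‖)
      (Kᶜ ×ˢ univ) := by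
  refine ContinuousOn.log (by fun_prop) fun x hx => norm_ne_zero_iff.2 (sub_ne_zero.2 ?_)
  exact fun h => hx.1 (h ▸ x.2.2)

theorem continuousOn_logKernel (K : Set ℂ) : ContinuousOn (logKernel K) Kᶜ :=
  ContinuousMap.continuousOn_mkD_of_uncurry _ _ (continuousOn_uncurry_log_norm_sub K)

theorem logKernel_apply {K : Set ℂ} {z : ℂ} (hz : z ∉ K) (ζ : K) :
    logKernel K z ζ = Real.log ‖(ζ : ℂ) - z‖ :=
  ContinuousMap.mkD_apply_of_continuous <|
    (continuousOn_uncurry_log_norm_sub K).comp_continuous (by fun_prop : Continuous fun ζ => (z, ζ))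
      fun _ => ⟨hz, trivial⟩

theorem log_norm_sub_le_circleAverage (a c : ℂ) {R : ℝ} (hR : 0 < R) (hc : c ≠ a) :
    Real.log ‖c - a‖ ≤ circleAverage (fun z => Real.log ‖z - a‖) c R := by
  have hca : ‖c - a‖ ≠ 0 := norm_ne_zero_iff.2 (sub_ne_zero.2 hc)
  rw [circleAverage_log_norm_sub_const_eq_log_radius_add_posLog hR.ne', ← sub_le_iff_le_add',
    ← Real.log_div hca hR.ne', div_eq_inv_mul]
  exact le_max_right _ _

theorem harmonicAt_log_norm_sub {a z : ℂ} (hz : z ≠ a) :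
    HarmonicAt (fun z => Real.log ‖z - a‖) z :=
  AnalyticAt.harmonicAt_log_norm (f := fun z => z - a) (by fun_prop) (sub_ne_zero.2 hz)

theorem circleAverage_logKernel {K : Set ℂ} [CompactSpace K] {c : ℂ} {R : ℝ} (hR : 0 ≤ R)
    (hcR : closedBall c R ⊆ Kᶜ) : circleAverage (logKernel K) c R = logKernel K c := by
  rw [← abs_of_nonneg hR] at hcR
  ext ζ
  have hharm : HarmonicOnNhd (fun z => Real.log ‖z - (ζ : ℂ)‖) (closedBall c |R|) := fun z hz =>
    harmonicAt_log_norm_sub fun h => hcR hz (h ▸ ζ.2)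
  have hlog : ∀ z ∈ closedBall c |R|, logKernel K z ζ = Real.log ‖z - ζ‖ := fun z hz => by
    rw [logKernel_apply (hcR hz), norm_sub_rev]
  have hint := ((continuousOn_logKernel K).mono
    (sphere_subset_closedBall.trans hcR)).circleIntegrable'
  calc circleAverage (logKernel K) c R ζ
      = circleAverage (ContinuousMap.evalCLM ℝ ζ ∘ logKernel K) c R :=
        ((ContinuousMap.evalCLM ℝ ζ).circleAverage_comp_comm hint).symm
    _ = circleAverage (fun z => Real.log ‖z - ζ‖) c R :=
        Real.circleAverage_congr_sphere fun z hz => hlog z (sphere_subset_closedBall hz)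
    _ = logKernel K c ζ := by
        rw [hharm.circleAverage_eq, hlog c (mem_closedBall_self (abs_nonneg R))]

theorem subMeanAt_log_max_norm_sub (x z : ℂ) {τ : ℝ} (hτ : 0 < τ) :
    SubMeanAt (fun z => Real.log (max ‖z - x‖ τ)) z := by
  by_cases hz : z = x
  · refine (SubMeanAt.const (Real.log τ) z).congr ?_
    filter_upwards [ball_mem_nhds z hτ] with y hy
    rw [max_eq_right (by rw [← hz]; exact (mem_ball_iff_norm.1 hy).le)]
  · refine ((SubMeanAt.of_harmonicAt (harmonicAt_log_norm_sub hz)).max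
      (.const (Real.log τ) z)).congr ?_
    filter_upwards [isOpen_ne.mem_nhds hz] with y hy
    exact (Real.strictMonoOn_log.monotoneOn.map_max (norm_pos_iff.2 (sub_ne_zero.2 hy)) hτ).symm

theorem IsHarmonicFunctional.log_norm_sub_le {D : Set ℂ} (hD : IsOpen D) {p : ℂ}
    {L : C(frontier D, ℝ) →L[ℝ] ℝ} (hL : IsHarmonicFunctional D p L) {x : ℂ} (hx : x ∈ D)
    (hxp : x ≠ p) : Real.log ‖x - p‖ ≤ L (logKernel (frontier D) x) := by
  obtain ⟨ρ, hρ, hball⟩ := Metric.isOpen_iff.1 hD x hx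
  set τ := min ρ ‖p - x‖
  have hτ : 0 < τ := lt_min hρ (norm_pos_iff.2 (sub_ne_zero.2 hxp.symm))
  have hdisj : Disjoint (frontier D) D := disjoint_frontier_iff_isOpen.2 hD
  have hcont : Continuous fun z => Real.log (max ‖z - x‖ τ) :=
    Continuous.log (by fun_prop) fun z => (hτ.trans_le (le_max_right _ _)).ne'
  have hbdry : ∀ ζ : frontier D, Real.log (max ‖(ζ : ℂ) - x‖ τ) = logKernel (frontier D) x ζ := by
    intro ζ
    have hζ : (ζ : ℂ) ∉ ball x ρ := fun h => disjoint_left.1 hdisj ζ.2 (hball h)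
    rw [logKernel_apply (disjoint_right.1 hdisj hx), max_eq_left]
    exact (min_le_left _ _).trans (not_lt.1 (mem_ball_iff_norm.not.1 hζ))
  have := hL _ _ (.of_le_of_continuous (fun z _ => subMeanAt_log_max_norm_sub x z hτ) hcont
    (fun _ _ => le_rfl) hbdry)
  rwa [max_eq_left (min_le_right _ _), norm_sub_rev] at this

/-! ### Lower bounds for the Green function -/

/-- The function `log ‖z - p‖ - q z`, with the value `-∞` at the pole `p`. For a harmonic majorant
`q` of `log ‖z - p‖` it competes in the definition of the Green function. -/
noncomputable def logPole (p : ℂ) (q : ℂ → ℝ) (z : ℂ) : EReal :=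
  ENNReal.log ‖z - p‖ₑ + ((-q z : ℝ) : EReal)

theorem logPole_self (p : ℂ) (q : ℂ → ℝ) : logPole p q p = ⊥ := by
  simp [logPole]

theorem logPole_of_ne {p z : ℂ} (hz : z ≠ p) (q : ℂ → ℝ) :
    logPole p q z = ((Real.log ‖z - p‖ - q z : ℝ) : EReal) := by
  have hpos : 0 < ‖z - p‖ := norm_pos_iff.2 (sub_ne_zero.2 hz)
  rw [logPole, ← ofReal_norm, ENNReal.log_ofReal_of_pos hpos, ← EReal.coe_add, ← sub_eq_add_neg]

theorem logPole_lt_top (p : ℂ) (q : ℂ → ℝ) (z : ℂ) : logPole p q z < ⊤ := by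
  rcases eq_or_ne z p with rfl | hz
  · rw [logPole_self]
    exact bot_lt_top
  · rw [logPole_of_ne hz]
    exact EReal.coe_lt_top _

theorem continuousOn_logPole {p : ℂ} {q : ℂ → ℝ} {D : Set ℂ} (hq : ContinuousOn q D) :
    ContinuousOn (logPole p q) D := by
  intro z hz
  refine Tendsto.comp (g := fun x : EReal × EReal => x.1 + x.2)
    (EReal.continuousAt_add (.inr (EReal.coe_ne_bot _)) (.inr (EReal.coe_ne_top _)))
    (ContinuousWithinAt.prodMk ?_ ?_)
  · exact (ENNReal.continuous_log.comp (by fun_prop)).continuousWithinAt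
  · exact continuous_coe_real_ereal.continuousAt.comp_continuousWithinAt (hq z hz).neg

theorem circleAverage_sub_le_circleAvgTrunc_logPole {p c : ℂ} {q : ℂ → ℝ} {R : ℝ}
    (hq : CircleIntegrable q c R) (hR : R ≠ 0) (n : ℕ) :
    circleAverage (fun z => Real.log ‖z - p‖) c R - circleAverage q c R ≤
      circleAvgTrunc (logPole p q) c R n := by
  have hlog : CircleIntegrable (fun z => Real.log ‖z - p‖) c R :=
    circleIntegrable_log_norm_sub_const R
  have hmax := circleIntegrable_max (hlog.sub hq) (circleIntegrable_const (-n : ℝ) c R)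
  have heq : (fun z => max (Real.log ‖z - p‖ - q z) (-n : ℝ)) =ᶠ[codiscreteWithin (sphere c |R|)]
      truncBelow (logPole p q) n := by
    filter_upwards [compl_singleton_mem_codiscreteWithin p] with z hz
    rw [← EReal.coe_eq_coe_iff, coe_truncBelow (logPole_lt_top p q z), logPole_of_ne hz]
    exact (EReal.coe_strictMono.monotone.map_max).symm
  calc circleAverage (fun z => Real.log ‖z - p‖) c R - circleAverage q c R
      = circleAverage (fun z => Real.log ‖z - p‖ - q z) c R :=
        (Real.circleAverage_fun_sub hlog hq).symm
    _ ≤ circleAverage (fun z => max (Real.log ‖z - p‖ - q z) (-n : ℝ)) c R :=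
        Real.circleAverage_mono (hlog.sub hq) hmax fun _ _ => le_max_left _ _
    _ = circleAvgTrunc (logPole p q) c R n := Real.circleAverage_congr_codiscreteWithin heq hR

theorem subharmonicOn_logPole {D : Set ℂ} {q : ℂ → ℝ} (hq : ContinuousOn q D)
    (hmean : ∀ c ∈ D, ∀ R > 0, closedBall c R ⊆ D → circleAverage q c R ≤ q c) (p : ℂ) :
    SubharmonicOn (logPole p q) D := by
  refine ⟨(continuousOn_logPole hq).upperSemicontinuousOn, fun z _ => logPole_lt_top p q z,
    fun c hc R hR hcR => le_iInf fun n => ?_⟩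
  rcases eq_or_ne c p with rfl | hcp
  · rw [logPole_self]
    exact bot_le
  · have hint : CircleIntegrable q c R := (hq.mono (sphere_subset_closedBall.trans
      (by rwa [abs_of_pos hR]))).circleIntegrable'
    rw [logPole_of_ne hcp, EReal.coe_le_coe_iff]
    exact (sub_le_sub (log_norm_sub_le_circleAverage p c hR hcp) (hmean c hc R hR hcR)).trans
      (circleAverage_sub_le_circleAvgTrunc_logPole hint hR.ne' n)

theorem logPole_le_greenFn {D : Set ℂ} (hD : IsOpen D) {p : ℂ} (hp : p ∈ D) {q : ℂ → ℝ}
    (hq : ContinuousOn q D)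
    (hmean : ∀ c ∈ D, ∀ R > 0, closedBall c R ⊆ D → circleAverage q c R ≤ q c)
    (hlog : ∀ z ∈ D, z ≠ p → Real.log ‖z - p‖ < q z) (z : ℂ) :
    logPole p q z ≤ greenFn D p z := by
  refine le_sSup ⟨logPole p q, subharmonicOn_logPole hq hmean p, fun x hx => ?_,
    ⟨1 - q p, ?_⟩, rfl⟩
  · rcases eq_or_ne x p with rfl | hxp
    · rw [logPole_self]
      exact EReal.bot_lt_zero
    · rw [logPole_of_ne hxp]
      exact EReal.coe_neg'.2 (sub_neg.2 (hlog x hx hxp))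
  · filter_upwards [(hq.continuousAt (hD.mem_nhds hp)).eventually_const_lt (sub_one_lt (q p))]
      with x hx
    rcases eq_or_ne x p with rfl | hxp
    · rw [logPole_self]
      exact bot_le
    · rw [logPole_of_ne hxp, EReal.coe_le_coe_iff]
      linarith

theorem IsHarmonicFunctional.log_sub_le_greenFn {D : Set ℂ} (hD : IsOpen D)
    (hbd : Bornology.IsBounded D) {p : ℂ} (hp : p ∈ D) {L : C(frontier D, ℝ) →L[ℝ] ℝ}
    (hL : IsHarmonicFunctional D p L) {z : ℂ} (hz : z ≠ p) :
    ((Real.log ‖z - p‖ - L (logKernel (frontier D) z) : ℝ) : EReal) ≤ greenFn D p z := by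
  have := compactSpace_frontier hbd
  have hsub : D ⊆ (frontier D)ᶜ := (disjoint_frontier_iff_isOpen.2 hD).subset_compl_left
  refine EReal.ge_of_forall_gt_iff_ge.1 fun a ha => ?_
  set η := Real.log ‖z - p‖ - L (logKernel (frontier D) z) - a
  have hη0 : 0 < η := sub_pos.2 (EReal.coe_lt_coe_iff.1 ha)
  set q : ℂ → ℝ := fun x => L (logKernel (frontier D) x) + η
  have hq : ContinuousOn q D := (L.continuous.comp_continuousOn
    ((continuousOn_logKernel _).mono hsub)).add continuousOn_const
  have hmean : ∀ c ∈ D, ∀ R > 0, closedBall c R ⊆ D → circleAverage q c R ≤ q c := by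
    intro c _ R hR hcR
    have hcont : ContinuousOn (logKernel (frontier D)) (sphere c |R|) :=
      (continuousOn_logKernel _).mono ((sphere_subset_closedBall.trans
        (by rwa [abs_of_pos hR])).trans hsub)
    refine ((Real.circleAverage_fun_add (L.continuous.comp_continuousOn hcont).circleIntegrable'
      (circleIntegrable_const η c R)).trans ?_).le
    rw [Real.circleAverage_const, L.circleAverage_comp_comm hcont.circleIntegrable',
      circleAverage_logKernel hR.le (hcR.trans hsub)]
  refine le_trans (le_of_eq ?_) (logPole_le_greenFn hD hp hq hmean (fun x hx hxp => ?_) z)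
  · rw [logPole_of_ne hz, EReal.coe_eq_coe_iff]
    ring
  · exact (hL.log_norm_sub_le hD hx hxp).trans_lt (lt_add_of_pos_right _ hη0)

/-! ### The Poisson integral -/

/-- The Poisson integral over the circle of radius `R` around `c` of a function `f`; it solves the
Dirichlet problem in the disc bounded by this circle. -/
noncomputable def poissonIntegral (f : ℂ → ℝ) (c : ℂ) (R : ℝ) (z : ℂ) : ℝ :=
  circleAverage (poissonKernel c z • f) c R

section PoissonIntegral

variable {f : ℂ → ℝ} {c z ζ : ℂ} {R : ℝ}

theorem poissonKernel_nonneg (hz : z ∈ ball c R) (hζ : ζ ∈ sphere c |R|) :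
    0 ≤ poissonKernel c z ζ := by
  have hR : 0 < R := dist_nonneg.trans_lt (mem_ball.1 hz)
  rw [abs_of_pos hR] at hζ
  rw [poissonKernel, mem_sphere_iff_norm.1 hζ]
  have := (mem_ball_iff_norm.1 hz).le
  exact div_nonneg (sub_nonneg.2 (by gcongr)) (sq_nonneg _)

theorem poissonKernel_le_div_sq (hz : z ∈ ball c R) (hζ : ζ ∈ sphere c |R|) {d : ℝ} (hd : 0 < d)
    (hdζ : d ≤ dist ζ z) : poissonKernel c z ζ ≤ (R ^ 2 - ‖z - c‖ ^ 2) / d ^ 2 := by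
  have hR : 0 < R := dist_nonneg.trans_lt (mem_ball.1 hz)
  rw [abs_of_pos hR] at hζ
  have := (mem_ball_iff_norm.1 hz).le
  rw [poissonKernel, mem_sphere_iff_norm.1 hζ, sub_sub_sub_cancel_right, ← dist_eq_norm ζ z]
  exact div_le_div_of_nonneg_left (sub_nonneg.2 (by gcongr)) (by positivity) (by gcongr)

theorem continuousOn_poissonKernel (hz : z ∈ ball c R) :
    ContinuousOn (poissonKernel c z) (sphere c |R|) := by
  rw [poissonKernel_eq_re_herglotzRieszKernel]
  exact Complex.continuous_re.comp_continuousOn (continuousOn_herglotzRieszKernel_sphere hz)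

theorem circleAverage_poissonKernel (hz : z ∈ ball c R) :
    circleAverage (poissonKernel c z) c R = 1 := by
  have := HarmonicOnNhd.circleAverage_poissonKernel_smul (f := fun _ => (1 : ℝ))
    (fun x _ => harmonicAt_const 1) hz
  rwa [show poissonKernel c z • (fun _ => (1 : ℝ)) = poissonKernel c z from mul_one _] at this

theorem poissonIntegral_center (hR : R ≠ 0) : poissonIntegral f c R c = circleAverage f c R := by
  refine Real.circleAverage_congr_sphere fun ζ hζ => ?_
  have hζ : ‖ζ - c‖ = |R| := mem_sphere_iff_norm.1 hζ
  simp [poissonKernel, hζ, hR]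

theorem poissonIntegral_nonneg (hf : ∀ ζ ∈ sphere c |R|, 0 ≤ f ζ) (hz : z ∈ ball c R) :
    0 ≤ poissonIntegral f c R z :=
  Real.circleAverage_nonneg_of_nonneg fun ζ hζ => mul_nonneg (poissonKernel_nonneg hz hζ) (hf ζ hζ)

theorem harmonicAt_poissonIntegral (hf : CircleIntegrable f c R) (hz : z ∈ ball c R) :
    HarmonicAt (poissonIntegral f c R) z := by
  have hf₀ : CircleIntegrable (fun ζ => f (ζ + c)) 0 R := by
    simpa only [circleIntegrable_def, circleMap, zero_add, add_comm c] using hf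
  have hf₁ : CircleIntegrable (fun ζ => (f (ζ + c) : ℂ)) 0 R := by
    rw [circleIntegrable_def, intervalIntegrable_iff] at hf₀ ⊢
    exact Complex.ofRealCLM.integrable_comp hf₀
  have hball : ∀ x ∈ ball c R, x - c ∈ ball 0 R := fun x hx => by
    rwa [mem_ball_zero_iff, ← mem_ball_iff_norm]
  have hana := (analyticOnNhd_circleAverage_herglotzRieszKernel_smul hf₁ _ (hball z hz)).fun_comp
    (f := fun x => x - c) (x := z) (by fun_prop)
  refine (harmonicAt_congr_nhds ?_).1 hana.harmonicAt_re
  filter_upwards [isOpen_ball.mem_nhds hz] with x hx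
  rw [re_circleAverage_herglotzRieszKernel_smul hf₀ (hball x hx),
    poissonIntegral, ← Real.circleAverage_map_add_const (c := c)]
  congr 1 with ζ
  simp [poissonKernel_eq_re_herglotzRieszKernel, herglotzRieszKernel_add_const]

theorem abs_poissonIntegral_sub_le (hf : CircleIntegrable f c R) (hz : z ∈ ball c R) {a ε C : ℝ}
    (h : ∀ ζ ∈ sphere c |R|,
      poissonKernel c z ζ * |f ζ - a| ≤ ε * poissonKernel c z ζ + C * |f ζ - a|) :
    |poissonIntegral f c R z - a| ≤ ε + C * circleAverage (fun ζ => |f ζ - a|) c R := by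
  have hP : CircleIntegrable (poissonKernel c z) c R :=
    (continuousOn_poissonKernel hz).circleIntegrable'
  have hfa : CircleIntegrable (fun ζ => f ζ - a) c R := hf.sub (circleIntegrable_const a c R)
  have hPf := hf.continuousOn_smul (continuousOn_poissonKernel hz)
  have hPfa := hfa.continuousOn_smul (continuousOn_poissonKernel hz)
  calc |poissonIntegral f c R z - a|
      = |circleAverage (poissonKernel c z • fun ζ => f ζ - a) c R| := by
        have ha : circleAverage (a • poissonKernel c z) c R = a := by
          rw [Real.circleAverage_smul, circleAverage_poissonKernel hz, smul_eq_mul, mul_one]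
        nth_rw 1 [poissonIntegral, ← ha]
        rw [← Real.circleAverage_sub hPf hP.const_smul]
        congr 2 with ζ
        change poissonKernel c z ζ * f ζ - a * poissonKernel c z ζ = poissonKernel c z ζ * (f ζ - a)
        ring
    _ ≤ circleAverage |poissonKernel c z • fun ζ => f ζ - a| c R :=
        Real.abs_circleAverage_le_circleAverage_abs
    _ ≤ circleAverage (fun ζ => ε • poissonKernel c z ζ + C • |f ζ - a|) c R := by
        refine Real.circleAverage_mono hPfa.abs (hP.const_smul.add hfa.abs.const_smul)
          fun ζ hζ => ?_
        rw [Pi.abs_apply, Pi.smul_apply', smul_eq_mul, abs_mul,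
          abs_of_nonneg (poissonKernel_nonneg hz hζ)]
        exact h ζ hζ
    _ = circleAverage (fun ζ => ε • poissonKernel c z ζ) c R +
          circleAverage (fun ζ => C • |f ζ - a|) c R :=
        Real.circleAverage_fun_add hP.const_smul hfa.abs.const_smul
    _ = ε + C * circleAverage (fun ζ => |f ζ - a|) c R := by
        rw [Real.circleAverage_fun_smul, Real.circleAverage_fun_smul,
          circleAverage_poissonKernel hz, smul_eq_mul, smul_eq_mul, mul_one]

theorem tendsto_poissonIntegral (hf : CircleIntegrable f c R) (hζ : ζ ∈ sphere c R)
    (hcont : ContinuousWithinAt f (sphere c R) ζ) :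
    Tendsto (poissonIntegral f c R) (𝓝[ball c R] ζ) (𝓝 (f ζ)) := by
  refine Metric.tendsto_nhds.2 fun ε hε => ?_
  obtain ⟨δ, hδ, hfδ⟩ := Metric.continuousWithinAt_iff.1 hcont (ε / 2) (half_pos hε)
  set M := circleAverage (fun x => |f x - f ζ|) c R
  have hsmall : ∀ᶠ z in 𝓝 ζ, (R ^ 2 - ‖z - c‖ ^ 2) / (δ / 2) ^ 2 * M < ε / 2 := by
    refine ContinuousAt.eventually_lt (by fun_prop) continuousAt_const ?_
    rw [mem_sphere_iff_norm.1 hζ]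
    simpa using hε
  filter_upwards [nhdsWithin_le_nhds hsmall, nhdsWithin_le_nhds (ball_mem_nhds ζ (half_pos hδ)),
    self_mem_nhdsWithin] with z hzM hzδ hz
  refine (abs_poissonIntegral_sub_le hf hz fun x hx => ?_).trans_lt
    (add_lt_add_of_le_of_lt le_rfl hzM |>.trans_eq (add_halves ε))
  have hP := poissonKernel_nonneg hz hx
  have hR : 0 < R := dist_nonneg.trans_lt (mem_ball.1 hz)
  rcases lt_or_ge (dist x ζ) δ with hxδ | hxδ
  · have hxε : |f x - f ζ| ≤ ε / 2 := (hfδ (by rwa [abs_of_pos hR] at hx) hxδ).le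
    have hC : 0 ≤ (R ^ 2 - ‖z - c‖ ^ 2) / (δ / 2) ^ 2 * |f x - f ζ| := by
      have := (mem_ball_iff_norm.1 hz).le
      exact mul_nonneg (div_nonneg (sub_nonneg.2 (by gcongr)) (sq_nonneg _)) (abs_nonneg _)
    rw [mul_comm]
    exact (mul_le_mul_of_nonneg_right hxε hP).trans (le_add_of_nonneg_right hC)
  · have hd : δ / 2 ≤ dist x z := by
      linarith [dist_triangle x z ζ, mem_ball.1 hzδ]
    exact (mul_le_mul_of_nonneg_right (poissonKernel_le_div_sq hz hx (half_pos hδ) hd)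
      (abs_nonneg _)).trans (le_add_of_nonneg_left (by positivity))

end PoissonIntegral

/-! ### Barriers -/

theorem RegularBoundaryPt.exists_subMeanAt {D : Set ℂ} {w : ℂ} (hw : RegularBoundaryPt D w)
    (hD : IsOpen D) : ∃ U ∈ 𝓝 w, ∃ b : ℂ → ℝ, (∀ z ∈ U ∩ D, SubMeanAt b z) ∧
      (∀ z ∈ U ∩ D, b z < 0) ∧ Tendsto b (𝓝[D] w) (𝓝 0) := by
  obtain ⟨U, hU, hwU, u, hu, hneg, hlim⟩ := hw
  refine ⟨U, hU.mem_nhds hwU, truncBelow u 1,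
    fun z hz => hu.subMeanAt_truncBelow (hU.inter hD) hz 1, fun z hz => ?_, ?_⟩
  · rw [← EReal.coe_lt_coe_iff, coe_truncBelow (hu.2.1 z hz)]
    exact max_lt (hneg z hz) (EReal.coe_lt_coe_iff.2 (by norm_num))
  · have hmax : Tendsto (fun z => max (u z) (-((1 : ℕ) : ℝ) : EReal)) (𝓝[U ∩ D] w) (𝓝 0) := by
      simpa using hlim.max (tendsto_const_nhds (x := (-((1 : ℕ) : ℝ) : EReal)))
    rw [← nhdsWithin_inter_of_mem' (nhdsWithin_le_nhds (hU.mem_nhds hwU)), inter_comm]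
    exact (EReal.tendsto_toReal EReal.zero_ne_top EReal.zero_ne_bot).comp hmax

theorem circleIntegrable_indicator_one {A : Set ℂ} (hA : MeasurableSet A) (c : ℂ) (R : ℝ) :
    CircleIntegrable (A.indicator 1 : ℂ → ℝ) c R := by
  have := circleIntegrable_const (1 : ℝ) c R
  rw [circleIntegrable_def, intervalIntegrable_iff] at *
  exact IntegrableOn.indicator this ((measurable_circleMap c R) hA)

theorem circleAverage_indicator_one {A : Set ℂ} (hA : MeasurableSet A) (c : ℂ) (R : ℝ) :
    circleAverage (A.indicator 1 : ℂ → ℝ) c R = (2 * Real.pi)⁻¹ *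
      ((volume.restrict (Ioc 0 (2 * Real.pi))).map (circleMap c R)).real A := by
  rw [Real.circleAverage_def, intervalIntegral.integral_of_le Real.two_pi_pos.le,
    ← integral_indicator_one hA, integral_map (measurable_circleMap c R).aemeasurable
      (by measurability), smul_eq_mul]

theorem exists_isCompact_circleAverage_indicator_lt {D : Set ℂ} (hD : IsOpen D) (c : ℂ) (R : ℝ)
    {ε : ℝ} (hε : 0 < ε) : ∃ K ⊆ D, IsCompact K ∧
      circleAverage ((D \ K).indicator 1 : ℂ → ℝ) c R < ε := by
  obtain ⟨K, hKD, hK, hlt⟩ := hD.measurableSet.exists_isCompact_sdiff_lt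
    (μ := (volume.restrict (Ioc 0 (2 * Real.pi))).map (circleMap c R)) (measure_ne_top _ _)
    (ε := ENNReal.ofReal (2 * Real.pi * ε)) (by simpa using by positivity)
  refine ⟨K, hKD, hK, ?_⟩
  rw [circleAverage_indicator_one (hD.measurableSet.diff hK.measurableSet),
    inv_mul_lt_iff₀ Real.two_pi_pos]
  exact (ENNReal.lt_ofReal_iff_toReal_lt hlt.ne_top).1 hlt

theorem exists_pos_mul_le_of_upperSemicontinuousOn {X : Type*} [TopologicalSpace X] {b : X → ℝ}
    {K : Set X} (hb : UpperSemicontinuousOn b K) (hK : IsCompact K) (hneg : ∀ z ∈ K, b z < 0)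
    (a : ℝ) : ∃ t > 0, ∀ z ∈ K, t * b z ≤ a := by
  rcases K.eq_empty_or_nonempty with rfl | hne
  · exact ⟨1, one_pos, by simp⟩
  obtain ⟨m, hmK, hmax⟩ := hb.exists_isMaxOn hne hK
  refine ⟨max (a / b m) 1, by positivity, fun z hz => ?_⟩
  calc max (a / b m) 1 * b z ≤ max (a / b m) 1 * b m := by gcongr; exact hmax hz
    _ ≤ a / b m * b m := mul_le_mul_of_nonpos_right (le_max_left _ _) (hneg m hmK).le
    _ = a := div_mul_cancel₀ a (hneg m hmK).ne

theorem subMeanAt_piecewise_max {v : ℂ → ℝ} {a : ℝ} {B : Set ℂ} [∀ z, Decidable (z ∈ B)]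
    (hB : IsOpen B) {z : ℂ} (hv : z ∈ B → SubMeanAt v z)
    (hle : z ∈ frontier B → ∀ᶠ x in 𝓝[B] z, v x ≤ a) :
    SubMeanAt (B.piecewise (fun x => max (v x) a) fun _ => a) z := by
  by_cases hz : z ∈ B
  · refine ((hv hz).max (.const a z)).congr ?_
    filter_upwards [hB.mem_nhds hz] with x hx
    rw [piecewise_eq_of_mem _ _ _ hx]
  · have hle : ∀ᶠ x in 𝓝[B] z, v x ≤ a := by
      by_cases hcl : z ∈ closure B
      · exact hle ⟨hcl, fun h => hz (interior_subset h)⟩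
      · simp [notMem_closure_iff_nhdsWithin_eq_bot.1 hcl]
    refine (SubMeanAt.const a z).congr ?_
    filter_upwards [eventually_nhdsWithin_iff.1 hle] with x hx
    by_cases hxB : x ∈ B
    · rw [piecewise_eq_of_mem _ _ _ hxB, max_eq_right (hx hxB)]
    · rw [piecewise_eq_of_notMem _ _ _ hxB]

theorem exists_harmonicOnNhd_ball_tendsto_one {D : Set ℂ} (hD : IsOpen D) (w : ℂ) {r : ℝ}
    (hr : 0 < r) {ε : ℝ} (hε : 0 < ε) : ∃ K ⊆ D, IsCompact K ∧ ∃ H : ℂ → ℝ,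
      HarmonicOnNhd H (ball w r) ∧ (∀ z ∈ ball w r, 0 ≤ H z) ∧ H w < ε ∧
      ∀ ζ ∈ sphere w r, ζ ∈ D → ζ ∉ K → Tendsto H (𝓝[ball w r] ζ) (𝓝 1) := by
  obtain ⟨K, hKD, hK, hKε⟩ := exists_isCompact_circleAverage_indicator_lt hD w r hε
  have hint := circleIntegrable_indicator_one (hD.measurableSet.diff hK.measurableSet) w r
  refine ⟨K, hKD, hK, poissonIntegral ((D \ K).indicator 1) w r,
    fun z hz => harmonicAt_poissonIntegral hint hz,
    fun z hz => poissonIntegral_nonneg (fun ζ _ => indicator_nonneg (fun _ _ => zero_le_one) ζ) hz,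
    (poissonIntegral_center hr.ne').trans_lt hKε, fun ζ hζ hζD hζK => ?_⟩
  have heq : (D \ K).indicator (1 : ℂ → ℝ) =ᶠ[𝓝 ζ] fun _ => 1 := by
    filter_upwards [(hD.sdiff hK.isClosed).mem_nhds ⟨hζD, hζK⟩] with z hz
    exact indicator_of_mem hz _
  exact heq.eq_of_nhds ▸
    tendsto_poissonIntegral hint hζ (continuousAt_const.congr heq.symm).continuousWithinAt

/-- Near a compact `K ⊆ D` the bound `v ≤ -1` on the sphere comes from a large multiple of the weak
barrier `b`; near the rest of `sphere w r ∩ D`, which has small measure, it comes from a harmonic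
function that is small at `w`. -/
theorem exists_subMeanAt_ball_le_neg_one_near_sphere {D : Set ℂ} (hD : IsOpen D) {w : ℂ}
    {b : ℂ → ℝ} {r : ℝ} (hr : 0 < r) (hb : ∀ z ∈ closedBall w r ∩ D, SubMeanAt b z)
    (hneg : ∀ z ∈ closedBall w r ∩ D, b z < 0) (hlim : Tendsto b (𝓝[D] w) (𝓝 0)) {ε : ℝ}
    (hε : 0 < ε) : ∃ v : ℂ → ℝ, (∀ z ∈ ball w r ∩ D, SubMeanAt v z) ∧
      (∀ z ∈ ball w r ∩ D, v z ≤ 0) ∧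
      (∀ ζ ∈ sphere w r ∩ D, ∀ᶠ z in 𝓝[ball w r] ζ, v z ≤ -1) ∧ ∀ᶠ p in 𝓝[D] w, -ε < v p := by
  obtain ⟨K, hKD, hK, H, hH, hH0, hHw, hHK⟩ :=
    exists_harmonicOnNhd_ball_tendsto_one hD w hr (ε := ε / 4) (by positivity)
  have hball : ∀ z ∈ ball w r ∩ D, z ∈ closedBall w r ∩ D := fun z hz =>
    ⟨ball_subset_closedBall hz.1, hz.2⟩
  have hsphere : ∀ z ∈ sphere w r ∩ D, z ∈ closedBall w r ∩ D := fun z hz =>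
    ⟨sphere_subset_closedBall hz.1, hz.2⟩
  have hsphereK : ∀ z ∈ sphere w r ∩ K, z ∈ closedBall w r ∩ D := fun z hz =>
    hsphere z ⟨hz.1, hKD hz.2⟩
  obtain ⟨t, ht, htK⟩ : ∃ t > 0, ∀ z ∈ sphere w r ∩ K, t * b z ≤ -2 :=
    exists_pos_mul_le_of_upperSemicontinuousOn
      (fun z hz => (hb z (hsphereK z hz)).upperSemicontinuousAt.upperSemicontinuousWithinAt _)
      (hK.inter_left isClosed_sphere) (fun z hz => hneg z (hsphereK z hz)) _
  have htb : ∀ z ∈ ball w r ∩ D, t * b z < 0 := fun z hz =>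
    mul_neg_of_pos_of_neg ht (hneg z (hball z hz))
  refine ⟨fun z => t * b z + -2 * H z, fun z hz => ?_, fun z hz => ?_, fun ζ hζ => ?_, ?_⟩
  · exact ((hb z (hball z hz)).const_mul ht.le).add
      (.of_harmonicAt ((hH z hz.1).const_smul (c := -2)))
  · linarith [hH0 z hz.1, htb z hz]
  · by_cases hζK : ζ ∈ K
    · have husc := ((hb ζ (hsphere ζ hζ)).const_mul ht.le).upperSemicontinuousAt (-1)
        ((htK ζ ⟨hζ.1, hζK⟩).trans_lt (by norm_num))
      filter_upwards [nhdsWithin_le_nhds husc, self_mem_nhdsWithin] with z hz hzB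
      linarith [hH0 z hzB]
    · filter_upwards [(hHK ζ hζ.1 hζ.2 hζK).eventually_const_lt one_half_lt_one,
        self_mem_nhdsWithin, nhdsWithin_le_nhds (hD.mem_nhds hζ.2)] with z hz hzB hzD
      linarith [htb z ⟨hzB, hzD⟩]
  · have hHlt := (hH w (mem_ball_self hr)).1.continuousAt.eventually_lt_const hHw
    have hblt := (hlim.const_mul t).eventually_const_lt (u := -(ε / 2))
      (by rw [mul_zero]; linarith)
    filter_upwards [nhdsWithin_le_nhds hHlt, hblt] with p hHp hbp
    linarith

theorem exists_subMeanAt_eq_neg_one_off_ball {D : Set ℂ} (hD : IsOpen D) {w : ℂ}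
    {b : ℂ → ℝ} {r : ℝ} (hr : 0 < r) (hb : ∀ z ∈ closedBall w r ∩ D, SubMeanAt b z)
    (hneg : ∀ z ∈ closedBall w r ∩ D, b z < 0) (hlim : Tendsto b (𝓝[D] w) (𝓝 0)) {ε : ℝ}
    (hε : 0 < ε) : ∃ s : ℂ → ℝ, (∀ z ∈ D, SubMeanAt s z) ∧ (∀ z ∈ D, s z ≤ 0) ∧
      (∀ z, z ∉ ball w r → s z = -1) ∧ ∀ᶠ p in 𝓝[D] w, -ε < s p := by
  classical
  obtain ⟨v, hv, hv0, hvfr, hvw⟩ :=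
    exists_subMeanAt_ball_le_neg_one_near_sphere hD hr hb hneg hlim hε
  refine ⟨(ball w r).piecewise (fun z => max (v z) (-1)) fun _ => -1, fun z hz =>
    subMeanAt_piecewise_max isOpen_ball (fun hzB => hv z ⟨hzB, hz⟩)
      fun hzfr => hvfr z ⟨frontier_ball w hr.ne' ▸ hzfr, hz⟩,
    fun z hz => ?_, fun z hz => piecewise_eq_of_notMem _ _ _ hz, ?_⟩
  · by_cases hzB : z ∈ ball w r
    · rw [piecewise_eq_of_mem _ _ _ hzB]
      exact max_le (hv0 z ⟨hzB, hz⟩) (by norm_num)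
    · rw [piecewise_eq_of_notMem _ _ _ hzB]
      norm_num
  · filter_upwards [hvw, nhdsWithin_le_nhds (ball_mem_nhds w hr)] with p hp hpB
    rw [piecewise_eq_of_mem _ _ _ hpB]
    exact lt_max_of_lt_left hp

theorem RegularBoundaryPt.exists_strong_barrier {D : Set ℂ} {w : ℂ} (hw : RegularBoundaryPt D w)
    (hD : IsOpen D) {δ ε : ℝ} (hδ : 0 < δ) (hε : 0 < ε) :
    ∃ s : ℂ → ℝ, (∀ z ∈ D, SubMeanAt s z) ∧ (∀ z ∈ D, s z ≤ 0) ∧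
      (∀ z, z ∉ ball w δ → s z = -1) ∧ ∀ᶠ p in 𝓝[D] w, -ε < s p := by
  obtain ⟨U, hU, b, hb, hneg, hlim⟩ := hw.exists_subMeanAt hD
  obtain ⟨ρ, hρ, hρU⟩ := nhds_basis_closedBall.mem_iff.1 hU
  have hsub : closedBall w (min ρ δ) ∩ D ⊆ U ∩ D :=
    inter_subset_inter_left D ((closedBall_subset_closedBall (min_le_left ρ δ)).trans hρU)
  obtain ⟨s, hs, hs0, hs1, hsw⟩ := exists_subMeanAt_eq_neg_one_off_ball hD (lt_min hρ hδ)
    (fun z hz => hb z (hsub hz)) (fun z hz => hneg z (hsub hz)) hlim hε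
  exact ⟨s, hs, hs0, fun z hz => hs1 z fun h => hz (ball_subset_ball (min_le_right ρ δ) h), hsw⟩

/-! ### Sublevel sets of the Green function -/

/-- The function `ζ ↦ ‖ζ - w‖` on the boundary of `D`. Its harmonic measure integral at `p` tends
to `0` as `p` tends to a regular boundary point `w`. -/
noncomputable def frontierDist (D : Set ℂ) (w : ℂ) : C(frontier D, ℝ) :=
  ⟨fun ζ => ‖(ζ : ℂ) - w‖, by fun_prop⟩

theorem RegularBoundaryPt.eventually_frontierDist_le {D : Set ℂ} {w : ℂ}
    (hw : RegularBoundaryPt D w) (hD : IsOpen D) (hbd : Bornology.IsBounded D) {ε : ℝ}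
    (hε : 0 < ε) : ∀ᶠ p in 𝓝[D] w, ∀ L : C(frontier D, ℝ) →L[ℝ] ℝ, IsHarmonicFunctional D p L →
      L (frontierDist D w) ≤ ε := by
  obtain ⟨B, hB0, hB⟩ : ∃ B > 0, ∀ z ∈ D, ‖z - w‖ ≤ B := by
    obtain ⟨B, hB⟩ := hbd.subset_closedBall w
    exact ⟨max B 1, by positivity,
      fun z hz => (mem_closedBall_iff_norm.1 (hB hz)).trans (le_max_left _ _)⟩
  obtain ⟨s, hs, hs0, hs1, hsw⟩ :=
    hw.exists_strong_barrier hD (half_pos hε) (div_pos (half_pos hε) hB0)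
  have hsB : ∀ z ∈ D, B * s z ≤ ε / 2 - ‖z - w‖ := by
    intro z hz
    by_cases hzw : z ∈ ball w (ε / 2)
    · exact (mul_nonpos_of_nonneg_of_nonpos hB0.le (hs0 z hz)).trans
        (sub_nonneg.2 (mem_ball_iff_norm.1 hzw).le)
    · rw [hs1 z hzw]
      linarith [hB z hz]
  filter_upwards [hsw] with p hp L hL
  have hmin : IsPerronMinorant D (.const _ (ε / 2) - frontierDist D w) fun z => B * s z :=
    .of_le_of_continuous (F := fun z => ε / 2 - ‖z - w‖) (fun z hz => (hs z hz).const_mul hB0.le)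
      (by fun_prop) hsB fun _ => rfl
  have hLs := hL _ _ hmin
  rw [map_sub, hL.map_const] at hLs
  rw [← neg_div, div_lt_iff₀' hB0] at hp
  linarith

theorem log_norm_sub_le_log_add {p z ζ : ℂ} (w : ℂ) (hz : z ≠ p) (hζ : ζ ≠ z) :
    Real.log ‖ζ - z‖ ≤ Real.log ‖z - p‖ + (‖p - w‖ + ‖ζ - w‖) / ‖z - p‖ := by
  have hzp : 0 < ‖z - p‖ := norm_pos_iff.2 (sub_ne_zero.2 hz)
  have hζz : 0 < ‖ζ - z‖ := norm_pos_iff.2 (sub_ne_zero.2 hζ)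
  have htri : ‖ζ - z‖ ≤ ‖z - p‖ + (‖p - w‖ + ‖ζ - w‖) := by
    calc ‖ζ - z‖ = ‖(ζ - w) - ((z - p) + (p - w))‖ := by congr 1; ring
      _ ≤ ‖ζ - w‖ + (‖z - p‖ + ‖p - w‖) := norm_sub_le_of_le le_rfl (norm_add_le _ _)
      _ = ‖z - p‖ + (‖p - w‖ + ‖ζ - w‖) := by ring
  calc Real.log ‖ζ - z‖ = Real.log ‖z - p‖ + Real.log (‖ζ - z‖ / ‖z - p‖) := by
        rw [Real.log_div hζz.ne' hzp.ne']; ring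
    _ ≤ Real.log ‖z - p‖ + (‖ζ - z‖ / ‖z - p‖ - 1) := by
        gcongr
        exact Real.log_le_sub_one_of_pos (div_pos hζz hzp)
    _ ≤ Real.log ‖z - p‖ + (‖p - w‖ + ‖ζ - w‖) / ‖z - p‖ := by
        rw [div_sub_one hzp.ne']
        gcongr
        linarith

theorem IsHarmonicFunctional.logKernel_le {D : Set ℂ} (hD : IsOpen D) {p : ℂ}
    {L : C(frontier D, ℝ) →L[ℝ] ℝ} (hL : IsHarmonicFunctional D p L) (w : ℂ) {z : ℂ} (hz : z ∈ D)
    (hzp : z ≠ p) : L (logKernel (frontier D) z) ≤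
      Real.log ‖z - p‖ + (‖p - w‖ + L (frontierDist D w)) / ‖z - p‖ := by
  have hzfr : z ∉ frontier D := disjoint_right.1 (disjoint_frontier_iff_isOpen.2 hD) hz
  set a := Real.log ‖z - p‖ + ‖p - w‖ / ‖z - p‖
  have hle : logKernel (frontier D) z ≤ .const _ a + ‖z - p‖⁻¹ • frontierDist D w := by
    refine ContinuousMap.le_def.2 fun ζ => ?_
    rw [logKernel_apply hzfr]
    refine (log_norm_sub_le_log_add w hzp (ne_of_mem_of_not_mem ζ.2 hzfr)).trans_eq ?_
    change _ = a + ‖z - p‖⁻¹ * ‖(ζ : ℂ) - w‖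
    ring
  refine (hL.monotone hle).trans_eq ?_
  rw [map_add, map_smul, hL.map_const, smul_eq_mul]
  ring

theorem IsHarmonicFunctional.dist_le_of_greenFn_lt_neg_one {D : Set ℂ} (hD : IsOpen D)
    (hbd : Bornology.IsBounded D) {p : ℂ} (hp : p ∈ D) {L : C(frontier D, ℝ) →L[ℝ] ℝ}
    (hL : IsHarmonicFunctional D p L) (w : ℂ) {z : ℂ} (hz : z ∈ D) (hgz : greenFn D p z < -1) :
    dist z p ≤ ‖p - w‖ + L (frontierDist D w) := by
  rw [dist_eq_norm]
  rcases eq_or_ne z p with rfl | hzp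
  · rw [sub_self, norm_zero]
    exact add_nonneg (norm_nonneg _) (hL.map_nonneg fun _ => norm_nonneg _)
  have hzp0 : 0 < ‖z - p‖ := norm_pos_iff.2 (sub_ne_zero.2 hzp)
  have hlt : Real.log ‖z - p‖ - L (logKernel (frontier D) z) < -1 :=
    EReal.coe_lt_coe_iff.1 ((hL.log_sub_le_greenFn hD hbd hp hzp).trans_lt hgz)
  have hone : 1 < (‖p - w‖ + L (frontierDist D w)) / ‖z - p‖ := by
    linarith [hL.logKernel_le hD w hz hzp]
  exact ((one_lt_div hzp0).1 hone).le

theorem green_sublevel_diam_tendsto_zero_general (D : Set ℂ) (hopen : IsOpen D)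
    (hbd : Bornology.IsBounded D) (w : ℂ) (hreg : RegularBoundaryPt D w) :
    Tendsto (fun p => Metric.diam {z | z ∈ D ∧ greenFn D p z < (-1 : EReal)})
      (𝓝[D] w) (𝓝 (0 : ℝ)) := by
  refine Metric.tendsto_nhds.2 fun ε hε => ?_
  have hclose : ∀ᶠ p in 𝓝[D] w, ‖p - w‖ < ε / 8 := by
    filter_upwards [nhdsWithin_le_nhds (ball_mem_nhds w (show 0 < ε / 8 by positivity))] with p hp
    exact mem_ball_iff_norm.1 hp
  filter_upwards [hclose, self_mem_nhdsWithin,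
    hreg.eventually_frontierDist_le hopen hbd (show 0 < ε / 8 by positivity)] with p hpw hp hpL
  obtain ⟨L, hL⟩ := exists_isHarmonicFunctional hopen hbd hp
  have hsub : {z | z ∈ D ∧ greenFn D p z < (-1 : EReal)} ⊆ closedBall p (ε / 4) := fun z hz =>
    (hL.dist_le_of_greenFn_lt_neg_one hopen hbd hp w hz.1 hz.2).trans (by linarith [hpL L hL])
  rw [Real.dist_0_eq_abs, abs_of_nonneg diam_nonneg]
  have := (diam_mono hsub isBounded_closedBall).trans (diam_closedBall (by positivity))
  linarith

/-- If `D ⊆ ℂ` is a bounded domain and `w ∈ ∂D` is a regular boundary point, then the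
diameter of the sublevel set `D(p) = {z ∈ D : g_D(p,z) < -1}` of the Green function tends
to `0` as `D ∋ p → w`. -/
theorem green_sublevel_diam_tendsto_zero (D : Set ℂ)
    (hopen : IsOpen D) (hconn : IsConnected D) (hbd : Bornology.IsBounded D)
    (w : ℂ) (hw : w ∈ frontier D) (hreg : RegularBoundaryPt D w) :
    Tendsto (fun p => Metric.diam {z | z ∈ D ∧ greenFn D p z < (-1 : EReal)})
      (𝓝[D] w) (𝓝 (0 : ℝ)) :=
  green_sublevel_diam_tendsto_zero_general D hopen hbd w hreg
end
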